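/- The Goodstein process terminates: for every natural number ℓ there exists k such that G_k(ℓ) = 0. -/

import Mathlib

set_option maxHeartbeats 1000000

attribute [local instance] Classical.propDecidable

/-- Raw terms of the system `T`: `0`, `1`, `ψᵢ a` and (right-nested) sums `a + b`. -/
inductive Tm : Type where
  | zero : Tm
  | one  : Tm
  | psi  : ℕ → Tm → Tm
  | add  : Tm → Tm → Tm
deriving DecidableEq

instance : Nonempty Tm := ⟨Tm.zero⟩

/-- Head (first summand) of a term. -/
def Tm.hd : Tm → Tm
  | .add a _ => a
  | t => t

/-- Tail (remaining summands) of a term. -/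
def Tm.tl : Tm → Tm
  | .add _ b => b
  | _ => .zero

/-- Whether a term is a genuine sum. -/
def Tm.isAdd : Tm → Prop
  | .add _ _ => True
  | _ => False

/-- The comparison relation `<` on terms of `T`. -/
inductive TLt : Tm → Tm → Prop where
  | zero_lt {a : Tm} : a ≠ Tm.zero → TLt Tm.zero a
  | one_lt_psi0 {a : Tm} : TLt Tm.one (Tm.psi 0 a)
  | psi_mono {i : ℕ} {a b : Tm} : TLt a b → TLt (Tm.psi i a) (Tm.psi i b)
  | psi_lt {i j : ℕ} {a b : Tm} : i < j → TLt (Tm.psi i a) (Tm.psi j b)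
  | lex_hd {a b : Tm} : (Tm.isAdd a ∨ Tm.isAdd b) → TLt (Tm.hd a) (Tm.hd b) → TLt a b
  | lex_tl {a b : Tm} : (Tm.isAdd a ∨ Tm.isAdd b) → Tm.hd a = Tm.hd b →
      TLt (Tm.tl a) (Tm.tl b) → TLt a b

/-- `≤` on terms. -/
def TLe (a b : Tm) : Prop := TLt a b ∨ a = b

/-- Addition of terms: summands of the left argument smaller than the head of the
right argument are discarded. -/
noncomputable def Tm.addT : Tm → Tm → Tm
  | .zero, b => b
  | a, .zero => a
  | .add p r, b => if TLt p (Tm.hd b) then b else Tm.add p (Tm.addT r b)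
  | a, b => if TLt a (Tm.hd b) then b else Tm.add a b

/-- The term representing a natural number. -/
def natToTm : ℕ → Tm
  | 0 => .zero
  | 1 => .one
  | n + 2 => Tm.add Tm.one (natToTm (n + 1))

/-- The natural number represented by a (numeral) term. -/
def tmToNat : Tm → ℕ
  | .zero => 0
  | .one => 1
  | .psi _ _ => 0
  | .add a b => tmToNat a + tmToNat b

/-- Multiplication of a (principal) term by a natural number. -/
noncomputable def mulNat (a : Tm) : ℕ → Tm
  | 0 => .zero
  | n + 1 => Tm.addT (mulNat a n) a

/-- Principal terms: `1` and the `ψᵢ`-terms. -/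
def Tm.IsPrincipal : Tm → Prop
  | .one => True
  | .psi _ _ => True
  | _ => False

/-- The well-formed terms of the system `T`. -/
inductive InT : Tm → Prop where
  | zero : InT .zero
  | one : InT .one
  | psi {i : ℕ} {a : Tm} : i < 3 → InT a → InT (.psi i a)
  | add {a b : Tm} : Tm.IsPrincipal a → InT a → InT b → b ≠ .zero →
      TLe (Tm.hd b) a → InT (.add a b)

/-- `ω := ψ₀0`. -/
def omegaT : Tm := .psi 0 .zero
/-- `Ω := ψ₁0`. -/
def OmegaT : Tm := .psi 1 .zero
/-- `Ω₂ := ψ₂0`. -/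
def Omega2T : Tm := .psi 2 .zero

/-- The type `tp(α)` of a term. -/
def tp : Tm → Tm
  | .zero => .zero
  | .one => .one
  | .add _ b => tp b
  | .psi i a =>
    if tp a = Tm.zero then Tm.psi i Tm.zero
    else if tp a = Tm.one then omegaT
    else if (i = 0 ∧ tp a = OmegaT) ∨ (i = 1 ∧ tp a = Omega2T) then omegaT
    else tp a

/-- The fundamental sequence `α[x]` of a term `α` at index `x`. -/
noncomputable def fund : Tm → Tm → Tm
  | .zero, _ => .zero
  | .one, _ => .zero
  | .add a b, x => Tm.addT a (fund b x)
  | .psi i a, x =>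
    if tp a = Tm.zero then x
    else if tp a = Tm.one then mulNat (Tm.psi i (fund a Tm.zero)) (tmToNat x)
    else if i = 0 ∧ tp a = OmegaT then
      Tm.psi 0 (fund a (Nat.rec (motive := fun _ => Tm) Tm.zero
        (fun _ ih => Tm.psi 0 (fund a ih)) (tmToNat x)))
    else if i = 1 ∧ tp a = Omega2T then
      Tm.psi 1 (fund a (Nat.rec (motive := fun _ => Tm) Tm.zero
        (fun _ ih => Tm.psi 1 (fund a ih)) (tmToNat x)))
    else Tm.psi i (fund a x)
termination_by t _ => sizeOf t
decreasing_by all_goals simp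

/-- The finite set `G₁(α)`. -/
def G1 : Tm → Finset Tm
  | .zero => ∅
  | .one => ∅
  | .psi 0 _ => ∅
  | .psi 1 b => insert b (G1 b)
  | .psi 2 b => G1 b
  | .psi (_ + 3) _ => ∅
  | .add a b => G1 a ∪ G1 b

/-- The finite set `G₀(α)`. -/
def G0 : Tm → Finset Tm
  | .zero => ∅
  | .one => ∅
  | .psi 0 b => insert b (G0 b)
  | .psi 1 b => G0 b
  | .psi 2 b => G0 b
  | .psi (_ + 3) _ => ∅
  | .add a b => G0 a ∪ G0 b

/-- The well-founded subsystem `OT ⊆ T`. -/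
inductive InOT : Tm → Prop where
  | zero : InOT .zero
  | one : InOT .one
  | psi2 {b : Tm} : InOT b → InOT (.psi 2 b)
  | add {a b : Tm} : InT (.add a b) → InOT a → InOT b → InOT (.add a b)
  | psi1 {b : Tm} : InOT b → (∀ γ ∈ G1 b, TLt γ b) → InOT (.psi 1 b)
  | psi0 {b : Tm} : InOT b → (∀ γ ∈ G0 b, TLt γ b) → TLt b Omega2T → InOT (.psi 0 b)

/-- The norm `N(α)`. -/
def normN : Tm → ℕ
  | .zero => 0
  | .one => 1
  | .psi _ b => 1 + normN b
  | .add a b => normN a + normN b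

/-- `OT₀ := {α ∈ OT : α < ψ₁Ω₂ and G₀α < ψ₁Ω₂}`. -/
def InOT0 (a : Tm) : Prop :=
  InOT a ∧ TLt a (Tm.psi 1 Omega2T) ∧ ∀ γ ∈ G0 a, TLt γ (Tm.psi 1 Omega2T)

/-- Single-step descent: `b = a[x]` for some term `x ≤ n`. -/
def stepLe (n : ℕ) (b a : Tm) : Prop := ∃ x : Tm, TLe x (natToTm n) ∧ b = fund a x

/-- `a <ₙ b` : transitive closure of single-step descent. -/
def ltN (n : ℕ) (a b : Tm) : Prop := Relation.TransGen (stepLe n) a b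

/-- `a ≤ₙ b` : reflexive transitive closure of single-step descent. -/
def leN (n : ℕ) (a b : Tm) : Prop := Relation.ReflTransGen (stepLe n) a b

mutual
/-- Graph of the Hardy hierarchy: `HRel α k n` means `H_α(k) = n`. -/
inductive HRel : Tm → ℕ → ℕ → Prop where
  | zero {k : ℕ} : HRel Tm.zero k k
  | succ {α : Tm} {k n : ℕ} : tp α = Tm.one → HRel (fund α Tm.zero) k n →
      HRel α k (n * k)
  | lim {α β : Tm} {k n : ℕ} : tp α = omegaT → HIter α k k β → HRel β k n →
      HRel α k n

/-- Graph of the iteration `α{b}`: `HIter α k b β` means `α{b} = β`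
(where `α{0} = α[0]` and `α{b+1} = α[H_(α{b})(k)]`). -/
inductive HIter : Tm → ℕ → ℕ → Tm → Prop where
  | zero {α : Tm} {k : ℕ} : HIter α k 0 (fund α Tm.zero)
  | succ {α β : Tm} {k b n : ℕ} : HIter α k b β → HRel β k n →
      HIter α k (b + 1) (fund α (natToTm n))
end

/-- The Hardy function `H_α(k)`. -/
noncomputable def H (α : Tm) (k : ℕ) : ℕ := sInf {n | HRel α k n}

/-- The (unique, when it exists) ordinal term of the `k`-normal form of `m`:
the maximal `α ∈ OT₀ ∩ Ω` with `H_α(k) ≤ m`. -/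
noncomputable def nfAlpha (k m : ℕ) : Tm :=
  Classical.epsilon fun α =>
    InOT0 α ∧ TLt α OmegaT ∧ H α k ≤ m ∧
      ∀ β : Tm, InOT0 β → TLt β OmegaT → TLt α β → m < H β k

theorem tmToNat_le_normN (t : Tm) : tmToNat t ≤ normN t := by
  induction t with
  | zero => simp [tmToNat, normN]
  | one => simp [tmToNat, normN]
  | psi i a ih => simp [tmToNat, normN]
  | add a b iha ihb => simp only [tmToNat, normN]; omega

mutual
/-- Base change `α[k ← k+1]` on terms. -/
noncomputable def bcT (k : ℕ) : Tm → Tm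
  | .zero => .zero
  | .one => .one
  | .psi i a => .psi i (bcT k a)
  | .add a b =>
      if a = Tm.one then natToTm (bcN k (tmToNat (Tm.add a b)))
      else if h : 0 < normN a ∧ 0 < normN b then Tm.add (bcT k a) (bcT k b)
      else Tm.zero
termination_by a => 2 * normN a + 1
decreasing_by
  all_goals simp only [normN]
  · omega
  · have := tmToNat_le_normN (Tm.add a b); simp only [normN] at this ⊢; omega
  · omega
  · omega

/-- Base change `m[k ← k+1]` on natural numbers. -/
noncomputable def bcN (k m : ℕ) : ℕ :=
  if h1 : m < k then m
  else if h2 : m = k then k + 1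
  else if hg : normN (nfAlpha k m) < m ∧ 0 < H (nfAlpha k m) k ∧ H (nfAlpha k m) k ≤ m then
    H (bcT k (nfAlpha k m)) (k + 1) * (m / H (nfAlpha k m) k) + bcN k (m % H (nfAlpha k m) k)
  else 0
termination_by 2 * m
decreasing_by
  · omega
  · have := Nat.mod_lt m (y := H (nfAlpha k m) k) hg.2.1; omega
end

mutual
/-- The ordinal assignment `o_k` on terms of `OT₀`. -/
noncomputable def oT (k : ℕ) : Tm → Tm
  | .zero => .zero
  | .one => .one
  | .psi 0 b => .psi 1 (oT k b)
  | .psi 1 b => .psi 2 (oT k b)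
  | .psi (_ + 2) _ => .zero
  | .add a b =>
      if a = Tm.one then oN k (tmToNat (Tm.add a b))
      else if h : 0 < normN a ∧ 0 < normN b then Tm.addT (oT k a) (oT k b)
      else Tm.zero
termination_by a => 2 * normN a + 1
decreasing_by
  all_goals simp only [normN]
  · omega
  · omega
  · have := tmToNat_le_normN (Tm.add a b); simp only [normN] at this ⊢; omega
  · omega
  · omega

/-- The ordinal assignment `o_k` on natural numbers. -/
noncomputable def oN (k m : ℕ) : Tm :=
  if h1 : m < k then natToTm m
  else if h2 : m = k then omegaT
  else if hg : normN (nfAlpha k m) < m ∧ 0 < H (nfAlpha k m) k ∧ H (nfAlpha k m) k ≤ m then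
    Tm.addT (Tm.psi 0 (oT k (nfAlpha k m))) (oN k (m - H (nfAlpha k m) k))
  else Tm.zero
termination_by 2 * m
decreasing_by
  · omega
  · omega
end

/-- Ordinal contexts: a term with a single hole, either replacing a summand
(`ξ + ⟦·⟧ + η`) or nested under collapsing functions (`ξ + ψᵢ(μ⟦·⟧) + η`). -/
inductive Ctx : Type where
  | base : Tm → Tm → Ctx
  | psiC : Tm → ℕ → Ctx → Tm → Ctx

/-- Filling the hole of a context with a term. -/
noncomputable def Ctx.fill : Ctx → Tm → Tm
  | .base ξ η, γ => Tm.addT (Tm.addT ξ γ) η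
  | .psiC ξ i μ η, γ => Tm.addT (Tm.addT ξ (Tm.psi i (Ctx.fill μ γ))) η

/-- The truncated context `λ⁻⟦·⟧`: all summands following the hole are removed,
at every level. -/
def Ctx.trunc : Ctx → Ctx
  | .base ξ _ => .base ξ Tm.zero
  | .psiC ξ i μ _ => .psiC ξ i (Ctx.trunc μ) Tm.zero

/-- A context is valid if only `ψ₀` and `ψ₁` occur on the path to the hole. -/
def Ctx.Valid : Ctx → Prop
  | .base _ _ => True
  | .psiC _ i μ _ => i ≤ 1 ∧ Ctx.Valid μ

/-- A context is `ψ₀`-nesting free if its hole is not in the scope of a `ψ₀`. -/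
def Ctx.NestFree : Ctx → Prop
  | .base _ _ => True
  | .psiC _ i μ _ => i = 1 ∧ Ctx.NestFree μ

/-- The Goodstein process: `G_0(ℓ) = ℓ` and
`G_(k+1)(ℓ) = G_k(ℓ)[k+2 ← k+3] − 1` as long as `G_k(ℓ) > 0`. -/
noncomputable def Gseq (l : ℕ) : ℕ → ℕ
  | 0 => l
  | k + 1 => if 0 < Gseq l k then bcN (k + 2) (Gseq l k) - 1 else 0

namespace GT

inductive Q : Type where
  | nil : Q
  | cons : ℕ → Q → Q → Q
deriving DecidableEq

open Q

def qlt : Q → Q → Prop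
  | _, nil => False
  | nil, cons _ _ _ => True
  | cons i a r, cons j b s => i < j ∨ (i = j ∧ (qlt a b ∨ (a = b ∧ qlt r s)))

theorem qlt_irrefl : ∀ a, ¬ qlt a a
  | nil => by simp [qlt]
  | cons i a r => by
      have := qlt_irrefl a; have := qlt_irrefl r
      simp [qlt, *]

theorem qlt_trans : ∀ a b c, qlt a b → qlt b c → qlt a c
  | _, _, nil => by simp [qlt]
  | nil, _, cons k c u => by simp [qlt]
  | cons i a r, nil, cons k c u => by simp [qlt]
  | cons i a r, cons j b s, cons k c u => by
      have h1 := qlt_trans a b c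
      have h2 := qlt_trans r s u
      simp only [qlt]
      rintro (h | ⟨rfl, h | ⟨rfl, h⟩⟩) (g | ⟨rfl, g | ⟨rfl, g⟩⟩)
      · left; omega
      · left; omega
      · left; omega
      · left; omega
      · right; exact ⟨rfl, Or.inl (h1 h g)⟩
      · right; exact ⟨rfl, Or.inl h⟩
      · left; omega
      · right; exact ⟨rfl, Or.inl g⟩
      · right; exact ⟨rfl, Or.inr ⟨rfl, h2 h g⟩⟩

theorem qlt_tri : ∀ a b, qlt a b ∨ a = b ∨ qlt b a
  | nil, nil => by simp
  | nil, cons _ _ _ => by simp [qlt]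
  | cons _ _ _, nil => by simp [qlt]
  | cons i a r, cons j b s => by
      simp only [qlt]
      rcases lt_trichotomy i j with h | h | h
      · simp [h]
      · subst h
        rcases qlt_tri a b with h | h | h
        · simp [h]
        · subst h
          rcases qlt_tri r s with h | h | h
          · simp [h]
          · simp [h]
          · simp [h]
        · simp [h]
      · simp [h]

noncomputable instance : LinearOrder Q where
  lt := qlt
  le a b := qlt a b ∨ a = b
  le_refl a := Or.inr rfl
  le_trans a b c := by
    rintro (h | rfl) (g | rfl)
    · exact Or.inl (qlt_trans _ _ _ h g)
    · exact Or.inl h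
    · exact Or.inl g
    · exact Or.inr rfl
  lt_iff_le_not_ge a b := by
    constructor
    · intro h
      refine ⟨Or.inl h, ?_⟩
      rintro (g | rfl)
      · exact qlt_irrefl _ (qlt_trans _ _ _ h g)
      · exact qlt_irrefl _ h
    · rintro ⟨h | rfl, g⟩
      · exact h
      · exact absurd (Or.inr rfl) g
  le_antisymm a b := by
    rintro (h | rfl) (g | g)
    · exact absurd (qlt_trans _ _ _ h g) (qlt_irrefl _)
    · exact g.symm
    · rfl
    · rfl
  le_total a b := by
    rcases qlt_tri a b with h | h | h
    · exact Or.inl (Or.inl h)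
    · exact Or.inl (Or.inr h)
    · exact Or.inr (Or.inl h)
  toDecidableLE := fun _ _ => Classical.propDecidable _

theorem lt_def (a b : Q) : a < b ↔ qlt a b := Iff.rfl
@[simp] theorem not_lt_nil (a : Q) : ¬ a < nil := by cases a <;> simp [lt_def, qlt]
@[simp] theorem nil_lt_cons (i a r) : nil < cons i a r := by simp [lt_def, qlt]
@[simp] theorem nil_le (a : Q) : nil ≤ a := not_lt.1 (not_lt_nil a)
theorem cons_lt_cons {i j : ℕ} {a r b s : Q} :
    cons i a r < cons j b s ↔ i < j ∨ (i = j ∧ (a < b ∨ (a = b ∧ r < s))) := by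
  simp [lt_def, qlt]
theorem cons_le_cons {i j : ℕ} {a r b s : Q} :
    cons i a r ≤ cons j b s ↔ i < j ∨ (i = j ∧ (a < b ∨ (a = b ∧ r ≤ s))) := by
  rw [le_iff_lt_or_eq, cons_lt_cons, le_iff_lt_or_eq]
  simp only [cons.injEq]; tauto
@[simp] theorem cons_lt_same {i : ℕ} {a r s : Q} : cons i a r < cons i a s ↔ r < s := by
  simp [cons_lt_cons]
@[simp] theorem cons_le_same {i : ℕ} {a r s : Q} : cons i a r ≤ cons i a s ↔ r ≤ s := by
  simp [cons_le_cons]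
@[simp] theorem single_lt {i : ℕ} {a b : Q} : cons i a nil < cons i b nil ↔ a < b := by
  simp [cons_lt_cons]
@[simp] theorem single_le {i : ℕ} {a b : Q} : cons i a nil ≤ cons i b nil ↔ a ≤ b := by
  simp [cons_le_cons, le_iff_lt_or_eq]
theorem nil_lt_iff {a : Q} : nil < a ↔ a ≠ nil := by cases a <;> simp

def len : Q → ℕ
  | nil => 0
  | cons _ _ r => len r + 1
def app : Q → Q → Q
  | nil, s => s
  | cons i a r, s => cons i a (app r s)
def rep (i : ℕ) (a : Q) : ℕ → Q
  | 0 => nil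
  | n + 1 => cons i a (rep i a n)
abbrev zeros (n : ℕ) : Q := rep 0 nil n
def hidx : Q → ℕ
  | nil => 0
  | cons i _ _ => i
def sz : Q → ℕ
  | nil => 0
  | cons _ a r => sz a + sz r + 1

/-- head of `r` is at most `(i,a)` -/
def hdle : Q → ℕ → Q → Prop
  | nil, _, _ => True
  | cons j b _, i, a => j < i ∨ (j = i ∧ b ≤ a)

/-- coefficients at level `i` below `c` -/
def GB (i : ℕ) : Q → Q → Prop
  | nil, _ => True
  | cons j a r, c => (i ≤ j → (j = i → a < c) ∧ GB i a c) ∧ GB i r c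

def OT (L : ℕ) : Q → Prop
  | nil => True
  | cons i a r => i ≤ L ∧ (i = 0 → a = nil) ∧ OT L a ∧ OT L r ∧ hdle r i a ∧
      (1 ≤ i ∧ i < L → GB i a a)

theorem OT.arg {L i a r} (h : OT L (cons i a r)) : OT L a := h.2.2.1
theorem OT.tail {L i a r} (h : OT L (cons i a r)) : OT L r := h.2.2.2.1
theorem OT.hdl {L i a r} (h : OT L (cons i a r)) : hdle r i a := h.2.2.2.2.1
theorem OT.gb {L i a r} (h : OT L (cons i a r)) : 1 ≤ i ∧ i < L → GB i a a := h.2.2.2.2.2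
theorem OT.idx {L i a r} (h : OT L (cons i a r)) : i ≤ L := h.1
theorem OT.zarg {L a r} (h : OT L (cons 0 a r)) : a = nil := h.2.1 rfl
theorem OT.single {L i a r} (h : OT L (cons i a r)) : OT L (cons i a nil) :=
  ⟨h.1, h.2.1, h.2.2.1, trivial, trivial, h.2.2.2.2.2⟩

theorem GB.mono {i : ℕ} : ∀ {q c d : Q}, GB i q c → c ≤ d → GB i q d
  | nil, _, _, _, _ => trivial
  | cons _ _ _, _, _, h, hc =>
    ⟨fun hi => ⟨fun e => lt_of_lt_of_le ((h.1 hi).1 e) hc, ((h.1 hi).2).mono hc⟩, h.2.mono hc⟩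

theorem hdle_of_lt {r : Q} {i : ℕ} {a : Q} (h : r < cons i a nil) : hdle r i a := by
  cases r with
  | nil => trivial
  | cons j b s => simp only [cons_lt_cons] at h; simp only [hdle]; simp at h; rcases h with h | ⟨h, h1⟩
                  · exact Or.inl h
                  · exact Or.inr ⟨h, h1.le⟩

/-! well-foundedness -/

def KW (P : Q → Prop) (j : ℕ) : Q → Prop
  | nil => True
  | cons i a r => if i ≤ j then P (cons i a r) else KW P j a ∧ KW P j r

def CC (L : ℕ) (l : ℕ) (Ws : ℕ → Q → Prop) (q : Q) : Prop :=
  OT L q ∧ hidx q ≤ l ∧ ∀ j < l, KW (Ws j) j q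

def Wl (L : ℕ) : ℕ → Q → Prop := fun l => Nat.strongRec (motive := fun _ => Q → Prop)
  (fun l W q => (OT L q ∧ hidx q ≤ l ∧ ∀ j (h : j < l), KW (W j h) j q) ∧
    Acc (fun s t => (OT L s ∧ hidx s ≤ l ∧ ∀ j (h : j < l), KW (W j h) j s) ∧ s < t) q) l

theorem Wl_def (L l : ℕ) (q : Q) : Wl L l q ↔ CC L l (Wl L) q ∧
    Acc (fun s t => CC L l (Wl L) s ∧ s < t) q := by
  unfold Wl
  rw [Nat.strongRec_eq]
  rfl

theorem Wl.cc {L l q} (h : Wl L l q) : CC L l (Wl L) q := ((Wl_def _ _ _).1 h).1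

theorem Wl.down {L l q s} (h : Wl L l q) (hs : CC L l (Wl L) s) (hlt : s < q) : Wl L l s := by
  rw [Wl_def] at h ⊢
  exact ⟨hs, h.2.inv ⟨hs, hlt⟩⟩

theorem Wl.intro {L l q} (h : CC L l (Wl L) q)
    (h2 : ∀ s, CC L l (Wl L) s → s < q → Wl L l s) : Wl L l q := by
  rw [Wl_def]
  exact ⟨h, Acc.intro _ fun s hs => ((Wl_def _ _ _).1 (h2 s hs.1 hs.2)).2⟩

theorem Wl.ind {L l} {P : Q → Prop}
    (h : ∀ q, Wl L l q → (∀ s, Wl L l s → s < q → P s) → P q) : ∀ q, Wl L l q → P q := by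
  intro q hq
  have := ((Wl_def _ _ _).1 hq).2
  induction this with
  | intro q _ ih =>
    exact h q hq (fun s hs hlt => ih s ⟨hs.cc, hlt⟩ hs)

theorem Wl.le {L l q s} (h : Wl L l q) (hs : CC L l (Wl L) s) (hlt : s ≤ q) : Wl L l s := by
  rcases hlt.lt_or_eq with g | rfl
  · exact h.down hs g
  · exact h

theorem Wl_nil (L l : ℕ) : Wl L l nil :=
  Wl.intro ⟨trivial, Nat.zero_le _, fun _ _ => trivial⟩ (fun s _ hs => absurd hs (not_lt_nil s))

theorem cons_nil_le {i a r} : cons i a nil ≤ cons i a r := by simp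

theorem hdle_cons_lt {L : ℕ} : ∀ {r : Q} {i : ℕ} {a : Q}, OT L (cons i a r) → r < cons i a r
  | nil, _, _, _ => by simp
  | cons j b s, i, a, h => by
    have h1 := hdle_cons_lt h.tail
    have h2 := h.hdl
    simp only [hdle] at h2
    rw [cons_lt_cons]
    rcases h2 with h3 | ⟨rfl, h3⟩
    · exact Or.inl h3
    · right
      refine ⟨rfl, ?_⟩
      rcases h3.lt_or_eq with h4 | rfl
      · exact Or.inl h4
      · exact Or.inr ⟨rfl, h1⟩

theorem hidx_mono {s t : Q} (h : s ≤ t) : hidx s ≤ hidx t := by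
  cases s with
  | nil => simp [hidx]
  | cons i a r =>
    cases t with
    | nil => exact absurd h (by simp)
    | cons j b u => rw [cons_le_cons] at h; simp only [hidx]; omega

theorem KW_of_W {L j : ℕ} : ∀ {q : Q}, Wl L j q → KW (Wl L j) j q
  | nil, _ => trivial
  | cons i a r, h => by
    have : i ≤ j := h.cc.2.1
    simp only [KW, this, if_true]; exact h

theorem W_of_KW {L j : ℕ} : ∀ {q : Q}, KW (Wl L j) j q → hidx q ≤ j → Wl L j q
  | nil, _, _ => Wl_nil _ _
  | cons i a r, h, hi => by
    have : i ≤ j := hi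
    simp only [KW, this, if_true] at h; exact h

theorem hidx_tail {L i a r} (h : OT L (cons i a r)) : hidx r ≤ i := by
  have := hidx_mono (hdle_cons_lt h).le
  simpa [hidx] using this

theorem KW_sub {L : ℕ} {i a r} (ho : OT L (cons i a r)) : ∀ l,
    (∀ j < l, KW (Wl L j) j (cons i a r)) →
    (∀ j < l, KW (Wl L j) j (cons i a nil)) ∧ (∀ j < l, KW (Wl L j) j r)
  | 0, _ => by simp
  | l + 1, h => by
    have ih := KW_sub ho l (fun j hj => h j (by omega))
    have hl := h l (by omega)
    have key : KW (Wl L l) l (cons i a nil) ∧ KW (Wl L l) l r := by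
      simp only [KW] at hl ⊢
      split_ifs at hl ⊢ with hi
      · have hr := hidx_tail ho
        refine ⟨hl.le ⟨ho.single, hi, ih.1⟩ cons_nil_le, KW_of_W ?_⟩
        exact hl.le ⟨ho.tail, by omega, ih.2⟩ (hdle_cons_lt ho).le
      · exact ⟨⟨hl.1, trivial⟩, hl.2⟩
    constructor
    · intro j hj
      rcases Nat.lt_succ_iff_lt_or_eq.1 hj with h1 | rfl
      · exact ih.1 j h1
      · exact key.1
    · intro j hj
      rcases Nat.lt_succ_iff_lt_or_eq.1 hj with h1 | rfl
      · exact ih.2 j h1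
      · exact key.2

theorem CC.sub {L l : ℕ} {i a r} (h : CC L l (Wl L) (cons i a r)) :
    CC L l (Wl L) (cons i a nil) ∧ CC L l (Wl L) r := by
  have h1 := KW_sub h.1 l h.2.2
  have h2 := hidx_tail h.1
  have h3 : i ≤ l := h.2.1
  exact ⟨⟨h.1.single, h3, h1.1⟩, ⟨h.1.tail, by omega, h1.2⟩⟩

theorem W_cons {L : ℕ} : ∀ l {i a r}, Wl L l (cons i a nil) → Wl L l r → OT L (cons i a r) →
    Wl L l (cons i a r) := by
  intro l
  induction l using Nat.strong_induction_on with
  | _ l IHl =>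
  intro i a r h1
  generalize hp : cons i a nil = p at h1
  revert i a r hp
  refine Wl.ind (P := fun p => ∀ {i a r}, cons i a nil = p → Wl L l r → OT L (cons i a r) →
    Wl L l (cons i a r)) ?_ p h1
  intro p hpW ihp i a r hp hr ho
  subst hp
  -- side: all smaller lists
  have side : ∀ s, CC L l (Wl L) s → s < cons i a nil → Wl L l s := by
    intro s
    induction s with
    | nil => intro _ _; exact Wl_nil _ _
    | cons i' a' r' _ ihr =>
      intro hc hlt
      have hs := hc.sub
      have hr' := ihr hs.2 (lt_trans (hdle_cons_lt hc.1) hlt)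
      have hle : cons i' a' nil < cons i a nil := lt_of_le_of_lt cons_nil_le hlt
      exact ihp _ (hpW.down hs.1 hle) hle rfl hr' hc.1
  revert ho
  refine Wl.ind (P := fun r => OT L (cons i a r) → Wl L l (cons i a r)) ?_ r hr
  intro r hr ihr ho
  apply Wl.intro
  · refine ⟨ho, hpW.cc.2.1, ?_⟩
    intro j hj
    have k1 := hpW.cc.2.2 j hj
    have k2 := hr.cc.2.2 j hj
    simp only [KW] at k1 ⊢
    have := hidx_tail ho
    split_ifs at k1 ⊢ with hi
    · exact IHl j hj k1 (W_of_KW k2 (by omega)) ho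
    · exact ⟨k1.1, k2⟩
  · intro s hc hlt
    cases s with
    | nil => exact Wl_nil _ _
    | cons i' a' r' =>
      rcases cons_lt_cons.1 hlt with h2 | ⟨rfl, h2 | ⟨rfl, h2⟩⟩
      · exact side _ hc (cons_lt_cons.2 (Or.inl h2))
      · exact side _ hc (cons_lt_cons.2 (Or.inr ⟨rfl, Or.inl h2⟩))
      · exact ihr r' (hr.down hc.sub.2 h2) h2 hc.1

theorem W_lift1 {L l : ℕ} : ∀ b, Wl L l b → Wl L (l + 1) b := by
  refine Wl.ind ?_
  intro b hb ih
  apply Wl.intro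
  · refine ⟨hb.cc.1, hb.cc.2.1.trans (by omega), fun j hj => ?_⟩
    rcases Nat.lt_succ_iff_lt_or_eq.1 hj with h1 | rfl
    · exact hb.cc.2.2 j h1
    · exact KW_of_W hb
  · intro s hs hlt
    have : hidx s ≤ l := (hidx_mono hlt.le).trans hb.cc.2.1
    exact ih s (W_of_KW (hs.2.2 l (by omega)) this) hlt

theorem W_lift {L l m : ℕ} (h : l ≤ m) {b} (hb : Wl L l b) : Wl L m b := by
  induction m, h using Nat.le_induction with
  | base => exact hb
  | succ m _ ih => exact W_lift1 _ ih

theorem hidx_le {L} {b : Q} (h : OT L b) : hidx b ≤ L := by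
  cases b with
  | nil => simp [hidx]
  | cons i a r => exact h.1

theorem W5 {L l : ℕ} (hl : l ≤ L)
    (h3 : ∀ i, l < i → i ≤ L → ∀ a, Wl L L a → OT L (cons i a nil) → Wl L i (cons i a nil)) :
    ∀ b, OT L b → (∀ j ≤ l, KW (Wl L j) j b) → Wl L L b := by
  intro b
  induction b with
  | nil => intro _ _; exact Wl_nil _ _
  | cons i e t ihe iht =>
    intro ho h
    by_cases hi : i ≤ l
    · exact W_lift hl (W_of_KW (h l le_rfl) hi)
    · have h1 : ∀ j ≤ l, KW (Wl L j) j e ∧ KW (Wl L j) j t := by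
        intro j hj
        have := h j hj
        simp only [KW] at this
        rwa [if_neg (by omega)] at this
      have he := ihe ho.arg (fun j hj => (h1 j hj).1)
      have ht := iht ho.tail (fun j hj => (h1 j hj).2)
      exact W_cons L (W_lift ho.1 (h3 i (by omega) ho.1 e he ho.single)) ht ho

theorem W3 {L : ℕ} : ∀ n l, l + n = L → ∀ a, Wl L L a → OT L (cons l a nil) →
    Wl L l (cons l a nil) := by
  intro n
  induction n using Nat.strong_induction_on with
  | _ n IHn =>
  intro l hl
  have h5 := W5 (L := L) (l := l) (by omega) (fun i h1 h2 => IHn (L - i) (by omega) i (by omega))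
  refine Wl.ind ?_
  intro a ha iha ho
  apply Wl.intro
  · refine ⟨ho, le_rfl, fun j hj => ?_⟩
    simp only [KW]
    rw [if_neg (by omega)]
    exact ⟨ha.cc.2.2 j (by omega), trivial⟩
  · intro s
    generalize hn : sz s = N
    induction N using Nat.strong_induction_on generalizing s with
    | _ N IHN =>
    intro hc hlt
    cases s with
    | nil => exact Wl_nil _ _
    | cons i b r =>
      have hsub := hc.sub
      simp only [sz] at hn
      have hr := IHN (sz r) (by omega) r rfl hsub.2 (lt_trans (hdle_cons_lt hc.1) hlt)
      refine W_cons l ?_ hr hc.1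
      have hil : i ≤ l := hc.2.1
      rcases hil.lt_or_eq with hi | rfl
      · have := hsub.1.2.2 i hi
        exact W_lift hi.le (W_of_KW this le_rfl)
      · have hba : b < a := by
          rcases cons_lt_cons.1 hlt with h | ⟨_, h | ⟨_, h⟩⟩
          · omega
          · exact h
          · exact absurd h (not_lt_nil _)
        have hkj : ∀ j < i, KW (Wl L j) j b := by
          intro j hj
          have := hsub.1.2.2 j hj
          simp only [KW] at this
          rw [if_neg (by omega)] at this
          exact this.1
        have hob := hc.1.arg
        have hbW : Wl L L b := by
          by_cases hn0 : n = 0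
          · have : i = L := by omega
            subst this
            exact ha.down ⟨hob, hidx_le hob, hkj⟩ hba
          · have hi1 : 1 ≤ i := by
              by_contra hh
              have h0 : i = 0 := by omega
              subst h0
              rw [ho.zarg] at hba
              exact not_lt_nil _ hba
            refine h5 b hob ?_
            have hgb := (hc.1.gb ⟨hi1, by omega⟩).mono hba.le
            have main : ∀ t, sz t < N → OT L t → (∀ j < i, KW (Wl L j) j t) → GB i t a →
                KW (Wl L i) i t := by
              intro t
              induction t with
              | nil => intro _ _ _ _; trivial
              | cons i' c u ihc ihu =>
                intro hsz hot hkt hg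
                simp only [sz] at hsz
                simp only [KW]
                split_ifs with hi'
                · refine IHN _ ?_ _ rfl ⟨hot, hi', hkt⟩ ?_
                  · simp only [sz]; omega
                  · rw [cons_lt_cons]
                    rcases hi'.lt_or_eq with h | rfl
                    · exact Or.inl h
                    · exact Or.inr ⟨rfl, Or.inl ((hg.1 le_rfl).1 rfl)⟩
                · have hk2 : ∀ j < i, KW (Wl L j) j c ∧ KW (Wl L j) j u := by
                    intro j hj
                    have := hkt j hj
                    simp only [KW] at this
                    rwa [if_neg (by omega)] at this
                  exact ⟨ihc (by omega) hot.arg (fun j hj => (hk2 j hj).1) (hg.1 (by omega)).2,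
                    ihu (by omega) hot.tail (fun j hj => (hk2 j hj).2) hg.2⟩
            intro j hj
            rcases hj.lt_or_eq with h | rfl
            · exact hkj j h
            · exact main b (by omega) hob hkj hgb
        exact iha b hbW hba hc.1.single

theorem W_all {L : ℕ} : ∀ b, OT L b → Wl L L b := by
  intro b
  induction b with
  | nil => intro _; exact Wl_nil _ _
  | cons i e t ihe iht =>
    intro ho
    have hi := ho.1
    exact W_cons L (W_lift ho.1 (W3 (L - i) i (by omega) e (ihe ho.arg) ho.single))
      (iht ho.tail) ho

theorem OT_ind {L : ℕ} {P : Q → Prop}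
    (h : ∀ q, OT L q → (∀ s, OT L s → s < q → P s) → P q) : ∀ q, OT L q → P q := by
  intro q hq
  refine Wl.ind (L := L) (l := L) ?_ q (W_all q hq)
  intro q hq ih
  exact h q hq.cc.1 (fun s hs hlt => ih s (W_all s hs) hlt)

end GT

namespace GT
open Q

inductive Ty | z | s | w | W
deriving DecidableEq

def tpq : Q → Ty
  | nil => Ty.z
  | cons i a r =>
    if r ≠ nil then tpq r
    else if i = 0 then Ty.s
    else match tpq a with
      | Ty.z => if i = 1 then Ty.w else Ty.W
      | Ty.W => if i = 1 then Ty.w else Ty.W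
      | Ty.s => Ty.w
      | Ty.w => Ty.w

def zs (g : Q → Q) : ℕ → Q
  | 0 => nil
  | n + 1 => cons 1 (g (zs g n)) nil

def fq : Q → Q → Q
  | nil => fun _ => nil
  | cons i a r => fun x =>
    if r ≠ nil then cons i a (fq r x)
    else if i = 0 then nil
    else match tpq a with
      | Ty.z => x
      | Ty.s => rep i (fq a nil) (len x)
      | Ty.w => cons i (fq a x) nil
      | Ty.W => if i = 1 then cons 1 (fq a (zs (fq a) (len x))) nil else cons i (fq a x) nil

theorem tpq_tail {i a r} (h : r ≠ nil) : tpq (cons i a r) = tpq r := by simp [tpq, h]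
theorem fq_tail {i a r} (h : r ≠ nil) (x) : fq (cons i a r) x = cons i a (fq r x) := by
  simp [fq, h]
theorem tpq_z_iff : ∀ {a : Q}, tpq a = Ty.z ↔ a = nil
  | nil => by simp [tpq]
  | cons i a r => by
    have := @tpq_z_iff r
    by_cases hr : r = nil
    · subst hr
      simp only [tpq]
      split_ifs
      all_goals simp_all
      all_goals split <;> simp_all
    · rw [tpq_tail hr]; simp [hr, this]

inductive K : Type where
  | id : K
  | tl : ℕ → Q → K → K
  | ar : ℕ → K → K

def fill : K → Q → Q
  | K.id, h => h
  | K.tl i b k, h => cons i b (fill k h)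
  | K.ar i k, h => cons (i + 1) (fill k h) nil
def comp : K → K → K
  | K.id, l => l
  | K.tl i b k, l => K.tl i b (comp k l)
  | K.ar i k, l => K.ar i (comp k l)
def isW : K → Prop
  | K.id => True
  | K.tl _ _ k => isW k
  | K.ar i k => 1 ≤ i ∧ isW k

theorem fill_comp (k l h) : fill (comp k l) h = fill k (fill l h) := by
  induction k <;> simp_all [fill, comp]
@[simp] theorem fill_lt {k s t} : fill k s < fill k t ↔ s < t := by
  induction k <;> simp_all [fill]
@[simp] theorem fill_le {k s t} : fill k s ≤ fill k t ↔ s ≤ t := by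
  rw [← not_lt, fill_lt, not_lt]
theorem fill_ne {k h} (hh : h ≠ nil) : fill k h ≠ nil := by
  cases k <;> simp_all [fill]

theorem fill_tp {k h} (hh : tpq h = Ty.w) : tpq (fill k h) = Ty.w := by
  have hn : h ≠ nil := by rintro rfl; simp [tpq] at hh
  induction k with
  | id => exact hh
  | tl i b k ih => simp only [fill]; rw [tpq_tail (fill_ne hn), ih]
  | ar i k ih => simp [fill, tpq, ih]

theorem fill_fq {k h} (hh : tpq h = Ty.w) (x) : fq (fill k h) x = fill k (fq h x) := by
  have hn : h ≠ nil := by rintro rfl; simp [tpq] at hh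
  induction k with
  | id => rfl
  | tl i b k ih => simp only [fill]; rw [fq_tail (fill_ne hn), ih]
  | ar i k ih => simp [fill, fq, fill_tp hh, ih]

theorem fill_tpW {k h} (hk : isW k) (hh : tpq h = Ty.W) : tpq (fill k h) = Ty.W := by
  have hn : h ≠ nil := by rintro rfl; simp [tpq] at hh
  induction k with
  | id => exact hh
  | tl i b k ih => simp only [fill]; rw [tpq_tail (fill_ne hn), ih hk]
  | ar i k ih => have := hk.1; simp [fill, tpq, ih hk.2]; omega

theorem fill_fqW {k h} (hk : isW k) (hh : tpq h = Ty.W) (x) : fq (fill k h) x = fill k (fq h x) := by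
  have hn : h ≠ nil := by rintro rfl; simp [tpq] at hh
  induction k with
  | id => rfl
  | tl i b k ih => simp only [fill]; rw [fq_tail (fill_ne hn), ih hk]
  | ar i k ih =>
    have := hk.1
    have h1 := fill_tpW hk.2 hh
    simp [fill, fq, h1, ih hk.2]; omega

/-- decomposition of type-W terms -/
theorem decW : ∀ {q : Q}, tpq q = Ty.W → ∃ k i, isW k ∧ 2 ≤ i ∧ q = fill k (cons i nil nil) ∧
    ∀ x, fq q x = fill k x
  | nil, h => by simp [tpq] at h
  | cons i a r, h => by
    by_cases hr : r = nil
    · subst hr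
      by_cases hi : i = 0
      · simp [tpq, hi] at h
      · cases ha : tpq a with
        | z =>
          have hn := tpq_z_iff.1 ha
          subst hn
          have hi1 : i ≠ 1 := by rintro rfl; simp [tpq] at h
          refine ⟨K.id, i, trivial, by omega, rfl, ?_⟩
          intro x; simp [fq, tpq, hi, fill]
        | s => simp [tpq, hi, ha] at h
        | w => simp [tpq, hi, ha] at h
        | W =>
          have hi1 : i ≠ 1 := by rintro rfl; simp [tpq, ha] at h
          obtain ⟨k, j, h1, h2, h3, h4⟩ := decW ha
          obtain ⟨i', rfl⟩ : ∃ i', i = i' + 1 := ⟨i - 1, by omega⟩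
          refine ⟨K.ar i' k, j, ⟨by omega, h1⟩, h2, by rw [h3]; rfl, ?_⟩
          intro x; simp only [fill, ← h4 x]; simp [fq, ha]; omega
    · rw [tpq_tail hr] at h
      obtain ⟨k, j, h1, h2, h3, h4⟩ := decW h
      refine ⟨K.tl i a k, j, h1, h2, by conv_lhs => rw [h3]
                                        rfl, ?_⟩
      intro x; rw [fq_tail hr, h4]; rfl

/-- successor terms -/
theorem decS : ∀ {q : Q}, tpq q = Ty.s → ∃ k a, isW k ∧ q = fill k (cons 0 a nil) ∧
    (∀ x, fq q x = fill k nil) ∧ (∀ x, fill k x = app (fill k nil) x)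
  | nil, h => by simp [tpq] at h
  | cons i a r, h => by
    by_cases hr : r = nil
    · subst hr
      by_cases hi : i = 0
      · refine ⟨K.id, a, trivial, by subst hi; rfl, ?_, ?_⟩
        · intro x; simp [fq, hi, fill]
        · intro x; simp [fill, app]
      · exfalso
        simp only [tpq] at h
        simp only [ne_eq, not_true_eq_false, if_false, hi] at h
        revert h; split <;> try split_ifs
        all_goals simp
    · rw [tpq_tail hr] at h
      obtain ⟨k, j, h1, h3, h4, h5⟩ := decS h
      refine ⟨K.tl i a k, j, h1, by conv_lhs => rw [h3]
                                    rfl, ?_, ?_⟩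
      · intro x; rw [fq_tail hr, h4]; rfl
      · intro x; simp only [fill, app]; rw [h5]

/-- base of type-w terms -/
inductive Base : Q → Prop
  | om : Base (cons 1 nil nil)
  | su (i a) : 1 ≤ i → tpq a = Ty.s → Base (cons i a nil)
  | co (a) : tpq a = Ty.W → Base (cons 1 a nil)

theorem Base.tp {t} (h : Base t) : tpq t = Ty.w := by
  cases h with
  | om => simp [tpq]
  | su i a hi ha => have : i ≠ 0 := by omega
                    simp [tpq, ha, this]
  | co a ha => simp [tpq, ha]

theorem decw : ∀ {q : Q}, tpq q = Ty.w → ∃ k t, Base t ∧ q = fill k t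
  | nil, h => by simp [tpq] at h
  | cons i a r, h => by
    by_cases hr : r = nil
    · subst hr
      by_cases hi : i = 0
      · simp [tpq, hi] at h
      · cases ha : tpq a with
        | z =>
          have hn := tpq_z_iff.1 ha
          subst hn
          have hi1 : i = 1 := by by_contra h1; simp [tpq, hi, h1] at h
          subst hi1
          exact ⟨K.id, _, Base.om, rfl⟩
        | s => exact ⟨K.id, _, Base.su i a (by omega) ha, rfl⟩
        | w =>
          obtain ⟨k, t, h1, h2⟩ := decw ha
          obtain ⟨i', rfl⟩ : ∃ i', i = i' + 1 := ⟨i - 1, by omega⟩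
          exact ⟨K.ar i' k, t, h1, by rw [h2]; rfl⟩
        | W =>
          have hi1 : i = 1 := by by_contra h1; simp [tpq, hi, ha, h1] at h
          subst hi1
          exact ⟨K.id, _, Base.co a ha, rfl⟩
    · rw [tpq_tail hr] at h
      obtain ⟨k, t, h1, h2⟩ := decw h
      exact ⟨K.tl i a k, t, h1, by conv_lhs => rw [h2]
                                   rfl⟩

theorem len_rep (i a n) : len (rep i a n) = n := by induction n <;> simp_all [rep, len]

theorem fq_om (n) : fq (cons 1 nil nil) (zeros n) = zeros n := by simp [fq, tpq]
theorem fq_su {i a} (hi : 1 ≤ i) (ha : tpq a = Ty.s) (x) :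
    fq (cons i a nil) x = rep i (fq a nil) (len x) := by
  have : i ≠ 0 := by omega
  simp [fq, ha, this]
theorem fq_co {a} (ha : tpq a = Ty.W) (x) :
    fq (cons 1 a nil) x = cons 1 (fq a (zs (fq a) (len x))) nil := by
  simp [fq, ha]

theorem rep_lt {i a b} (h : a < b) (n) : rep i a n < cons i b nil := by
  cases n with
  | zero => simp [rep]
  | succ n => simp [rep, cons_lt_cons, h]

theorem fq_lt_s {q} (h : tpq q = Ty.s) (x) : fq q x < q := by
  obtain ⟨k, a, -, h1, h2, -⟩ := decS h
  rw [h2]; conv_rhs => rw [h1]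
  simp

theorem hidx_zs (g n) : hidx (zs g n) ≤ 1 := by cases n <;> simp [zs, hidx]

theorem lt_of_hidx {s : Q} {i a r} (h : hidx s < i) : s < cons i a r := by
  cases s with
  | nil => simp
  | cons j b u => exact cons_lt_cons.2 (Or.inl h)

theorem fq_lt_W {q} (h : tpq q = Ty.W) {x} (hx : hidx x ≤ 1) : fq q x < q := by
  obtain ⟨k, i, -, hi, h1, h2⟩ := decW h
  rw [h2]; conv_rhs => rw [h1]
  rw [fill_lt]; exact lt_of_hidx (by omega)

theorem base_lt {t} (h : Base t) (n) : fq t (zeros n) < t := by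
  cases h with
  | om => rw [fq_om]; exact lt_of_hidx (by cases n <;> simp [rep, hidx])
  | su i a hi ha => rw [fq_su hi ha]; exact rep_lt (fq_lt_s ha _) _
  | co a ha => rw [fq_co ha, single_lt]; exact fq_lt_W ha (hidx_zs _ _)

theorem fq_lt_w {q} (h : tpq q = Ty.w) (n) : fq q (zeros n) < q := by
  obtain ⟨k, t, h1, rfl⟩ := decw h
  rw [fill_fq h1.tp, fill_lt]; exact base_lt h1 n

/-- squeeze lemma -/
theorem squeeze {s t : Q} : ∀ {k : K} {g : Q}, fill k s ≤ g → g < fill k t →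
    ∃ u, s ≤ u ∧ u < t ∧ sz (fill k nil) + sz u ≤ sz g
  | K.id, g, h1, h2 => ⟨g, h1, h2, by simp [fill, sz]⟩
  | K.tl i b k, nil, h1, h2 => by simp [fill] at h1; exact absurd h1 (by simp)
  | K.tl i b k, cons j c g, h1, h2 => by
    simp only [fill, cons_le_cons, cons_lt_cons] at h1 h2
    have : j = i := by omega
    subst this
    have : c = b := by
      rcases lt_trichotomy c b with h | h | h
      · rcases h1 with h1 | ⟨-, h1 | h1⟩
        · omega
        · exact absurd h1 h.asymm
        · exact absurd h1.1 h.ne'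
      · exact h
      · rcases h2 with h1 | ⟨-, h1 | h1⟩
        · omega
        · exact absurd h1 h.asymm
        · exact absurd h1.1 h.ne'
    subst this
    simp at h1 h2
    obtain ⟨u, h3, h4, h5⟩ := squeeze h1 h2
    exact ⟨u, h3, h4, by simp only [fill, sz]; omega⟩
  | K.ar i k, nil, h1, h2 => by simp [fill] at h1; exact absurd h1 (by simp)
  | K.ar i k, cons j c g, h1, h2 => by
    simp only [fill, cons_le_cons, cons_lt_cons] at h1 h2
    have : j = i + 1 := by omega
    subst this
    simp at h1 h2
    obtain ⟨u, h3, h4, h5⟩ := squeeze (k := k) (le_iff_lt_or_eq.2 h1) h2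
    exact ⟨u, h3, h4, by simp only [fill, sz]; omega⟩

theorem lemX {k : K} (hk : 1 ≤ sz (fill k nil)) {s t : Q} (h : s ≤ t) (ht : t < fill k t) :
    s < fill k s := by
  rcases h.lt_or_eq with h | rfl
  swap
  · exact ht
  by_contra hc
  have hc := not_lt.1 hc
  have : ∀ n u, sz u = n → s ≤ u → u < t → False := by
    intro n
    induction n using Nat.strong_induction_on with
    | _ n ih =>
    intro u hn h1 h2
    obtain ⟨v, h3, h4, h5⟩ := squeeze (hc.trans h1) (h2.trans ht)
    exact ih (sz v) (by omega) v rfl h3 h4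
  exact this _ s rfl le_rfl h

theorem GB_sz {i : ℕ} : ∀ {b c d : Q}, GB i b c → (∀ g, g < c → sz g < sz b → g < d) → GB i b d
  | nil, _, _, _, _ => trivial
  | cons j a r, c, d, h, hg => by
    refine ⟨fun hi => ⟨fun e => hg _ ((h.1 hi).1 e) (by simp only [sz]; omega),
      GB_sz (h.1 hi).2 fun g h1 h2 => hg g h1 (by simp only [sz]; omega)⟩,
      GB_sz h.2 fun g h1 h2 => hg g h1 (by simp only [sz]; omega)⟩

theorem sz_ar (k1 : K) (i : ℕ) : 1 ≤ sz (fill (comp k1 (K.ar i K.id)) nil) := by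
  induction k1 <;> simp_all only [fill, comp, sz] <;> omega

theorem GB_fill {s t : Q} (hst : s < t) : ∀ (k2 k1 : K),
    GB 1 (fill k2 t) (fill (comp k1 k2) t) → GB 1 s (fill (comp k1 k2) s) →
    GB 1 (fill k2 s) (fill (comp k1 k2) s) := by
  intro k2
  induction k2 with
  | id => intro k1 _ h; exact h
  | tl i b k ih =>
    intro k1 h1 h2
    have hc : ∀ x, fill (comp k1 (K.tl i b k)) x = fill (comp (comp k1 (K.tl i b K.id)) k) x := by
      intro x; simp [fill_comp, fill]
    have hb : ∀ g, g < fill (comp k1 (K.tl i b k)) t → sz g ≤ sz b →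
        g < fill (comp k1 (K.tl i b k)) s := by
      intro g g1 g2
      by_contra g3
      obtain ⟨u, -, -, h5⟩ := squeeze (not_lt.1 g3) g1
      have : ∀ k1 : K, sz (fill (comp k1 (K.tl i b k)) nil) ≥ sz b + 1 := by
        intro k1
        induction k1 <;> simp_all only [fill, comp, sz] <;> omega
      have := this k1
      omega
    refine ⟨fun hi => ⟨fun e => hb b ((h1.1 hi).1 e) le_rfl,
      GB_sz (h1.1 hi).2 fun g g1 g2 => hb g g1 g2.le⟩, ?_⟩
    rw [hc]
    apply ih
    · rw [← hc]; exact h1.2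
    · rw [← hc]; exact h2
  | ar i k ih =>
    intro k1 h1 h2
    have hc : ∀ x, fill (comp k1 (K.ar i k)) x = fill (comp (comp k1 (K.ar i K.id)) k) x := by
      intro x; simp [fill_comp, fill]
    refine ⟨fun hi => ⟨fun e => ?_, ?_⟩, trivial⟩
    · rw [hc, fill_comp]
      refine lemX (t := fill k t) (sz_ar _ _) ?_ ?_
      · simp [hst.le]
      · rw [← fill_comp, ← hc]; exact (h1.1 hi).1 e
    · rw [hc]
      apply ih
      · rw [← hc]; exact (h1.1 hi).2
      · rw [← hc]; exact h2

theorem hdle_mono {r s : Q} {i a} (h : s ≤ r) (hr : hdle r i a) : hdle s i a := by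
  cases s with
  | nil => trivial
  | cons j b u =>
    cases r with
    | nil => exact absurd h (by simp)
    | cons j' b' u' =>
      simp only [hdle] at hr ⊢
      rw [cons_le_cons] at h
      rcases hr with hr | ⟨rfl, hr⟩ <;> rcases h with h | ⟨rfl, h | ⟨rfl, h⟩⟩
      · left; omega
      · left; omega
      · left; omega
      · left; omega
      · right; exact ⟨rfl, h.le.trans hr⟩
      · right; exact ⟨rfl, hr⟩

theorem OT_fill {s t : Q} (hst : s < t) (hs : OT 2 s)
    (hG : ∀ k, GB 1 t (fill k t) → GB 1 s (fill k s)) : ∀ k, OT 2 (fill k t) → OT 2 (fill k s) := by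
  intro k
  induction k with
  | id => intro _; exact hs
  | tl i b k ih =>
    intro h
    exact ⟨h.1, h.2.1, h.arg, ih h.tail, hdle_mono (by simp [hst.le]) h.hdl, h.gb⟩
  | ar i k ih =>
    intro h
    refine ⟨h.1, by simp, ih h.arg, trivial, trivial, ?_⟩
    intro hi
    have hi1 : i = 0 := by omega
    subst hi1
    have h1 := h.gb hi
    have h3 : GB 1 t (fill k t) := by
      have : ∀ k c, GB 1 (fill k t) c → GB 1 t c := by
        intro k
        induction k with
        | id => intro c h; exact h
        | tl i b k ih => intro c h; exact ih c h.2
        | ar i k ih => intro c h; exact ih c (h.1 (by omega)).2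
      exact this k _ h1
    exact GB_fill hst k K.id h1 (hG k h3)

theorem GB_zeros (n c) : GB 1 (zeros n) c := by
  induction n with
  | zero => trivial
  | succ n ih => exact ⟨fun h => by omega, ih⟩
theorem OT_zeros (L n) : OT L (zeros n) := by
  induction n with
  | zero => trivial
  | succ n ih => refine ⟨by omega, by simp, trivial, ih, ?_, by omega⟩
                 cases n <;> simp [hdle, rep]

theorem OT_rep {L i a} (h : OT L (cons i a nil)) (n) : OT L (rep i a n) := by
  induction n with
  | zero => trivial
  | succ n ih => refine ⟨h.1, h.2.1, h.arg, ih, ?_, h.gb⟩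
                 cases n <;> simp [hdle, rep]

theorem GB_rep {i j a c} (h : GB i (cons j a nil) c) (n) : GB i (rep j a n) c := by
  induction n with
  | zero => trivial
  | succ n ih => exact ⟨h.1, ih⟩

theorem GB_app {i c} : ∀ {a b}, GB i (app a b) c ↔ GB i a c ∧ GB i b c
  | nil, b => by simp [app, GB]
  | cons j a r, b => by simp only [app, GB, GB_app (a := r)]; tauto

theorem lt_app0 : ∀ {g a : Q} {b}, g < app a (cons 0 b nil) → b = nil → g ≤ a
  | nil, a, b, h, _ => by simp
  | cons j c g, nil, b, h, hb => by
    simp only [app, cons_lt_cons, hb] at h; simp at h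
  | cons j c g, cons i a r, b, h, hb => by
    simp only [app, cons_lt_cons] at h
    rw [cons_le_cons]
    rcases h with h | ⟨h, h1 | ⟨h1, h2⟩⟩
    · exact Or.inl h
    · exact Or.inr ⟨h, Or.inl h1⟩
    · exact Or.inr ⟨h, Or.inr ⟨h1, lt_app0 h2 hb⟩⟩

theorem OT_fillnil {L} {t : Q} : ∀ {k : K}, isW k → (∀ x, fill k x = app (fill k nil) x) → OT L (fill k t) → OT L (fill k nil)
  | K.id, _, _, _ => trivial
  | K.tl i b k, hk, h, h1 => ⟨h1.1, h1.2.1, h1.arg,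
      OT_fillnil (t := t) hk (fun x => by simpa [fill, app] using h x) h1.tail,
      hdle_mono (by simp) h1.hdl, h1.gb⟩
  | K.ar i k, _, h, h1 => by have := h (cons 0 nil nil); simp [fill, app] at this

/-- closure: successor inside psi -/
theorem OT_su {i a} (h : OT 2 (cons i a nil)) (ha : tpq a = Ty.s) :
    OT 2 (cons i (fq a nil) nil) := by
  obtain ⟨k, c, hk, h1, h2, h3⟩ := decS ha
  have hoa : OT 2 (fill k (cons 0 c nil)) := by rw [← h1]; exact h.arg
  have hc : c = nil := by
    have : ∀ k : K, OT 2 (fill k (cons 0 c nil)) → c = nil := by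
      intro k
      induction k with
      | id => intro h; exact h.zarg
      | tl i b k ih => intro h; exact ih h.tail
      | ar i k ih => intro h; exact ih h.arg
    exact this k hoa
  subst hc
  rw [h2]
  have ho := OT_fillnil hk h3 hoa
  refine ⟨h.1, ?_, ho, trivial, trivial, ?_⟩
  · rintro rfl
    have := h.zarg
    rw [this] at ha; simp [tpq] at ha
  · intro hi
    have hg := h.gb hi
    have e : a = app (fill k nil) (cons 0 nil nil) := by rw [h1]; exact h3 _
    rw [e] at hg
    have hg := (GB_app.1 hg).1
    refine GB_sz hg ?_
    intro g g1 g2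
    rcases (lt_app0 g1 rfl).lt_or_eq with h5 | rfl
    · exact h5
    · omega

theorem fq_zs_lt {e} (he : tpq e = Ty.W) : ∀ n, zs (fq e) n < zs (fq e) (n + 1) := by
  obtain ⟨k, i, hk, hi, h1, h2⟩ := decW he
  intro n
  induction n with
  | zero => simp [zs]
  | succ n ih => rw [zs, zs]; rw [single_lt, h2, h2, fill_lt]; exact ih

theorem OT_zs {e} (he : tpq e = Ty.W) (h : OT 2 (cons 1 e nil)) : ∀ n,
    OT 2 (zs (fq e) n) ∧ OT 2 (cons 1 (fq e (zs (fq e) n)) nil) := by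
  obtain ⟨k, i, hk, hi, h1, h2⟩ := decW he
  have hge : GB 1 e e := h.gb (by omega)
  have step : ∀ z, hidx z ≤ 1 → OT 2 z → GB 1 z (fill k z) → OT 2 (cons 1 (fill k z) nil) := by
    intro z hz hoz hgz
    have hlt : z < cons i nil nil := lt_of_hidx (by omega)
    have hG : GB 1 (fill k z) (fill k z) := by
      have := GB_fill hlt k K.id
      rw [h1] at hge
      exact this hge hgz
    refine ⟨by omega, by simp, ?_, trivial, trivial, fun _ => hG⟩
    have hoe := h.arg
    rw [h1] at hoe
    -- OT of fill for W contexts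
    have : ∀ k, isW k → OT 2 (fill k (cons i nil nil)) → OT 2 (fill k z) := by
      intro k
      induction k with
      | id => intro _ _; exact hoz
      | tl j b k ih =>
        intro hk h
        exact ⟨h.1, h.2.1, h.arg, ih hk h.tail, hdle_mono (by simp [hlt.le]) h.hdl, h.gb⟩
      | ar j k ih =>
        intro hk h
        have := hk.1
        exact ⟨h.1, by simp, ih hk.2 h.arg, trivial, trivial, by omega⟩
    exact this k hk hoe
  intro n
  induction n with
  | zero =>
    refine ⟨trivial, ?_⟩
    rw [h2]; exact step _ (by simp [zs, hidx]) trivial trivial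
  | succ n ih =>
    refine ⟨ih.2, ?_⟩
    rw [h2]
    refine step _ (hidx_zs _ _) ih.2 ?_
    have hl := fq_zs_lt he n
    have hl2 : fq e (zs (fq e) n) < fill k (zs (fq e) (n + 1)) := by rw [h2, fill_lt]; exact hl
    have hg := ih.2.gb (by omega)
    exact ⟨fun _ => ⟨fun _ => hl2, hg.mono hl2.le⟩, trivial⟩

theorem OT_base {t} (h : Base t) (ho : OT 2 t) (n) : OT 2 (fq t (zeros n)) := by
  cases h with
  | om => rw [fq_om]; exact OT_zeros _ _
  | su i a hi ha => rw [fq_su hi ha]; exact OT_rep (OT_su ho ha) _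
  | co a ha => rw [fq_co ha]; exact (OT_zs ha ho _).2

theorem OT_sub {L t} : ∀ {k : K}, OT L (fill k t) → OT L t
  | K.id, h => h
  | K.tl _ _ _, h => OT_sub h.tail
  | K.ar _ _, h => OT_sub h.arg

theorem OT_fq_w {q} (h : tpq q = Ty.w) (ho : OT 2 q) (n) : OT 2 (fq q (zeros n)) := by
  obtain ⟨k, t, hb, rfl⟩ := decw h
  have hot := OT_sub ho
  rw [fill_fq hb.tp]
  refine OT_fill (base_lt hb n) (OT_base hb hot n) ?_ k ho
  intro l hG
  cases hb with
  | om => rw [fq_om]; exact GB_zeros _ _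
  | su i a hi ha =>
    rw [fq_su hi ha, len_rep]
    cases n with
    | zero => trivial
    | succ n =>
      refine GB_rep ?_ _
      have hle : fill l (cons i (fq a nil) nil) ≤ fill l (rep i (fq a nil) (n + 1)) := by
        simp [rep]
      refine GB.mono ?_ hle
      obtain ⟨j, rfl⟩ : ∃ j, i = j + 1 := ⟨i - 1, by omega⟩
      have hc : ∀ x, fill l (cons (j+1) x nil) = fill (comp l (K.ar j K.id)) x := by
        intro x; simp [fill_comp, fill]
      have hsz := sz_ar l j
      refine ⟨fun _ => ⟨fun e => ?_, ?_⟩, trivial⟩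
      · rw [hc]
        refine lemX hsz (fq_lt_s ha _).le ?_
        rw [← hc]; exact (hG.1 (by omega)).1 e
      · have hg2 := (hG.1 (by omega)).2
        obtain ⟨k', c, hk', h1, h2, h3⟩ := decS ha
        have hc0 : c = nil := by
          have hoa := hot.arg
          rw [h1] at hoa
          exact (OT_sub hoa).zarg
        subst hc0
        have e : a = app (fill k' nil) (cons 0 nil nil) := by rw [h1]; exact h3 _
        rw [h2]
        have hg3 : GB 1 (fill k' nil) (fill l (cons (j+1) a nil)) := by
          have := hg2
          conv at this => arg 2; rw [e]
          exact (GB_app.1 this).1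
        refine GB_sz hg3 ?_
        intro g g1 g2
        by_contra g3
        rw [hc] at g3 g1
        obtain ⟨u, u1, u2, u3⟩ := squeeze (not_lt.1 g3) g1
        rw [e] at u2
        have := le_antisymm (lt_app0 u2 rfl) u1
        subst this
        omega
  | co a ha =>
    rw [fq_co ha]
    have hG1 := hG.1 le_rfl
    have h1 := (OT_zs ha hot (len (zeros n))).2
    have hc : ∀ x, fill l (cons 1 x nil) = fill (comp l (K.ar 0 K.id)) x := by
      intro x; simp [fill_comp, fill]
    have hlt : fq a (zs (fq a) (len (zeros n))) <
        fill l (cons 1 (fq a (zs (fq a) (len (zeros n)))) nil) := by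
      rw [hc]
      refine lemX ?_ (fq_lt_W ha (hidx_zs _ _)).le ?_
      · exact sz_ar _ _
      · rw [← hc]; exact hG1.1 rfl
    exact ⟨fun _ => ⟨fun _ => hlt, (h1.gb (by omega)).mono hlt.le⟩, trivial⟩

theorem OT_fq_s {q} (h : tpq q = Ty.s) (ho : OT 2 q) (x) : OT 2 (fq q x) := by
  obtain ⟨k, a, hk, h1, h2, h3⟩ := decS h
  rw [h2]
  rw [h1] at ho
  exact OT_fillnil hk h3 ho

/-! nestedness -/

def vy (d y : Q) : Prop := tpq d = Ty.w → ∃ n, y = zeros (n + 1)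

theorem single_nest {i : ℕ} (hi : 1 ≤ i) {A d : Q} (hA : A < d)
    (h : ∀ y, vy d y → A ≤ fq d y) : ∀ y, vy (cons i d nil) y → cons i A nil ≤ fq (cons i d nil) y := by
  intro y hy
  have hi0 : i ≠ 0 := by omega
  cases hd : tpq d with
  | z => rw [tpq_z_iff.1 hd] at hA; exact absurd hA (not_lt_nil _)
  | s =>
    obtain ⟨n, rfl⟩ := hy (by simp [tpq, hd, hi0])
    rw [fq_su hi hd, len_rep, rep, cons_le_cons]
    right; refine ⟨rfl, ?_⟩
    rcases (h nil (by intro h; rw [hd] at h; cases h)).lt_or_eq with h1 | h1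
    · exact Or.inl h1
    · exact Or.inr ⟨h1, by simp⟩
  | w =>
    obtain ⟨n, rfl⟩ := hy (by simp [tpq, hd, hi0])
    have := h (zeros (n + 1)) (fun _ => ⟨n, rfl⟩)
    simp [fq, hd, hi0, this]
  | W =>
    have h2 : ∀ x, A ≤ fq d x := fun x => h x (by intro h; rw [hd] at h; cases h)
    by_cases h1 : i = 1
    · subst h1; simp [fq_co hd, h2]
    · simp [fq, hd, hi0, h1, h2]

theorem nest {s t c : Q} (hB : ∀ u, OT 2 u → GB 1 u c → s < u → u < t → ∀ y, vy u y → s ≤ fq u y) :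
    ∀ (k : K) (d : Q), OT 2 d → GB 1 d c → fill k s < d → d < fill k t → ∀ y, vy d y →
      fill k s ≤ fq d y := by
  intro k
  induction k with
  | id => intro d h1 h2 h3 h4; exact hB d h1 h2 h3 h4
  | tl i b k ih =>
    intro d h1 h2 h3 h4 y hy
    cases d with
    | nil => exact absurd h3 (not_lt_nil _)
    | cons j b' d' =>
      simp only [fill] at h3 h4 ⊢
      have hh : j = i ∧ b' = b := by
        rw [cons_lt_cons] at h3 h4
        have : j = i := by omega
        refine ⟨this, ?_⟩
        subst this
        simp at h3 h4
        rcases h3 with h3 | h3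
        · rcases h4 with h4 | h4
          · exact absurd h3 h4.asymm
          · exact h4.1
        · exact h3.1.symm
      obtain ⟨rfl, rfl⟩ := hh
      simp at h3 h4
      have hn : d' ≠ nil := by rintro rfl; exact absurd h3 (not_lt_nil _)
      rw [fq_tail hn, cons_le_same]
      refine ih d' h1.tail h2.2 h3 h4 y ?_
      unfold vy at hy ⊢
      rwa [tpq_tail hn] at hy
  | ar i k ih =>
    intro d h1 h2 h3 h4 y hy
    cases d with
    | nil => exact absurd h3 (not_lt_nil _)
    | cons j d' r =>
      simp only [fill] at h3 h4 ⊢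
      have hh : j = i + 1 := by
        rw [cons_lt_cons] at h3 h4
        omega
      subst hh
      have hlt : d' < fill k t := by
        simpa [cons_lt_cons] using h4
      by_cases hr : r = nil
      · subst hr
        rw [single_lt] at h3
        refine single_nest (by omega) h3 ?_ y hy
        exact ih d' h1.arg (h2.1 (by omega)).2 h3 hlt
      · rw [fq_tail hr]
        rw [cons_lt_cons] at h3
        simp at h3
        rw [cons_le_cons]
        right; refine ⟨rfl, ?_⟩
        rcases h3 with h3 | h3
        · exact Or.inl h3
        · exact Or.inr ⟨h3.1, by simp⟩

theorem GB_top : ∀ {d : Q}, OT 2 d → GB 1 d (cons 3 nil nil)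
  | nil, _ => trivial
  | cons i a r, h => ⟨fun _ => ⟨fun _ => lt_of_hidx (by have := hidx_le h.arg; omega), GB_top h.arg⟩,
      GB_top h.tail⟩

theorem nestZ {e : Q} (he : tpq e = Ty.W) (hoe : OT 2 e) : ∀ n w, OT 2 w → hidx w ≤ 1 → GB 1 w e →
    zs (fq e) n < w → ∀ y, vy w y → zs (fq e) n ≤ fq w y := by
  obtain ⟨k, i, hk, hi, h1, h2⟩ := decW he
  have hi2 : i ≤ 2 := by rw [h1] at hoe; exact (OT_sub hoe).1
  intro n
  induction n with
  | zero => intro w _ _ _ _ y _; simp [zs]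
  | succ n ih =>
    intro w hw hh hg hlt y hy
    have N := nest (s := zs (fq e) n) (t := cons i nil nil) (c := e) (fun u o g l1 l2 y hy =>
      ih u o (by
        by_contra hc
        have : cons i nil nil ≤ u := by
          cases u with
          | nil => simp [hidx] at hc
          | cons j b r =>
            simp only [hidx] at hc
            have := o.1
            have : j = i := by omega
            subst this
            rw [cons_le_cons]
            right; refine ⟨rfl, ?_⟩
            rcases (nil_le b).lt_or_eq with h | h
            · exact Or.inl h
            · exact Or.inr ⟨h, nil_le _⟩
        exact absurd l2 (not_lt.2 this)) g l1 y hy) k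
    cases w with
    | nil => exact absurd hlt (not_lt_nil _)
    | cons j d r =>
      simp only [zs] at hlt ⊢
      have hj : j = 1 := by
        rw [cons_lt_cons] at hlt
        simp only [hidx] at hh
        omega
      subst hj
      rw [h2] at hlt ⊢
      by_cases hr : r = nil
      · subst hr
        rw [single_lt] at hlt
        refine single_nest le_rfl hlt ?_ y hy
        refine N d hw.arg (hg.1 le_rfl).2 hlt ?_
        rw [← h1]
        exact (hg.1 le_rfl).1 rfl
      · rw [fq_tail hr]
        rw [cons_lt_cons] at hlt
        simp at hlt
        rw [cons_le_cons]
        right; refine ⟨rfl, ?_⟩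
        rcases hlt with h3 | h3
        · exact Or.inl h3
        · exact Or.inr ⟨h3.1, by simp⟩

theorem rep_nest {i : ℕ} {a a' : Q} (hi : 1 ≤ i) (haa : a' < a) (hmax : ∀ g, g < a → g ≤ a') :
    ∀ n u, OT 2 u → rep i a' n < u → u < cons i a nil → ∀ y, rep i a' n ≤ fq u y := by
  intro n
  induction n with
  | zero => intro u _ _ _ y; simp [rep]
  | succ n ih =>
    intro u hu h1 h2 y
    cases u with
    | nil => exact absurd h1 (not_lt_nil _)
    | cons j b r =>
      simp only [rep] at h1 ⊢
      have hj : j = i := by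
        rw [cons_lt_cons] at h1 h2; omega
      subst hj
      have hb : b < a := by simpa [cons_lt_cons] using h2
      have hb := hmax b hb
      rw [cons_lt_cons] at h1
      simp [not_lt.2 hb] at h1
      obtain ⟨rfl, h1⟩ := h1
      have hn : r ≠ nil := by rintro rfl; exact absurd h1 (not_lt_nil _)
      rw [fq_tail hn, cons_le_same]
      refine ih r hu.tail h1 ?_ y
      have := hu.hdl
      cases r with
      | nil => simp
      | cons j' b' r' =>
        simp only [hdle] at this
        rw [cons_lt_cons]
        rcases this with h | ⟨h, h'⟩
        · exact Or.inl h
        · exact Or.inr ⟨h, Or.inl (lt_of_le_of_lt h' haa)⟩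

theorem hidx0_zeros {L} : ∀ {q : Q}, OT L q → hidx q = 0 → q = zeros (len q)
  | nil, _, _ => rfl
  | cons i a r, h, h0 => by
    simp only [hidx] at h0
    subst h0
    have := hidx_tail h
    have h1 := hidx0_zeros h.tail (by omega)
    rw [h.zarg]
    show cons 0 nil r = cons 0 nil (zeros (len r))
    rw [← h1]

theorem zeros_succ (n) : zeros (n + 1) = cons 0 nil (zeros n) := rfl
theorem tp_zeros (n) : tpq (zeros (n+1)) = Ty.s := by
  induction n with
  | zero => simp [rep, tpq]
  | succ n ih => rw [zeros_succ, tpq_tail (by simp [rep]), ih]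
theorem fq_zeros (n x) : fq (zeros (n+1)) x = zeros n := by
  induction n with
  | zero => simp [rep, fq]
  | succ n ih => rw [zeros_succ, fq_tail (by simp [rep]), ih]; rfl
theorem zeros_lt {m n} : zeros m < zeros n ↔ m < n := by
  induction m generalizing n with
  | zero => cases n <;> simp [rep]
  | succ m ih => cases n with
    | zero => simp [rep]
    | succ n => simp [rep]; exact ih
theorem zeros_le {m n} : zeros m ≤ zeros n ↔ m ≤ n := by
  rw [← not_lt, zeros_lt, not_lt]

theorem succ_max {L a} (ha : tpq a = Ty.s) (ho : OT L a) : ∀ g, g < a → g ≤ fq a nil := by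
  obtain ⟨k', c, hk', h1, h2, h3⟩ := decS ha
  have hc0 : c = nil := by
    have hoa := ho
    rw [h1] at hoa
    exact (OT_sub hoa).zarg
  subst hc0
  intro g hg
  rw [h1, h3] at hg
  rw [h2]
  exact lt_app0 hg rfl

theorem base_nest {t} (hb : Base t) (ho : OT 2 t) (x : ℕ) (u) (hu : OT 2 u) (h1 : fq t (zeros x) < u)
    (h2 : u < t) (y) (hy : vy u y) : fq t (zeros x) ≤ fq u y := by
  cases hb with
  | om =>
    rw [fq_om] at h1 ⊢
    have : hidx u = 0 := by
      cases u with
      | nil => rfl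
      | cons i a r => rw [cons_lt_cons] at h2; simp [hidx]; simp at h2; exact h2
    have hz := hidx0_zeros hu this
    rw [hz] at h1 ⊢
    rw [zeros_lt] at h1
    obtain ⟨m, hm⟩ : ∃ m, len u = m + 1 := ⟨len u - 1, by omega⟩
    rw [hm] at h1 ⊢
    rw [fq_zeros, zeros_le]; omega
  | su i a hi ha =>
    rw [fq_su hi ha] at h1 ⊢
    exact rep_nest hi (fq_lt_s ha _) (succ_max ha ho.arg) _ u hu h1 h2 y
  | co e he =>
    rw [fq_co he] at h1 ⊢
    rw [len_rep] at h1 ⊢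
    have Z := nestZ he ho.arg (x + 1)
    simp only [zs] at Z
    have hidx1 : hidx u ≤ 1 := by simpa [hidx] using hidx_mono h2.le
    refine Z u hu hidx1 ?_ h1 y hy
    cases u with
    | nil => trivial
    | cons j d r =>
      have hj : j = 1 := by
        rw [cons_lt_cons] at h1 h2; omega
      subst hj
      have main : ∀ v, OT 2 v → v < cons 1 e nil → GB 1 v e := by
        intro v
        induction v with
        | nil => intro _ _; trivial
        | cons j d r _ ih =>
          intro ho hlt
          refine ⟨fun hj => ?_, ih ho.tail (lt_trans (hdle_cons_lt ho) hlt)⟩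
          rw [cons_lt_cons] at hlt
          have : j = 1 := by omega
          subst this
          simp at hlt
          exact ⟨fun _ => hlt, (ho.gb (by omega)).mono hlt.le⟩
      exact main _ hu h2

/-- N1 -/
theorem nested {g : Q} (hg : tpq g = Ty.w) (ho : OT 2 g) (x : ℕ) {d : Q} (hd : OT 2 d)
    (h1 : fq g (zeros x) < d) (h2 : d < g) (y) (hy : vy d y) : fq g (zeros x) ≤ fq d y := by
  obtain ⟨k, t, hb, rfl⟩ := decw hg
  rw [fill_fq hb.tp] at h1 ⊢
  exact nest (c := cons 3 nil nil)
    (fun u o _ l1 l2 y hy => base_nest hb (OT_sub ho) x u o l1 l2 y hy) k d hd (GB_top hd) h1 h2 y hy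

theorem rep_le {i a m n} (h : m ≤ n) : rep i a m ≤ rep i a n := by
  induction m generalizing n with
  | zero => simp [rep]
  | succ m ih => cases n with
    | zero => omega
    | succ n => simp only [rep]; rw [cons_le_same]; exact ih (by omega)

theorem fq_mono {q} (h : tpq q = Ty.w) {m n : ℕ} (hmn : m ≤ n) : fq q (zeros m) ≤ fq q (zeros n) := by
  obtain ⟨k, t, hb, rfl⟩ := decw h
  rw [fill_fq hb.tp, fill_fq hb.tp, fill_le]
  cases hb with
  | om => rw [fq_om, fq_om]; exact rep_le hmn
  | su i a hi ha => rw [fq_su hi ha, fq_su hi ha, len_rep, len_rep]; exact rep_le hmn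
  | co e he =>
    rw [fq_co he, fq_co he, len_rep, len_rep]
    obtain ⟨k, i, hk, hi, h1, h2⟩ := decW he
    rw [single_le, h2, h2, fill_le]
    exact monotone_nat_of_le_succ (fun n => (fq_zs_lt he n).le) hmn

end GT

namespace GT
open Q

def pr : ℕ → Tm → Tm
  | 0, _ => Tm.one
  | i + 1, t => Tm.psi i t

def tau : Q → Tm
  | nil => Tm.zero
  | cons i a r => if r = nil then pr i (tau a) else Tm.add (pr i (tau a)) (tau r)

def ZA : Q → Prop
  | nil => True
  | cons i a r => i ≤ 2 ∧ (i = 0 → a = nil) ∧ ZA a ∧ ZA r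

theorem OT.za : ∀ {q : Q}, OT 2 q → ZA q
  | nil, _ => trivial
  | cons _ _ _, h => ⟨h.1, h.2.1, h.arg.za, h.tail.za⟩

theorem tau_single (i a) : tau (cons i a nil) = pr i (tau a) := by simp [tau]
theorem tau_cons {i a r} (h : r ≠ nil) : tau (cons i a r) = Tm.add (pr i (tau a)) (tau r) := by
  simp [tau, h]
theorem pr_ne_zero (i t) : pr i t ≠ Tm.zero := by cases i <;> simp [pr]
theorem pr_ne_add (i t a b) : pr i t ≠ Tm.add a b := by cases i <;> simp [pr]
theorem tau_zero_iff {q} : tau q = Tm.zero ↔ q = nil := by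
  cases q with
  | nil => simp [tau]
  | cons i a r => simp only [tau]; split_ifs <;> simp [pr_ne_zero]

theorem tau_inj : ∀ {q r : Q}, ZA q → ZA r → tau q = tau r → q = r
  | nil, r, _, _, h => by
    have := h.symm; simp only [tau] at this; exact (tau_zero_iff.1 this).symm
  | cons i a s, nil, _, _, h => by
    have : tau (cons i a s) = Tm.zero := h
    exact absurd (tau_zero_iff.1 this) (by simp)
  | cons i a s, cons j b t, hq, hr, h => by
    have hp : ∀ {i a j b}, ZA a → ZA b → (i = 0 → a = nil) → (j = 0 → b = nil) →
        (tau a = tau b → a = b) → pr i (tau a) = pr j (tau b) → i = j ∧ a = b := by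
      intro i a j b _ _ h1 h2 h3 h
      cases i <;> cases j <;> simp [pr] at h ⊢
      · rw [h1 rfl, h2 rfl]
      · exact ⟨h.1, h3 h.2⟩
    have iha := @tau_inj a b hq.2.2.1 hr.2.2.1
    have ihs := @tau_inj s t hq.2.2.2 hr.2.2.2
    simp only [tau] at h
    split_ifs at h with h1 h2 h2
    · obtain ⟨rfl, rfl⟩ := hp hq.2.2.1 hr.2.2.1 hq.2.1 hr.2.1 iha h
      rw [h1, h2]
    · exact absurd h (pr_ne_add _ _ _ _)
    · exact absurd h.symm (pr_ne_add _ _ _ _)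
    · simp at h
      obtain ⟨rfl, rfl⟩ := hp hq.2.2.1 hr.2.2.1 hq.2.1 hr.2.1 iha h.1
      rw [ihs h.2]

theorem hd_pr (i t) : Tm.hd (pr i t) = pr i t := by cases i <;> simp [pr, Tm.hd]
theorem hd_tau (i a r) : Tm.hd (tau (cons i a r)) = tau (cons i a nil) := by
  by_cases h : r = nil
  · subst h; rw [tau_single, hd_pr]
  · rw [tau_cons h, tau_single]; rfl
theorem tl_tau (i a r) : Tm.tl (tau (cons i a r)) = tau r := by
  simp only [tau]; split_ifs with h
  · subst h; cases i <;> simp [pr, Tm.tl, tau]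
  · simp [Tm.tl]
theorem TLt_zero {a} : ¬ TLt a Tm.zero := by
  intro h
  have : ∀ a b, TLt a b → b ≠ Tm.zero := by
    intro a b h
    induction h with
    | zero_lt h => exact h
    | one_lt_psi0 => simp
    | psi_mono _ => simp
    | psi_lt _ => simp
    | @lex_hd a b hh h ih =>
      rintro rfl; simp [Tm.hd] at ih
    | @lex_tl a b hh h1 h ih =>
      rintro rfl; simp [Tm.tl] at ih
  exact this _ _ h rfl

theorem sound : ∀ {s t : Tm}, TLt s t → ∀ q r, ZA q → ZA r → s = tau q → t = tau r → q < r := by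
  intro s t h
  induction h with
  | zero_lt h =>
    intro q r _ _ h1 h2
    have := tau_zero_iff.1 h1.symm
    subst this
    rw [nil_lt_iff]
    rintro rfl
    exact h h2
  | one_lt_psi0 =>
    intro q r hq hr h1 h2
    cases q with
    | nil => simp [tau] at h1
    | cons i a q' =>
      cases r with
      | nil => simp [tau] at h2
      | cons j b r' =>
        simp only [tau] at h1 h2
        split_ifs at h1 h2
        cases i <;> simp [pr] at h1
        cases j <;> simp [pr] at h2
        rw [cons_lt_cons]; left; omega
  | psi_mono _ ih =>
    intro q r hq hr h1 h2
    cases q with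
    | nil => simp [tau] at h1
    | cons i a q' =>
      cases r with
      | nil => simp [tau] at h2
      | cons j b r' =>
        simp only [tau] at h1 h2
        split_ifs at h1 h2
        cases i <;> simp [pr] at h1
        cases j <;> simp [pr] at h2
        rw [cons_lt_cons]; right
        exact ⟨by omega, Or.inl (ih _ _ hq.2.2.1 hr.2.2.1 h1.2 h2.2)⟩
  | psi_lt hij =>
    intro q r hq hr h1 h2
    cases q with
    | nil => simp [tau] at h1
    | cons i a q' =>
      cases r with
      | nil => simp [tau] at h2
      | cons j b r' =>
        simp only [tau] at h1 h2
        split_ifs at h1 h2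
        cases i <;> simp [pr] at h1
        cases j <;> simp [pr] at h2
        rw [cons_lt_cons]; left; omega
  | lex_hd hh h ih =>
    intro q r hq hr h1 h2
    subst h1; subst h2
    cases r with
    | nil => simp [tau, Tm.hd] at h; exact absurd h TLt_zero
    | cons j b r' =>
      cases q with
      | nil => simp
      | cons i a q' =>
        have := ih (cons i a nil) (cons j b nil) ⟨hq.1, hq.2.1, hq.2.2.1, trivial⟩
          ⟨hr.1, hr.2.1, hr.2.2.1, trivial⟩ (hd_tau _ _ _) (hd_tau _ _ _)
        simp [cons_lt_cons] at this ⊢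
        rcases this with h | h
        · exact Or.inl h
        · exact Or.inr ⟨h.1, Or.inl h.2⟩
  | lex_tl hh h1' h ih =>
    intro q r hq hr h1 h2
    subst h1; subst h2
    cases r with
    | nil => simp [tau, Tm.tl] at h; exact absurd h TLt_zero
    | cons j b r' =>
      cases q with
      | nil => simp
      | cons i a q' =>
        have := ih q' r' hq.2.2.2 hr.2.2.2 (tl_tau _ _ _) (tl_tau _ _ _)
        rw [hd_tau, hd_tau] at h1'
        have e := tau_inj (q := cons i a nil) (r := cons j b nil) ⟨hq.1, hq.2.1, hq.2.2.1, trivial⟩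
          ⟨hr.1, hr.2.1, hr.2.2.1, trivial⟩ h1'
        simp at e
        obtain ⟨rfl, rfl⟩ := e
        simpa using this

def tyT : Ty → Tm
  | Ty.z => Tm.zero
  | Ty.s => Tm.one
  | Ty.w => omegaT
  | Ty.W => OmegaT

theorem tp_tau : ∀ {q : Q}, ZA q → tp (tau q) = tyT (tpq q)
  | nil, _ => by simp [tau, tp, tpq, tyT]
  | cons i a r, h => by
    have iha := tp_tau h.2.2.1
    have ihr := tp_tau h.2.2.2
    by_cases hr : r = nil
    · subst hr
      rw [tau_single]
      cases i with
      | zero => simp [pr, tp, tpq, tyT]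
      | succ i =>
        have hi : i + 1 ≤ 2 := h.1
        have hi : i = 0 ∨ i = 1 := by omega
        simp only [pr, tp, tpq, iha]
        cases tpq a <;> rcases hi with rfl | rfl <;> simp [tyT, omegaT, OmegaT, Omega2T]
    · rw [tau_cons hr, tp, ihr, tpq_tail hr]

theorem natToTm_tau : ∀ n, natToTm n = tau (zeros n)
  | 0 => rfl
  | 1 => by simp [natToTm, rep, tau, pr]
  | n + 2 => by
    rw [natToTm, natToTm_tau (n + 1), zeros_succ (n + 1), tau_cons (by simp [rep])]; rfl

theorem tmToNat_tau (n) : tmToNat (tau (zeros n)) = n := by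
  induction n with
  | zero => rfl
  | succ n ih =>
    cases n with
    | zero => simp [rep, tau, pr, tmToNat]
    | succ n => rw [zeros_succ, tau_cons (by simp [rep]), tmToNat, ih]; simp [pr, tmToNat]; omega

theorem pr_cases {P : Tm → Prop} (h1 : P Tm.one) (h2 : ∀ i t, P (Tm.psi i t)) (i t) : P (pr i t) := by
  cases i <;> simp [pr, h1, h2]

theorem addT_pr (i t) (b : Tm) (hb : b ≠ Tm.zero) :
    Tm.addT (pr i t) b = if TLt (pr i t) (Tm.hd b) then b else Tm.add (pr i t) b := by
  cases i <;> cases b <;> simp_all only [pr, Tm.addT, ne_eq, not_true_eq_false] <;> congr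

theorem addT_tau {i a r} (h : ZA (cons i a r)) (hh : hdle r i a) :
    Tm.addT (pr i (tau a)) (tau r) = tau (cons i a r) := by
  cases r with
  | nil => rw [tau_single]; cases i <;> simp [tau, pr, Tm.addT]
  | cons j b s =>
    rw [addT_pr _ _ _ (by rw [Ne, tau_zero_iff]; simp), tau_cons (i := i) (by simp), if_neg]
    intro hc
    rw [hd_tau] at hc
    have h2 := h.2.2.2
    have := sound hc (cons i a nil) (cons j b nil) ⟨h.1, h.2.1, h.2.2.1, trivial⟩
      ⟨h2.1, h2.2.1, h2.2.2.1, trivial⟩ (tau_single _ _).symm rfl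
    simp [cons_lt_cons] at this
    simp only [hdle] at hh
    rcases hh with h3 | ⟨rfl, h3⟩ <;> rcases this with h4 | ⟨h4, h5⟩
    · omega
    · omega
    · omega
    · exact absurd h5 (not_lt.2 h3)

theorem TLt_irr_tau {q} (h : ZA q) : ¬ TLt (tau q) (tau q) :=
  fun hc => lt_irrefl _ (sound hc q q h h rfl rfl)

theorem ZA_rep {i a} (h : ZA (cons i a nil)) (n) : ZA (rep i a n) := by
  induction n with
  | zero => trivial
  | succ n ih => exact ⟨h.1, h.2.1, h.2.2.1, ih⟩

theorem mulNat_tau {i a} (h : ZA (cons i a nil)) (n) : mulNat (pr i (tau a)) n = tau (rep i a n) := by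
  have key : ∀ n, Tm.addT (tau (rep i a n)) (pr i (tau a)) = tau (rep i a (n + 1)) := by
    intro n
    induction n with
    | zero => simp [rep, tau, Tm.addT]
    | succ n ih =>
      cases n with
      | zero =>
        simp only [rep]
        rw [tau_single, addT_pr _ _ _ (pr_ne_zero _ _), hd_pr, if_neg, tau_cons (by simp), tau_single]
        rw [← tau_single]; exact TLt_irr_tau h
      | succ n =>
        have e : rep i a (n + 1) ≠ nil := by simp [rep]
        rw [show rep i a (n + 1 + 1) = cons i a (rep i a (n + 1)) from rfl, tau_cons e]
        rw [show rep i a (n + 1 + 1 + 1) = cons i a (rep i a (n + 1 + 1)) from rfl,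
          tau_cons (by simp [rep]), ← ih]
        have : ∀ p r b, b ≠ Tm.zero → Tm.addT (Tm.add p r) b =
          if TLt p (Tm.hd b) then b else Tm.add p (Tm.addT r b) := by
          intro p r b hb
          cases b <;> simp_all only [Tm.addT, ne_eq, not_true_eq_false] <;> congr
        rw [this _ _ _ (pr_ne_zero _ _), hd_pr, if_neg]
        rw [← tau_single]; exact TLt_irr_tau h
  induction n with
  | zero => rfl
  | succ n ih => rw [mulNat, ih, key]

theorem ZA_zeros (n) : ZA (zeros n) := (OT_zeros 2 n).za

theorem ZA_fq : ∀ {q : Q}, ZA q → ∀ {x}, ZA x → ZA (fq q x)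
  | nil, _, _, _ => trivial
  | cons i a r, h, x, hx => by
    have iha := @ZA_fq a h.2.2.1
    have ihr := @ZA_fq r h.2.2.2 x hx
    by_cases h1 : r = nil
    · by_cases h2 : i = 0
      · simp [fq, h1, h2, ZA]
      · have hz : ∀ n, ZA (zs (fq a) n) := by
          intro n
          induction n with
          | zero => trivial
          | succ n ih => exact ⟨by omega, by simp, iha ih, trivial⟩
        cases ha : tpq a with
        | z => simpa [fq, h1, h2, ha] using hx
        | s =>
          simp only [fq, h1, h2, ha, ne_eq, not_true_eq_false, if_false]
          exact ZA_rep ⟨h.1, by simp [h2], iha (x := nil) trivial, trivial⟩ _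
        | w =>
          simp only [fq, h1, h2, ha, ne_eq, not_true_eq_false, if_false]
          exact ⟨h.1, by simp [h2], iha hx, trivial⟩
        | W =>
          simp only [fq, h1, h2, ha, ne_eq, not_true_eq_false, if_false]
          split_ifs
          · exact ⟨by omega, by simp, iha (hz _), trivial⟩
          · exact ⟨h.1, by simp [h2], iha hx, trivial⟩
    · rw [fq_tail h1]; exact ⟨h.1, h.2.1, h.2.2.1, ihr⟩

def vx (q x : Q) : Prop := (tpq q = Ty.w → ∃ n, x = zeros n) ∧ (tpq q = Ty.W → hidx x ≤ 1)

theorem fq_lt' {q x} (hq : q ≠ nil) (h : vx q x) : fq q x < q := by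
  cases ht : tpq q with
  | z => exact absurd (tpq_z_iff.1 ht) hq
  | s => exact fq_lt_s ht _
  | w => obtain ⟨n, rfl⟩ := h.1 ht; exact fq_lt_w ht _
  | W => exact fq_lt_W ht (h.2 ht)

theorem fund_tau : ∀ {q : Q}, OT 2 q → ∀ {x}, ZA x → vx q x → fund (tau q) (tau x) = tau (fq q x)
  | nil, _, x, _, _ => by simp [tau, fund, fq]
  | cons i a r, h, x, hx, hv => by
    have iha := @fund_tau a h.arg
    by_cases hr : r = nil
    · subst hr
      rw [tau_single]
      cases i with
      | zero => simp [pr, fund, fq, tau]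
      | succ i =>
        have hi : i + 1 ≤ 2 := h.1
        have hi : i = 0 ∨ i = 1 := by omega
        rw [show pr (i+1) (tau a) = Tm.psi i (tau a) from rfl, fund, tp_tau h.arg.za]
        have hi0 : i + 1 ≠ 0 := by omega
        cases ha : tpq a with
        | z => simp [tyT, fq, ha]
        | s =>
          have hw : tpq (cons (i+1) a nil) = Ty.w := by simp [tpq, ha]
          obtain ⟨n, rfl⟩ := hv.1 hw
          have hza : ZA (cons (i+1) (fq a nil) nil) := ⟨h.1, by simp, ZA_fq h.arg.za trivial, trivial⟩
          have e : fund (tau a) Tm.zero = tau (fq a nil) :=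
            iha (x := nil) trivial ⟨by simp [ha], by simp [ha]⟩
          rw [fq_su (by omega) ha, ← mulNat_tau hza, len_rep, tmToNat_tau, e]
          simp [tyT, pr]
        | w =>
          have hw : tpq (cons (i+1) a nil) = Ty.w := by simp [tpq, ha]
          obtain ⟨n, rfl⟩ := hv.1 hw
          have e : fund (tau a) (tau (zeros n)) = tau (fq a (zeros n)) :=
            iha (ZA_zeros n) ⟨fun _ => ⟨n, rfl⟩, by simp [ha]⟩
          simp [tyT, omegaT, OmegaT, Omega2T, e, fq, ha, tau_single, pr]
        | W =>
          rcases hi with rfl | rfl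
          · have hw : tpq (cons (0+1) a nil) = Ty.w := by simp [tpq, ha]
            obtain ⟨n, rfl⟩ := hv.1 hw
            have hz : ∀ n, ZA (zs (fq a) n) := by
              intro n
              induction n with
              | zero => trivial
              | succ n ih => exact ⟨by omega, by simp, ZA_fq h.arg.za ih, trivial⟩
            have e : ∀ n, fund (tau a) (tau (zs (fq a) n)) = tau (fq a (zs (fq a) n)) :=
              fun n => iha (hz n) ⟨by simp [ha], fun _ => hidx_zs _ _⟩
            have e2 : ∀ n, Nat.rec (motive := fun _ => Tm) Tm.zero
                (fun _ ih => Tm.psi 0 (fund (tau a) ih)) n = tau (zs (fq a) n) := by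
              intro n
              induction n with
              | zero => rfl
              | succ n ih =>
                show Tm.psi 0 (fund (tau a) (Nat.rec (motive := fun _ => Tm) Tm.zero
                  (fun _ ih => Tm.psi 0 (fund (tau a) ih)) n)) = _
                rw [ih, e, zs, tau_single]; rfl
            rw [fq_co ha, len_rep, tau_single, tmToNat_tau, e2, e]
            simp [tyT, OmegaT, pr]
          · have hw : tpq (cons (1+1) a nil) = Ty.W := by simp [tpq, ha]
            have e : fund (tau a) (tau x) = tau (fq a x) := iha hx ⟨by simp [ha], fun _ => hv.2 hw⟩
            simp [tyT, OmegaT, Omega2T, e, fq, ha, tau_single, pr]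
    · have hv' : vx r x := by unfold vx at hv ⊢; rwa [tpq_tail hr] at hv
      rw [tau_cons hr, fund, fund_tau h.tail hx hv', fq_tail hr]
      exact addT_tau ⟨h.1, h.2.1, h.arg.za, ZA_fq h.tail.za hx⟩ (hdle_mono (fq_lt' hr hv').le h.hdl)

/-- countable terms -/
def CT (q : Q) : Prop := OT 2 q ∧ hidx q ≤ 1

theorem tpq_ne_W {q} (h : CT q) : tpq q ≠ Ty.W := by
  have : ∀ q, OT 2 q → tpq q = Ty.W → 2 ≤ hidx q := by
    intro q
    induction q with
    | nil => intro _ h; simp [tpq] at h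
    | cons i a r _ ih =>
      intro ho h
      by_cases hr : r = nil
      · subst hr
        simp only [tpq] at h
        simp only [hidx]
        by_contra hc
        have : i = 0 ∨ i = 1 := by omega
        rcases this with rfl | rfl
        · simp at h
        · simp at h; revert h; split <;> simp
      · rw [tpq_tail hr] at h
        have := ih ho.tail h
        have := hidx_tail ho
        simp only [hidx]; omega
  intro hc
  have := this q h.1 hc
  have := h.2
  omega

theorem CT.s {q} (h : CT q) (ht : tpq q = Ty.s) (x) : CT (fq q x) :=
  ⟨OT_fq_s ht h.1 x, (hidx_mono (fq_lt_s ht x).le).trans h.2⟩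
theorem CT.w {q} (h : CT q) (ht : tpq q = Ty.w) (n) : CT (fq q (zeros n)) :=
  ⟨OT_fq_w ht h.1 n, (hidx_mono (fq_lt_w ht n).le).trans h.2⟩

noncomputable def hq (q : Q) (k : ℕ) : ℕ := H (tau q) k
noncomputable def NN (q : Q) (k : ℕ) : ℕ → ℕ
  | 0 => 0
  | b + 1 => hq (fq q (zeros (NN q k b))) k

theorem CT_ind {P : Q → Prop} (h : ∀ q, CT q → (∀ s, CT s → s < q → P s) → P q) :
    ∀ q, CT q → P q := by
  intro q hq
  refine OT_ind (L := 2) (P := fun q => CT q → P q) ?_ q hq.1 hq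
  intro q ho ih hc
  exact h q hc fun s hs hlt => ih s hs.1 hlt hs

theorem H_of {α k c} (h : ∀ n, HRel α k n ↔ n = c) : H α k = c := by
  unfold H
  have : {n | HRel α k n} = {c} := by ext n; simp [h]
  rw [this]; simp

theorem HRel_main : ∀ q, CT q → ∀ k, (∀ n, HRel (tau q) k n ↔ n = hq q k) ∧
    (tpq q = Ty.z → hq q k = k) ∧ (tpq q = Ty.s → hq q k = hq (fq q nil) k * k) ∧
    (tpq q = Ty.w → hq q k = NN q k (k + 1)) := by
  refine CT_ind ?_
  intro q hc ih k
  suffices h : ∃ c, (∀ n, HRel (tau q) k n ↔ n = c) ∧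
    (tpq q = Ty.z → c = k) ∧ (tpq q = Ty.s → c = hq (fq q nil) k * k) ∧
    (tpq q = Ty.w → c = NN q k (k + 1)) by
    obtain ⟨c, h1, h2⟩ := h
    have e : hq q k = c := H_of h1
    rw [e]; exact ⟨h1, h2⟩
  have htp := tp_tau hc.1.za
  cases ht : tpq q with
  | z =>
    have := tpq_z_iff.1 ht
    subst this
    refine ⟨k, ?_, by simp, by simp, by simp⟩
    intro n
    constructor
    · intro h
      cases h with
      | zero => rfl
      | succ h _ => simp [tau, tp] at h
      | lim h _ _ => simp [tau, tp, omegaT] at h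
    · rintro rfl; exact HRel.zero
  | s =>
    rw [ht] at htp
    have hf : fund (tau q) Tm.zero = tau (fq q nil) :=
      fund_tau hc.1 (x := nil) trivial ⟨by simp [ht], by simp [ht]⟩
    have hi := (ih _ (hc.s ht nil) (fq_lt_s ht _) k).1
    refine ⟨_, ?_, by simp, fun _ => rfl, by simp⟩
    intro n
    constructor
    · intro h
      generalize hα : tau q = α at h
      cases h with
      | zero => rw [hα] at htp; simp [tp, tyT] at htp
      | succ h1 h2 =>
        subst hα
        rw [hf, hi] at h2
        rw [h2]
      | lim h _ _ => subst hα; rw [htp] at h; simp [tyT, omegaT] at h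
    · rintro rfl
      exact HRel.succ htp (by rw [hf, hi])
  | W => exact absurd ht (tpq_ne_W hc)
  | w =>
    rw [ht] at htp
    have hf : ∀ n, fund (tau q) (tau (zeros n)) = tau (fq q (zeros n)) := fun n =>
      fund_tau hc.1 (ZA_zeros n) ⟨fun _ => ⟨n, rfl⟩, by simp [ht]⟩
    have hi := fun n => (ih _ (hc.w ht n) (fq_lt_w ht _) k).1
    have hit : ∀ b β, HIter (tau q) k b β ↔ β = tau (fq q (zeros (NN q k b))) := by
      intro b
      induction b with
      | zero =>
        intro β
        rw [NN, ← hf]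
        constructor
        · intro h; cases h; rfl
        · rintro rfl; exact HIter.zero
      | succ b ihb =>
        intro β
        rw [NN, ← hf]
        constructor
        · intro h
          cases h with
          | succ h1 h2 =>
            have := (ihb _).1 h1
            subst this
            rw [hi] at h2
            rw [h2, natToTm_tau]
        · rintro rfl
          rw [← natToTm_tau]
          exact HIter.succ ((ihb _).2 rfl) ((hi _ _).2 rfl)
    refine ⟨_, ?_, by simp, by simp, fun _ => rfl⟩
    intro n
    constructor
    · intro h
      generalize hα : tau q = α at h
      cases h with
      | zero => rw [hα] at htp; simp [tp, tyT, omegaT] at htp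
      | succ h1 h2 =>
        subst hα
        rw [htp] at h1; simp [tyT, omegaT] at h1
      | lim h h1 h2 =>
        subst hα
        have := (hit _ _).1 h1
        subst this
        rw [hi] at h2
        rw [h2]; rfl
    · rintro rfl
      exact HRel.lim htp ((hit _ _).2 rfl) ((hi _ _).2 rfl)

theorem hq_nil (k) : hq nil k = k := (HRel_main nil ⟨trivial, by simp [hidx]⟩ k).2.1 (by simp [tpq])
theorem hq_s {q} (h : CT q) (ht : tpq q = Ty.s) (k) : hq q k = hq (fq q nil) k * k :=
  (HRel_main q h k).2.2.1 ht
theorem hq_w {q} (h : CT q) (ht : tpq q = Ty.w) (k) : hq q k = NN q k (k + 1) :=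
  (HRel_main q h k).2.2.2 ht
theorem NN_succ (q k b) : NN q k (b + 1) = hq (fq q (zeros (NN q k b))) k := rfl

end GT

namespace GT
open Q

theorem CT_cases {q} (h : CT q) : q = nil ∨ tpq q = Ty.s ∨ tpq q = Ty.w := by
  cases ht : tpq q with
  | z => exact Or.inl (tpq_z_iff.1 ht)
  | s => simp
  | w => simp
  | W => exact absurd ht (tpq_ne_W h)

theorem hq_ge {k} (hk : 1 ≤ k) : ∀ q, CT q → k ≤ hq q k := by
  refine CT_ind ?_
  intro q hc ih
  rcases CT_cases hc with rfl | ht | ht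
  · rw [hq_nil]
  · rw [hq_s hc ht]
    have := ih _ (hc.s ht nil) (fq_lt_s ht _)
    nlinarith
  · rw [hq_w hc ht, NN_succ]
    exact ih _ (hc.w ht _) (fq_lt_w ht _)

theorem NN_ge {q} (hc : CT q) (ht : tpq q = Ty.w) {k} (hk : 1 ≤ k) {b} (hb : 1 ≤ b) : k ≤ NN q k b := by
  obtain ⟨c, rfl⟩ : ∃ c, b = c + 1 := ⟨b - 1, by omega⟩
  rw [NN_succ]
  exact hq_ge hk _ (hc.w ht _)

theorem fq_s_const {q} (h : tpq q = Ty.s) (x y) : fq q x = fq q y := by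
  obtain ⟨k, a, -, -, h2, -⟩ := decS h
  rw [h2, h2]

theorem Nh {g} (hg : CT g) (ht : tpq g = Ty.w) (x : ℕ) {k} (hk : 2 ≤ k) : ∀ d, CT d →
    fq g (zeros x) ≤ d → d < g → hq (fq g (zeros x)) k ≤ hq d k := by
  refine CT_ind ?_
  intro d hd ih h1 h2
  rcases h1.lt_or_eq with h1 | h1
  swap
  · rw [h1]
  have N := nested ht hg.1 x hd.1 h1 h2
  rcases CT_cases hd with rfl | hs | hw
  · exact absurd h1 (not_lt_nil _)
  · have h3 := N nil (by intro h; rw [hs] at h; cases h)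
    have h4 := fq_lt_s hs nil
    have := ih _ (hd.s hs nil) h4 h3 (h4.trans h2)
    rw [hq_s hd hs]
    nlinarith
  · have hN := NN_ge hd hw (k := k) (b := k) (by omega) (by omega)
    rw [hq_w hd hw, NN_succ]
    have h4 := fq_lt_w hw (NN d k k)
    refine ih _ (hd.w hw _) h4 (N _ fun _ => ⟨NN d k k - 1, ?_⟩) (h4.trans h2)
    congr 1; omega

theorem hq_fq_mono {g} (hg : CT g) (ht : tpq g = Ty.w) {x y : ℕ} (h : x ≤ y) {k} (hk : 2 ≤ k) :
    hq (fq g (zeros x)) k ≤ hq (fq g (zeros y)) k :=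
  Nh hg ht x hk _ (hg.w ht y) (fq_mono ht h) (fq_lt_w ht y)

theorem NN_mono {g} (hg : CT g) (ht : tpq g = Ty.w) {k} (hk : 2 ≤ k) : Monotone (NN g k) := by
  apply monotone_nat_of_le_succ
  intro n
  induction n with
  | zero => simp [NN]
  | succ n ih => rw [NN_succ, NN_succ]; exact hq_fq_mono hg ht ih hk

theorem hq_fq_le {g} (hg : CT g) (ht : tpq g = Ty.w) {k} (hk : 2 ≤ k) {x} (h : x ≤ NN g k k) :
    hq (fq g (zeros x)) k ≤ hq g k := by
  rw [hq_w hg ht, NN_succ]; exact hq_fq_mono hg ht h hk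

theorem sz_fill (k x) : sz (fill k x) = sz (fill k nil) + sz x := by
  induction k <;> simp_all [fill, sz] <;> omega
theorem sz_app (a b) : sz (app a b) = sz a + sz b := by
  induction a <;> simp_all [app, sz]; omega
theorem sz_rep (i a n) : sz (rep i a n) = n * (sz a + 1) := by
  induction n with
  | zero => simp [rep, sz]
  | succ n ih => simp [rep, sz, ih]; ring

theorem sz_fq_w {q} (h : OT 2 q) (ht : tpq q = Ty.w) {n} (hn : 2 ≤ n) : sz q ≤ sz (fq q (zeros n)) := by
  obtain ⟨k, t, hb, rfl⟩ := decw ht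
  rw [fill_fq hb.tp, sz_fill k t, sz_fill k (fq t _)]
  have ho := OT_sub h
  suffices sz t ≤ sz (fq t (zeros n)) by omega
  cases hb with
  | om => rw [fq_om, sz_rep]; simp [sz]; omega
  | su i a hi ha =>
    rw [fq_su hi ha, len_rep, sz_rep]
    obtain ⟨k', c, hk', h1, h2, h3⟩ := decS ha
    have : c = nil := by
      have := ho.arg
      rw [h1] at this
      exact (OT_sub this).zarg
    subst this
    have e : sz a = sz (fq a nil) + 1 := by
      rw [h2]; conv_lhs => rw [h1, h3, sz_app]
      simp [sz]
    simp only [sz]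
    rw [e]; nlinarith
  | co e he =>
    rw [fq_co he, len_rep]
    obtain ⟨k', i, hk', hi, h1, h2⟩ := decW he
    simp only [sz]
    rw [h2, sz_fill]
    have e1 : sz e = sz (fill k' nil) + 1 := by
      conv_lhs => rw [h1, sz_fill]
      simp [sz]
    rw [e1]
    have : 1 ≤ sz (zs (fq e) n) := by
      obtain ⟨m, rfl⟩ : ∃ m, n = m + 1 := ⟨n - 1, by omega⟩
      simp [zs, sz]
    omega

theorem sz_s {q} (h : OT 2 q) (ht : tpq q = Ty.s) (x) : sz q = sz (fq q x) + 1 := by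
  obtain ⟨k', c, hk', h1, h2, h3⟩ := decS ht
  have : c = nil := by
    rw [h1] at h
    exact (OT_sub h).zarg
  subst this
  rw [h2]; conv_lhs => rw [h1, h3, sz_app]
  simp [sz]

theorem hq_sz {k} (hk : 2 ≤ k) : ∀ q, CT q → sz q + k ≤ hq q k := by
  refine CT_ind ?_
  intro q hc ih
  rcases CT_cases hc with rfl | ht | ht
  · rw [hq_nil]; simp [sz]
  · rw [hq_s hc ht, sz_s hc.1 ht nil]
    have := ih _ (hc.s ht nil) (fq_lt_s ht _)
    nlinarith
  · have hN := NN_ge hc ht (k := k) (b := k) (by omega) (by omega)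
    rw [hq_w hc ht, NN_succ]
    have := ih _ (hc.w ht (NN q k k)) (fq_lt_w ht _)
    have := sz_fq_w hc.1 ht (n := NN q k k) (by omega)
    omega

/-! pointwise comparison -/
def sq : Q → Q → Prop
  | nil, nil => True
  | nil, cons j _ s => j = 0 ∧ sq nil s
  | cons _ _ _, nil => False
  | cons i a r, cons j b s => i = j ∧ sq a b ∧ sq r s

theorem sq_refl : ∀ a, sq a a
  | nil => by simp [sq]
  | cons i a r => ⟨rfl, sq_refl a, sq_refl r⟩

theorem sq_trans : ∀ a b c, sq a b → sq b c → sq a c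
  | nil, nil, c => by simp
  | nil, cons j b s, nil => by simp [sq]
  | nil, cons j b s, cons l c t => by
    have := sq_trans nil s t
    simp only [sq]
    rintro ⟨rfl, h1⟩ ⟨rfl, -, h2⟩
    exact ⟨rfl, this h1 h2⟩
  | cons _ _ _, nil, _ => by simp [sq]
  | cons i a r, cons j b s, nil => by simp [sq]
  | cons i a r, cons j b s, cons l c t => by
    have h1 := sq_trans a b c
    have h2 := sq_trans r s t
    simp only [sq]
    rintro ⟨rfl, h3, h4⟩ ⟨rfl, h5, h6⟩
    exact ⟨rfl, h1 h3 h5, h2 h4 h6⟩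

theorem sq_nil_zeros : ∀ n, sq nil (zeros n)
  | 0 => by simp [rep, sq]
  | n + 1 => by rw [zeros_succ]; exact ⟨rfl, sq_nil_zeros n⟩

theorem sq_nil_fq : ∀ {b}, sq nil b → b ≠ nil → tpq b = Ty.s ∧ ∀ x, sq nil (fq b x)
  | nil, _, h => absurd rfl h
  | cons j c s, h, _ => by
    obtain ⟨rfl, h1⟩ := h
    by_cases hs : s = nil
    · subst hs; simp [tpq, fq, sq]
    · rw [tpq_tail hs]
      have := sq_nil_fq h1 hs
      refine ⟨this.1, fun x => ?_⟩
      rw [fq_tail hs]; exact ⟨rfl, this.2 x⟩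

theorem sq_rep {i a b} (h : sq a b) (n) : sq (rep i a n) (rep i b n) := by
  induction n with
  | zero => simp [rep, sq]
  | succ n ih => exact ⟨rfl, h, ih⟩

theorem sq_fq : ∀ {a b : Q}, sq a b →
    (b ≠ nil ∧ tpq b ≠ Ty.W ∧ sq a (fq b (zeros 1))) ∨
    (tpq a = tpq b ∧ ∀ x y, sq x y → len x = len y → sq (fq a x) (fq b y))
  | nil, nil, _ => by right; simp [fq, sq]
  | nil, cons j c s, h => by
    left
    have := sq_nil_fq h (by simp)
    refine ⟨by simp, by simp [this.1], this.2 _⟩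
  | cons _ _ _, nil, h => by simp [sq] at h
  | cons i a r, cons j b s, h => by
    have iha := @sq_fq a b h.2.1
    have ihr := @sq_fq r s h.2.2
    obtain ⟨rfl, h1, h2⟩ := h
    by_cases hs : s = nil
    · subst hs
      have hr : r = nil := by cases r <;> simp_all [sq]
      subst hr
      by_cases hi : i = 0
      · subst hi; right; simp [tpq, fq, sq]
      have hi1 : 1 ≤ i := by omega
      rcases iha with ⟨k1, k2, k3⟩ | ⟨k1, k2⟩
      · left
        cases hb : tpq b with
        | z => exact absurd (tpq_z_iff.1 hb) k1
        | W => exact absurd hb k2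
        | s =>
          refine ⟨by simp, by simp [tpq, hi, hb], ?_⟩
          rw [fq_su hi1 hb, fq_s_const hb nil (zeros 1)]
          exact ⟨rfl, k3, trivial⟩
        | w =>
          refine ⟨by simp, by simp [tpq, hi, hb], ?_⟩
          simp [fq, hi, hb]
          exact ⟨rfl, k3, trivial⟩
      · right
        refine ⟨by simp [tpq, k1], fun x y hxy hl => ?_⟩
        cases hb : tpq b with
        | z => simp [fq, hi, hb, k1, hxy]
        | s =>
          rw [fq_su hi1 hb, fq_su hi1 (k1.trans hb), hl]
          exact sq_rep (k2 nil nil trivial rfl) _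
        | w =>
          simp [fq, hi, hb, k1]; exact ⟨rfl, k2 x y hxy hl, trivial⟩
        | W =>
          by_cases h1 : i = 1
          · subst h1
            rw [fq_co hb, fq_co (k1.trans hb), hl]
            have hz : ∀ n, sq (zs (fq a) n) (zs (fq b) n) ∧ len (zs (fq a) n) = len (zs (fq b) n) := by
              intro n
              induction n with
              | zero => simp [zs, sq]
              | succ n ih => exact ⟨⟨rfl, k2 _ _ ih.1 ih.2, trivial⟩, rfl⟩
            exact ⟨rfl, k2 _ _ (hz _).1 (hz _).2, trivial⟩
          · simp [fq, hi, hb, k1, h1]; exact ⟨rfl, k2 x y hxy hl, trivial⟩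
    · by_cases hr : r = nil
      · subst hr
        left
        have := sq_nil_fq h2 hs
        refine ⟨by simp, by rw [tpq_tail hs]; simp [this.1], ?_⟩
        rw [fq_tail hs]; exact ⟨rfl, h1, this.2 _⟩
      · rcases ihr with ⟨k1, k2, k3⟩ | ⟨k1, k2⟩
        · left
          refine ⟨by simp, by rwa [tpq_tail hs], ?_⟩
          rw [fq_tail hs]; exact ⟨rfl, h1, k3⟩
        · right
          refine ⟨by rwa [tpq_tail hs, tpq_tail hr], fun x y hxy hl => ?_⟩
          rw [fq_tail hs, fq_tail hr]; exact ⟨rfl, h1, k2 x y hxy hl⟩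

theorem hq_sq {k k' : ℕ} (hk : 2 ≤ k) (hkk : k ≤ k') : ∀ b, CT b → ∀ a, CT a → sq a b →
    hq a k ≤ hq b k' ∧ (tpq b = Ty.w → k < k' → hq a k ≤ NN b k' k') := by
  refine CT_ind ?_
  intro b hb ih a ha hab
  rcases sq_fq hab with ⟨h1, h2, h3⟩ | ⟨h1, h2⟩
  · rcases CT_cases hb with rfl | ht | ht
    · exact absurd rfl h1
    · refine ⟨?_, by simp [ht]⟩
      rw [hq_s hb ht, fq_s_const ht nil (zeros 1)]
      have := (ih _ (hb.s ht _) (fq_lt_s ht _) a ha h3).1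
      nlinarith
    · have h4 := (ih _ (hb.w ht _) (fq_lt_w ht _) a ha h3).1
      have h5 : hq a k ≤ NN b k' 2 := by
        rw [NN_succ]
        refine h4.trans (hq_fq_mono hb ht ?_ (by omega))
        have := NN_ge hb ht (k := k') (b := 1) (by omega) le_rfl
        omega
      have h6 := NN_mono hb ht (k := k') (by omega)
      refine ⟨?_, fun _ _ => h5.trans (h6 (by omega))⟩
      rw [hq_w hb ht]
      exact h5.trans (h6 (by omega))
  · rcases CT_cases hb with rfl | ht | ht
    · have : a = nil := by cases a <;> simp_all [sq]
      subst this
      simp [hq_nil, hkk, tpq]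
    · refine ⟨?_, by simp [ht]⟩
      rw [ht] at h1
      rw [hq_s hb ht, hq_s ha h1]
      exact Nat.mul_le_mul (ih _ (hb.s ht _) (fq_lt_s ht _) _ (ha.s h1 nil) (h2 nil nil trivial rfl)).1 hkk
    · rw [ht] at h1
      have h4 : ∀ n, NN a k n ≤ NN b k' n := by
        intro n
        induction n with
        | zero => simp [NN]
        | succ n ihn =>
          rw [NN_succ, NN_succ]
          refine le_trans (ih _ (hb.w ht (NN a k n)) (fq_lt_w ht _) _ (ha.w h1 _)
            (h2 _ _ (sq_refl _) rfl)).1 ?_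
          exact hq_fq_mono hb ht ihn (by omega)
      have h6 := NN_mono hb ht (k := k') (by omega)
      rw [hq_w hb ht, hq_w ha h1]
      exact ⟨(h4 _).trans (h6 (by omega)), fun _ _ => (h4 _).trans (h6 (by omega))⟩

theorem sq_fill {k a b} (h : sq a b) : sq (fill k a) (fill k b) := by
  induction k with
  | id => exact h
  | tl i c k ih => exact ⟨rfl, sq_refl _, ih⟩
  | ar i k ih => exact ⟨rfl, ih, trivial⟩

theorem sq_app_zeros : ∀ a n, sq a (app a (zeros n))
  | nil, n => sq_nil_zeros n
  | cons i a r, n => ⟨rfl, sq_refl _, sq_app_zeros r n⟩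

theorem tp_app {a b} (hb : b ≠ nil) : tpq (app a b) = tpq b := by
  induction a with
  | nil => rfl
  | cons i a r _ ih =>
    simp only [app]; rw [tpq_tail, ih]
    cases r <;> simp_all [app]
theorem fq_app {a b} (hb : b ≠ nil) (x) : fq (app a b) x = app a (fq b x) := by
  induction a with
  | nil => rfl
  | cons i a r _ ih =>
    simp only [app]; rw [fq_tail, ih]
    cases r <;> simp_all [app]
theorem app_nil (a) : app a nil = a := by induction a <;> simp_all [app]

theorem lemQ {k : ℕ} (hk : 2 ≤ k) {i : ℕ} (hi : 1 ≤ i) (ξ : Q) : ∀ n (l : K),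
    CT (fill l (cons i (app ξ (zeros n)) nil)) →
    ∃ D, CT D ∧ sq (fill l (rep i ξ (n + 1))) D ∧ hq D k ≤ hq (fill l (cons i (app ξ (zeros n)) nil)) k := by
  intro n
  induction n with
  | zero =>
    intro l hc
    refine ⟨_, hc, ?_, le_rfl⟩
    rw [show zeros 0 = nil from rfl, app_nil]
    exact sq_refl _
  | succ n ih =>
    intro l hc
    have hs : tpq (app ξ (zeros (n + 1))) = Ty.s := by rw [tp_app (by simp [rep]), tp_zeros]
    have hB : Base (cons i (app ξ (zeros (n + 1))) nil) := Base.su _ _ hi hs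
    have ht := fill_tp (k := l) hB.tp
    have e : fq (fill l (cons i (app ξ (zeros (n + 1))) nil)) (zeros 2) =
        fill (comp l (K.tl i (app ξ (zeros n)) K.id)) (cons i (app ξ (zeros n)) nil) := by
      rw [fill_fq hB.tp, fq_su hi hs, fq_app (by simp [rep]), fq_zeros, fill_comp]
      rfl
    obtain ⟨D, d1, d2, d3⟩ := ih (comp l (K.tl i (app ξ (zeros n)) K.id)) (by rw [← e]; exact hc.w ht 2)
    refine ⟨D, d1, ?_, ?_⟩
    · refine sq_trans _ _ _ ?_ d2
      rw [fill_comp]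
      exact sq_fill ⟨rfl, sq_app_zeros _ _, sq_refl _⟩
    · refine d3.trans ?_
      rw [← e]
      refine hq_fq_le hc ht hk ?_
      exact hk.trans (NN_ge hc ht (by omega) (by omega))

theorem lemQ' {k : ℕ} (hk : 2 ≤ k) {i : ℕ} (hi : 1 ≤ i) (ξ : Q) (n) (l : K)
    (h1 : CT (fill l (cons i (app ξ (zeros n)) nil))) (h2 : CT (fill l (rep i ξ (n + 1)))) :
    hq (fill l (rep i ξ (n + 1))) k ≤ hq (fill l (cons i (app ξ (zeros n)) nil)) k := by
  obtain ⟨D, d1, d2, d3⟩ := lemQ hk hi ξ n l h1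
  exact ((hq_sq hk le_rfl D d1 _ h2 d2).1).trans d3

end GT

namespace GT
open Q

/-- clean lists -/
def OKl : Bool → Bool → Bool → Q → Prop
  | _, _, _, nil => True
  | f, z0, z2, cons i a r => ((i = 0 → z0 = true) ∧ (2 ≤ i → z0 = false)) ∧
      OKl (decide (2 ≤ i)) (decide (2 ≤ i) && z2) false a ∧
      OKl f (decide (i ≤ 1)) (decide (2 ≤ i) && !f && decide (hidx a ≤ 1)) r

theorem ok_zeros {f z2} (n) : OKl f true z2 (zeros n) := by
  induction n generalizing z2 with
  | zero => trivial
  | succ n ih => exact ⟨⟨fun _ => rfl, fun h => by omega⟩, trivial, ih⟩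

theorem ok_z0 {f z0 z0' z2 a} (h : OKl f z0 z2 a)
    (h' : a ≠ nil → (hidx a = 0 → z0' = true) ∧ (2 ≤ hidx a → z0' = false)) : OKl f z0' z2 a := by
  cases a with
  | nil => trivial
  | cons i a r => exact ⟨h' (by simp), h.2⟩

theorem ok_fqs : ∀ {q f z0 z2}, tpq q = Ty.s → OKl f z0 z2 q → ∀ x, OKl f z0 z2 (fq q x)
  | nil, _, _, _, _, _, _ => by simp [fq, OKl]
  | cons i a r, f, z0, z2, ht, h, x => by
    by_cases hr : r = nil
    · subst hr
      have hi : i = 0 := by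
        by_contra hi
        simp only [tpq] at ht
        simp only [ne_eq, not_true_eq_false, if_false, hi] at ht
        revert ht; split <;> try split_ifs
        all_goals simp
      simp [fq, hi, OKl]
    · rw [tpq_tail hr] at ht
      rw [fq_tail hr]
      exact ⟨h.1, h.2.1, ok_fqs ht h.2.2 x⟩

theorem ok_rep {f z0 z2 i a a'} (hf : f = true → z2 = false) (hi : 1 ≤ i)
    (h : OKl f z0 z2 (cons i a nil))
    (ha : OKl (decide (2 ≤ i)) (decide (2 ≤ i) && z2) false a') (n) : OKl f z0 z2 (rep i a' n) := by
  have key : ∀ n, OKl f (decide (i ≤ 1)) (decide (2 ≤ i) && !f && decide (hidx a' ≤ 1)) (rep i a' n) := by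
    intro n
    induction n with
    | zero => trivial
    | succ n ih =>
      refine ⟨⟨fun h => by omega, fun h => by simp; omega⟩, ?_, ih⟩
      refine ok_z0 ha fun hn => ?_
      by_cases h2 : 2 ≤ i
      · cases a' with
        | nil => simp at hn
        | cons j b r =>
          simp only [hidx]
          refine ⟨fun hj => ?_, fun hj => by simp [show ¬ (j ≤ 1) by omega, hidx]⟩
          have := ha.1.1 hj
          simp [h2] at this
          cases f <;> simp_all
      · cases a' with
        | nil => simp at hn
        | cons j b r =>
          simp only [hidx]
          refine ⟨fun hj => ?_, fun hj => by simp [h2]⟩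
          have := ha.1.1 hj
          simp [h2] at this
  cases n with
  | zero => trivial
  | succ n => exact ⟨h.1, ha, key n⟩

theorem ok_W : ∀ {e f z0 z2}, tpq e = Ty.W → OKl f z0 z2 e → ∀ {x}, (∀ f z0 z2, OKl f z0 z2 x) →
    OKl f z0 z2 (fq e x)
  | nil, _, _, _, h, _, _, _ => by simp [tpq] at h
  | cons i a r, f, z0, z2, ht, h, x, hx => by
    by_cases hr : r = nil
    · subst hr
      by_cases hi : i = 0
      · simp [tpq, hi] at ht
      · cases ha : tpq a with
        | z => have : fq (cons i a nil) x = x := by simp [fq, hi, ha]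
               rw [this]; exact hx _ _ _
        | s => simp [tpq, hi, ha] at ht
        | w => simp [tpq, hi, ha] at ht
        | W => have hi1 : i ≠ 1 := by rintro rfl; simp [tpq, ha] at ht
               have : fq (cons i a nil) x = cons i (fq a x) nil := by simp [fq, hi, ha, hi1]
               rw [this]
               exact ⟨h.1, ok_W ha h.2.1 hx, trivial⟩
    · rw [tpq_tail hr] at ht
      rw [fq_tail hr]
      exact ⟨h.1, h.2.1, ok_W ht h.2.2 hx⟩

theorem ok_zs {e} (ht : tpq e = Ty.W) (h : OKl false false false e) : ∀ n f z0 z2,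
    OKl f z0 z2 (zs (fq e) n) := by
  intro n
  induction n with
  | zero => intro f z0 z2; trivial
  | succ n ih =>
    intro f z0 z2
    exact ⟨⟨fun h => by omega, fun h => by omega⟩, by simpa using ok_W ht h ih, trivial⟩

theorem OKB_lift {f z0 z2 i β} {s : Q}
    (h : ∀ α, OKl (decide (2 ≤ i)) (decide (2 ≤ i) && z2) false α → α < β → α < s) :
    ∀ α, OKl f z0 z2 α → α < cons i β nil → α < cons i s nil := by
  intro α ha hlt
  cases α with
  | nil => simp
  | cons j c u =>
    simp only [cons_lt_cons, not_lt_nil, and_false, or_false] at hlt ⊢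
    rcases hlt with hlt | ⟨rfl, hlt⟩
    · exact Or.inl hlt
    · exact Or.inr ⟨rfl, h _ ha.2.1 hlt⟩

theorem OKB_tl {f z0 z2 i b β} {s : Q}
    (h : ∀ α, OKl f (decide (i ≤ 1)) (decide (2 ≤ i) && !f && decide (hidx b ≤ 1)) α → α < β → α < s) :
    ∀ α, OKl f z0 z2 α → α < cons i b β → α < cons i b s := by
  intro α ha hlt
  cases α with
  | nil => simp
  | cons j c u =>
    simp only [cons_lt_cons] at hlt ⊢
    rcases hlt with hlt | ⟨rfl, hlt | ⟨rfl, hlt⟩⟩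
    · exact Or.inl hlt
    · exact Or.inr ⟨rfl, Or.inl hlt⟩
    · exact Or.inr ⟨rfl, Or.inr ⟨rfl, h _ ha.2.2 hlt⟩⟩

def clB (f z0 z2 : Bool) (β : Q) : Prop :=
  ∃ l i ξ, 1 ≤ i ∧ β = fill l (cons i (app ξ (cons 1 nil nil)) nil) ∧
    (∀ n, OKl f z0 z2 (fill l (rep i ξ n))) ∧
    ∀ α, OKl f z0 z2 α → α < β → α < fill l (cons i (app ξ (cons 0 nil nil)) nil)
def clD (f z0 z2 : Bool) (β : Q) : Prop :=
  z0 = false ∧ ∃ ξ, β = app ξ (cons 1 nil nil) ∧ (ξ = nil ∨ 2 ≤ hidx ξ) ∧ OKl f z0 z2 ξ ∧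
    ∀ α, OKl f z0 z2 α → α < β → α < app ξ (cons 0 nil nil)

theorem ok_cl : ∀ {β f z0 z2}, tpq β = Ty.w → (f = true → z2 = false) → OKl f z0 z2 β →
    (∀ n, OKl f z0 z2 (fq β (zeros n))) ∨ clB f z0 z2 β ∨ clD f z0 z2 β
  | nil, _, _, _, h, _, _ => by simp [tpq] at h
  | cons i a r, f, z0, z2, ht, hf, h => by
    by_cases hr : r = nil
    · subst hr
      by_cases hi : i = 0
      · simp [tpq, hi] at ht
      · cases ha : tpq a with
        | z =>
          have hn := tpq_z_iff.1 ha
          subst hn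
          have hi1 : i = 1 := by by_contra h1; simp [tpq, hi, h1] at ht
          subst hi1
          cases z0 with
          | true => left; intro n; rw [fq_om]; exact ok_zeros n
          | false =>
            right; right
            refine ⟨rfl, nil, rfl, Or.inl rfl, trivial, ?_⟩
            intro α h1 h2
            cases α with
            | nil => simp [app]
            | cons j c u =>
              simp [cons_lt_cons] at h2
              exact absurd (h1.1.1 h2) (by simp)
        | s =>
          left; intro n; rw [fq_su (by omega) ha]
          exact ok_rep hf (by omega) h (ok_fqs ha h.2.1 _) _
        | w =>
          have hq : ∀ n, fq (cons i a nil) (zeros n) = cons i (fq a (zeros n)) nil := by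
            intro n; simp [fq, hi, ha]
          obtain ⟨i', rfl⟩ : ∃ i', i = i' + 1 := ⟨i - 1, by omega⟩
          rcases ok_cl ha (by simp) h.2.1 with hA | ⟨l, j, ξ, h1, h2, h3, h4⟩ | ⟨h1, ξ, h2, h3, h4, h5⟩
          · left; intro n; rw [hq]
            exact ⟨h.1, hA n, trivial⟩
          · right; left
            refine ⟨K.ar i' l, j, ξ, h1, by rw [h2]; rfl, fun n => ⟨h.1, h3 n, trivial⟩, ?_⟩
            exact OKB_lift h4
          · right; left
            refine ⟨K.id, i' + 1, ξ, by omega, by rw [h2]; rfl, fun n => ?_, ?_⟩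
            · exact ok_rep hf (by omega) h h4 n
            · exact OKB_lift h5
        | W =>
          have hi1 : i = 1 := by by_contra h1; simp [tpq, hi, ha, h1] at ht
          subst hi1
          left; intro n; rw [fq_co ha]
          exact ⟨h.1, by simpa using ok_W ha (by simpa using h.2.1) (ok_zs ha (by simpa using h.2.1) _), trivial⟩
    · have ht' := ht
      rw [tpq_tail hr] at ht'
      rcases ok_cl ht' (by intro h; simp [h]) h.2.2 with hA | ⟨l, j, ξ, h1, h2, h3, h4⟩ | ⟨h1, ξ, h2, h3, h4, h5⟩
      · left; intro n; rw [fq_tail hr]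
        exact ⟨h.1, h.2.1, hA n⟩
      · right; left
        exact ⟨K.tl i a l, j, ξ, h1, by rw [h2]; rfl, fun n => ⟨h.1, h.2.1, h3 n⟩, OKB_tl h4⟩
      · right; right
        have hi2 : 2 ≤ i := by simp at h1; omega
        exact ⟨h.1.2 hi2, cons i a ξ, by rw [h2]; rfl, Or.inr hi2, ⟨h.1, h.2.1, h4⟩, OKB_tl h5⟩

/-- the index set of the Hardy hierarchy -/
def CD (q : Q) : Prop := CT q ∧ OKl false false false q

theorem CD.s {q} (h : CD q) (ht : tpq q = Ty.s) (x) : CD (fq q x) := ⟨h.1.s ht x, ok_fqs ht h.2 x⟩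

/-- completeness of the comparison -/
theorem TLt_hd {i a r j b s} (h : TLt (tau (cons i a nil)) (tau (cons j b nil))) :
    TLt (tau (cons i a r)) (tau (cons j b s)) := by
  by_cases hr : r = nil ∧ s = nil
  · rw [hr.1, hr.2]; exact h
  · refine TLt.lex_hd ?_ ?_
    · rw [not_and_or] at hr
      rcases hr with hr | hr
      · left; rw [tau_cons hr]; trivial
      · right; rw [tau_cons hr]; trivial
    · rw [hd_tau, hd_tau]; exact h

theorem complete : ∀ {q r f z0 z0' z2}, ZA q → ZA r → OKl f z0 z2 q → OKl f z0' z2 r →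
    (q ≠ nil → hidx q = 0 → hidx r ≤ 1) → q < r → TLt (tau q) (tau r)
  | _, nil, _, _, _, _, _, _, _, _, _, h => by simp at h
  | nil, cons j b s, _, _, _, _, _, _, _, _, _, _ => TLt.zero_lt (by rw [Ne, tau_zero_iff]; simp)
  | cons i a r, cons j b s, f, z0, z0', z2, hz, hz', h1, h2, h3, h => by
    have h3 := h3 (by simp)
    simp only [hidx] at h3
    rcases cons_lt_cons.1 h with hij | ⟨rfl, hab | ⟨rfl, hrs⟩⟩
    · apply TLt_hd
      rw [tau_single, tau_single]
      rcases i with _ | i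
      · have : j = 1 := by have := h3 rfl; omega
        subst this
        exact TLt.one_lt_psi0
      · obtain ⟨j, rfl⟩ : ∃ j', j = j' + 1 := ⟨j - 1, by omega⟩
        exact TLt.psi_lt (by omega)
    · apply TLt_hd
      rw [tau_single, tau_single]
      rcases i with _ | i
      · rw [hz.2.1 rfl, hz'.2.1 rfl] at hab; simp at hab
      · refine TLt.psi_mono (complete hz.2.2.1 hz'.2.2.1 h1.2.1 h2.2.1 ?_ hab)
        intro hn h0
        by_contra h4
        have e1 : (decide (2 ≤ i+1) && z2) = true := by
          cases a with
          | nil => simp at hn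
          | cons => exact h1.2.1.1.1 h0
        have e2 : (decide (2 ≤ i+1) && z2) = false := by
          cases b with
          | nil => simp [hidx] at h4
          | cons => exact h2.2.1.1.2 (by simp only [hidx] at h4; omega)
        rw [e1] at e2; simp at e2
    · have hs : s ≠ nil := by rintro rfl; simp at hrs
      refine TLt.lex_tl (Or.inr (by rw [tau_cons hs]; trivial)) (by rw [hd_tau, hd_tau]) ?_
      rw [tl_tau, tl_tau]
      refine complete hz.2.2.2 hz'.2.2.2 h1.2.2 h2.2.2 ?_ hrs
      intro hn h0
      by_contra h4
      have e1 : decide (i ≤ 1) = true := by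
        cases r with
        | nil => simp at hn
        | cons => exact h1.2.2.1.1 h0
      have e2 : decide (i ≤ 1) = false := by
        cases s with
        | nil => simp at hs
        | cons => exact h2.2.2.1.2 (by simp only [hidx] at h4; omega)
      rw [e1] at e2; simp at e2

end GT

namespace GT
open Q

theorem mG1 {i a r γ} : γ ∈ G1 (tau (cons i a r)) ↔ γ ∈ G1 (pr i (tau a)) ∨ γ ∈ G1 (tau r) := by
  by_cases hr : r = nil
  · subst hr; rw [tau_single]; simp [tau, G1]
  · rw [tau_cons hr]; simp [G1]
theorem mG0 {i a r γ} : γ ∈ G0 (tau (cons i a r)) ↔ γ ∈ G0 (pr i (tau a)) ∨ γ ∈ G0 (tau r) := by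
  by_cases hr : r = nil
  · subst hr; rw [tau_single]; simp [tau, G0]
  · rw [tau_cons hr]; simp [G0]

theorem lt2 {f z2 a} (h : OKl f false z2 a) (hz : ZA a) : TLt (tau a) Omega2T := by
  cases a with
  | nil => exact TLt.zero_lt (by simp [Omega2T])
  | cons i a r =>
    have : Omega2T = tau (cons 3 nil nil) := by simp [tau, pr, Omega2T]
    rw [this]
    apply TLt_hd
    have h0 : i ≠ 0 := fun h0 => by have := h.1.1 h0; simp at this
    obtain ⟨i, rfl⟩ : ∃ i', i = i' + 1 := ⟨i - 1, by omega⟩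
    have := hz.1
    rw [tau_single, tau_single]
    exact TLt.psi_lt (show i < 2 by omega)

theorem lt1 {c z2 f} (h : OKl f false false c) (hz : ZA c) (hz2 : z2 = false) :
    TLt (tau c) (Tm.psi 1 Omega2T) := by
  cases c with
  | nil => exact TLt.zero_lt (by simp)
  | cons i a r =>
    have : Tm.psi 1 Omega2T = tau (cons 2 (cons 3 nil nil) nil) := by simp [tau, pr, Omega2T]
    rw [this]
    apply TLt_hd
    have h0 : i ≠ 0 := fun h0 => by have := h.1.1 h0; simp at this
    have := hz.1
    rw [tau_single, tau_single]
    obtain rfl | rfl : i = 1 ∨ i = 2 := by omega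
    · exact TLt.psi_lt (show (0:ℕ) < 1 by norm_num)
    · refine TLt.psi_mono ?_
      have h3 := lt2 (by simpa using h.2.1) hz.2.2.1
      simpa [Omega2T, tau, pr] using h3

theorem selfarg : ∀ {c : Q}, OT 2 c → ∀ r, c < cons 2 c r
  | nil, _, _ => by simp
  | cons j d s, h, r => by
    rcases h.idx.lt_or_eq with hj | rfl
    · exact cons_lt_cons.2 (Or.inl hj)
    · exact cons_lt_cons.2 (Or.inr ⟨rfl, Or.inl (selfarg h.arg s)⟩)

theorem hd_ok {f z2 a} (h : OKl f false z2 a) (hn : a ≠ nil) (h0 : hidx a = 0) : False := by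
  cases a with
  | nil => simp at hn
  | cons i a r => have := h.1.1 h0; simp at this

theorem g1 {a z'} (ha : OKl true z' false a) (hz : ZA a) : ∀ {p z0}, OT 2 p → OKl true z0 false p → p ≤ a →
    ∀ γ ∈ G1 (tau p), TLt γ (tau a)
  | nil, _, _, _, _, γ, h => by simp [tau, G1] at h
  | cons i c r, z0, ho, h, hle, γ, hg => by
    rcases mG1.1 hg with hg | hg
    · have hi := ho.idx
      obtain rfl | rfl | rfl : i = 0 ∨ i = 1 ∨ i = 2 := by omega
      · simp [pr, G1] at hg
      · simp [pr, G1] at hg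
      · simp only [pr, G1, Finset.mem_insert] at hg
        have hc : c < cons 2 c r := selfarg ho.arg r
        have hcc : OKl true false false c := by simpa using h.2.1
        rcases hg with rfl | hg
        · exact complete ho.arg.za hz hcc ha (fun h1 h2 => (hd_ok hcc h1 h2).elim) (hc.trans_le hle)
        · exact g1 ha hz ho.arg hcc (hc.le.trans hle) γ hg
    · exact g1 ha hz ho.tail (by simpa using h.2.2) ((hdle_cons_lt ho).le.trans hle) γ hg

theorem g0 {P : Tm → Prop} {a : Q} (hP : ∀ c, OT 2 c → OKl false false false c → c < a → P (tau c)) :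
    ∀ {p f z0 z2}, OT 2 p → OKl f z0 z2 p → GB 1 p a → ∀ γ ∈ G0 (tau p), P γ
  | nil, _, _, _, _, _, _, γ, h => by simp [tau, G0] at h
  | cons i c r, f, z0, z2, ho, h, hgb, γ, hg => by
    rcases mG0.1 hg with hg | hg
    · have hi := ho.idx
      obtain rfl | rfl | rfl : i = 0 ∨ i = 1 ∨ i = 2 := by omega
      · simp [pr, G0] at hg
      · simp only [pr, G0, Finset.mem_insert] at hg
        rcases hg with rfl | hg
        · exact hP c ho.arg (by simpa using h.2.1) ((hgb.1 le_rfl).1 rfl)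
        · exact g0 hP ho.arg h.2.1 (hgb.1 le_rfl).2 γ hg
      · simp only [pr, G0] at hg
        exact g0 hP ho.arg h.2.1 (hgb.1 (by omega)).2 γ hg
    · exact g0 hP ho.tail h.2.2 hgb.2 γ hg

theorem inOT : ∀ {q f z0 z2}, OT 2 q → OKl f z0 z2 q → (f = true → z2 = false) →
    InT (tau q) ∧ InOT (tau q)
  | nil, _, _, _, _, _, _ => ⟨InT.zero, InOT.zero⟩
  | cons i a r, f, z0, z2, ho, h, hf => by
    have iha := inOT ho.arg h.2.1 (by simp)
    have ihr := inOT ho.tail h.2.2 (by intro h; simp [h])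
    have hi := ho.idx
    have hp : InT (pr i (tau a)) ∧ InOT (pr i (tau a)) := by
      obtain rfl | rfl | rfl : i = 0 ∨ i = 1 ∨ i = 2 := by omega
      · exact ⟨InT.one, InOT.one⟩
      · have h2 : OKl false false false a := by simpa using h.2.1
        refine ⟨InT.psi (i := 0) (by norm_num) iha.1, InOT.psi0 iha.2 ?_ (lt2 h2 ho.arg.za)⟩
        refine g0 ?_ ho.arg h2 (ho.gb (by omega))
        intro c h3 h4 h5
        exact complete h3.za ho.arg.za h4 h2 (fun h6 h7 => (hd_ok h4 h6 h7).elim) h5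
      · refine ⟨InT.psi (i := 1) (by norm_num) iha.1, InOT.psi1 iha.2 ?_⟩
        exact g1 (z' := z2) (by simpa using h.2.1) ho.arg.za (z0 := z2) ho.arg (by simpa using h.2.1) le_rfl
    by_cases hr : r = nil
    · subst hr; rw [tau_single]; exact hp
    · rw [tau_cons hr]
      have hT : InT ((pr i (tau a)).add (tau r)) := by
        refine InT.add ?_ hp.1 ihr.1 (by rw [Ne, tau_zero_iff]; exact hr) ?_
        · rcases i with _ | i <;> simp [pr, Tm.IsPrincipal]
        · cases r with
          | nil => simp at hr
          | cons j b s =>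
            rw [hd_tau, tau_single]
            have hrr := h.2.2
            rcases ho.hdl with hj | ⟨rfl, hba⟩
            · left
              rcases j with _ | j
              · have := hrr.1.1 rfl
                have : i = 1 := by simp at this; omega
                subst this
                exact TLt.one_lt_psi0
              · obtain ⟨i, rfl⟩ : ∃ i', i = i' + 1 := ⟨i - 1, by omega⟩
                exact TLt.psi_lt (by omega)
            · rcases hba.lt_or_eq with hba | rfl
              · left
                rcases j with _ | j
                · rw [ho.zarg] at hba; simp at hba
                · refine TLt.psi_mono (complete ho.tail.arg.za ho.arg.za hrr.2.1 h.2.1 ?_ hba)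
                  intro hb h0
                  by_contra h1
                  have h1' : ¬ (hidx a ≤ 1) := h1
                  have h2 := hrr.2.1
                  simp only [h1', decide_false, Bool.and_false] at h2
                  exact hd_ok h2 hb h0
              · right; rfl
      exact ⟨hT, InOT.add hT hp.2 ihr.2⟩

theorem CD_in {q} (h : CD q) : InOT0 (tau q) ∧ TLt (tau q) OmegaT := by
  have hh : ∀ c, OT 2 c → OKl false false false c → TLt (tau c) (Tm.psi 1 Omega2T) := fun c h1 h2 =>
    lt1 h2 h1.za rfl
  refine ⟨⟨(inOT h.1.1 h.2 (by simp)).2, hh q h.1.1 h.2, ?_⟩, ?_⟩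
  · exact g0 (a := cons 3 nil nil) (fun c h1 h2 _ => hh c h1 h2) h.1.1 h.2 (GB_top h.1.1)
  · have : OmegaT = tau (cons 2 nil nil) := by simp [tau, pr, OmegaT]
    rw [this]
    cases q with
    | nil => exact TLt.zero_lt (by simp [tau, pr])
    | cons i a r =>
      apply TLt_hd
      have hi : i = 1 := by
        have h1 := h.1.2
        simp only [hidx] at h1
        by_contra h2
        have := h.2.1.1 (by omega)
        simp at this
      subst hi
      rw [tau_single, tau_single]
      exact TLt.psi_lt (show (0:ℕ) < 1 by norm_num)

theorem CD_lt {q r} (h : CD q) (h' : CD r) : TLt (tau q) (tau r) ↔ q < r :=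
  ⟨fun hh => sound hh q r h.1.1.za h'.1.1.za rfl rfl,
   fun hh => complete h.1.1.za h'.1.1.za h.2 h'.2 (fun h6 h7 => (hd_ok h.2 h6 h7).elim) hh⟩

/-! converse -/
def hh : Tm → Tm
  | .add a _ => hh a
  | t => t
theorem hh_hd (t) : hh (Tm.hd t) = hh t := by cases t <;> rfl

theorem hh_mono {t s} (h : TLt t s) : ∀ {i c}, hh t = Tm.psi i c → ∃ j c', i ≤ j ∧ hh s = Tm.psi j c' := by
  induction h with
  | zero_lt _ => intro i c h; simp [hh] at h
  | one_lt_psi0 => intro i c h; simp [hh] at h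
  | psi_mono _ _ => intro i c h; simp only [hh, Tm.psi.injEq] at h; exact ⟨_, _, h.1.ge, rfl⟩
  | psi_lt hij => intro i c h; simp only [hh, Tm.psi.injEq] at h; exact ⟨_, _, by omega, rfl⟩
  | lex_hd _ _ ih => intro i c h; rw [← hh_hd] at h; have := ih h; rwa [hh_hd] at this
  | lex_tl _ he _ _ => intro i c h; rw [← hh_hd, he, hh_hd] at h; exact ⟨_, _, le_rfl, h⟩
theorem hh_one {t s} (h : TLt t s) : hh t = Tm.one → hh s = Tm.one ∨ ∃ c', hh s = Tm.psi 0 c' := by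
  induction h with
  | zero_lt _ => intro h; simp [hh] at h
  | one_lt_psi0 => intro h; exact Or.inr ⟨_, rfl⟩
  | psi_mono _ _ => intro h; simp [hh] at h
  | psi_lt hij => intro h; simp [hh] at h
  | lex_hd _ _ ih => intro h; rw [← hh_hd] at h; have := ih h; rwa [hh_hd] at this
  | lex_tl _ he _ _ => intro h; rw [← hh_hd, he, hh_hd] at h; exact Or.inl h

def HS (t : Tm) : Prop := ∀ i c, hh t = Tm.psi i c → i ≤ 1
theorem HS_lt {t s} (h : TLt t s) (hs : HS s) : HS t := by
  intro i c hc
  obtain ⟨j, c', h1, h2⟩ := hh_mono h hc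
  exact h1.trans (hs _ _ h2)
theorem HS_O2 {t s} (h : TLt t s) : s = Omega2T → HS t := by
  induction h with
  | zero_lt _ => intro _ i c h; simp [hh] at h
  | one_lt_psi0 => intro _ i c h; simp [hh] at h
  | psi_mono h _ => intro e; simp only [Omega2T, Tm.psi.injEq] at e; rw [e.2] at h; exact (TLt_zero h).elim
  | psi_lt hij => intro e i c h; simp only [hh, Tm.psi.injEq, Omega2T] at h e; omega
  | lex_hd _ _ ih => rintro rfl i c h; rw [← hh_hd] at h; exact ih rfl _ _ h
  | lex_tl _ _ h _ => rintro rfl; exact (TLt_zero h).elim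
theorem E_inv {t s} (h : TLt t s) : s = Tm.psi 1 Omega2T → ∀ c, hh t = Tm.psi 1 c → TLt c Omega2T := by
  induction h with
  | zero_lt _ => intro _ c h; simp [hh] at h
  | one_lt_psi0 => intro _ c h; simp [hh] at h
  | psi_mono h _ => intro e c hc; simp only [hh, Tm.psi.injEq] at e hc; rw [← hc.2, ← e.2]; exact h
  | psi_lt hij => intro e c h; simp only [hh, Tm.psi.injEq] at h e; omega
  | lex_hd _ _ ih => rintro rfl c h; rw [← hh_hd] at h; exact ih rfl _ h
  | lex_tl _ _ h _ => rintro rfl; exact (TLt_zero h).elim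

def NP : Tm → Prop
  | .zero => True
  | .one => True
  | .psi i a => i ≤ 1 ∧ NP a
  | .add a b => NP a ∧ NP b

theorem prin_hh {a} (h : Tm.IsPrincipal a) : hh a = a := by cases a <;> simp_all [Tm.IsPrincipal, hh]

theorem psi_inv {i a b} (h : TLt (Tm.psi i a) (Tm.psi i b)) : TLt a b := by
  cases h with
  | psi_mono h => exact h
  | psi_lt h => omega
  | lex_hd h _ => simp [Tm.isAdd] at h
  | lex_tl h _ _ => simp [Tm.isAdd] at h

theorem npb : ∀ {b}, InOT b → HS b → (∀ c, hh b = Tm.psi 1 c → HS c) → ∀ γ ∈ G1 b, HS γ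
  | .zero, _, _, _, γ, h => by simp [G1] at h
  | .one, _, _, _, γ, h => by simp [G1] at h
  | .psi i a, ho, h1, h2, γ, h => by
    have := h1 i a rfl
    obtain rfl | rfl : i = 0 ∨ i = 1 := by omega
    · simp [G1] at h
    · simp only [G1, Finset.mem_insert] at h
      have ha := h2 a rfl
      rcases h with rfl | h
      · exact ha
      · cases ho with
        | psi1 _ hg => exact HS_lt (hg _ h) ha
  | .add a b, ho, h1, h2, γ, h => by
    cases ho with
    | add hT hoa hob =>
      cases hT with
      | add hp _ _ _ hle =>
        simp only [G1, Finset.mem_union] at h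
        rcases h with h | h
        · exact npb hoa h1 h2 γ h
        · refine npb hob ?_ ?_ γ h
          · intro i c hc
            rw [← hh_hd] at hc
            rcases hle with hle | hle
            · exact HS_lt hle h1 i c hc
            · rw [hle] at hc; exact h1 i c hc
          · intro c hc
            rw [← hh_hd] at hc
            rcases hle with hle | hle
            · obtain ⟨j, c', h3, h4⟩ := hh_mono hle hc
              have h5 := h1 j c' h4
              obtain rfl : j = 1 := by omega
              have h6 := h2 c' h4
              rw [prin_hh hp] at h4
              have hb : Tm.hd b = Tm.psi 1 c := by
                cases b with
                | add x y =>
                  rename_i hTb _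
                  cases hTb with
                  | add hp' => simp only [Tm.hd] at hc ⊢; rw [prin_hh hp'] at hc; exact hc
                | psi i a => exact hc
                | zero => simp [Tm.hd, hh] at hc
                | one => simp [Tm.hd, hh] at hc
              rw [hb, h4] at hle
              exact HS_lt (psi_inv hle) h6
            · rw [hle] at hc; exact h2 c hc

theorem npl : ∀ {t}, InOT t → HS t → (∀ γ ∈ G1 t, HS γ) → (∀ γ ∈ G0 t, TLt γ (Tm.psi 1 Omega2T)) → NP t
  | .zero, _, _, _, _ => trivial
  | .one, _, _, _, _ => trivial
  | .psi i b, ho, h1, h2, h3 => by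
    have := h1 i b rfl
    refine ⟨this, ?_⟩
    obtain rfl | rfl : i = 0 ∨ i = 1 := by omega
    · cases ho with
      | psi0 hb hg _ =>
        simp only [G0, Finset.mem_insert, forall_eq_or_imp] at h3
        have hsb : HS b := HS_lt h3.1 (by intro i c h; simp only [hh, Tm.psi.injEq] at h; omega)
        exact npl hb hsb (npb hb hsb fun c hc => HS_O2 (E_inv h3.1 rfl c hc) rfl) h3.2
    · cases ho with
      | psi1 hb hg =>
        simp only [G1, Finset.mem_insert, forall_eq_or_imp] at h2
        exact npl hb h2.1 h2.2 h3
  | .add a b, ho, h1, h2, h3 => by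
    simp only [G1, G0, Finset.mem_union] at h2 h3
    cases ho with
    | add hT hoa hob =>
      refine ⟨npl hoa h1 (fun γ h => h2 γ (Or.inl h)) (fun γ h => h3 γ (Or.inl h)),
        npl hob ?_ (fun γ h => h2 γ (Or.inr h)) (fun γ h => h3 γ (Or.inr h))⟩
      cases hT with
      | add hp _ _ _ hle =>
        intro i c hc
        rw [← hh_hd] at hc
        rcases hle with hle | hle
        · exact HS_lt hle h1 i c hc
        · rw [hle] at hc; exact h1 i c hc

theorem tau_inv : ∀ {t}, InOT t → NP t → ∃ q, ZA q ∧ tau q = t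
  | .zero, _, _ => ⟨nil, trivial, rfl⟩
  | .one, _, _ => ⟨cons 0 nil nil, ⟨by omega, by simp, trivial, trivial⟩, rfl⟩
  | .psi i b, ho, h => by
    have hb : InOT b := by cases ho <;> assumption
    obtain ⟨q, h1, h2⟩ := tau_inv hb h.2
    have := h.1
    exact ⟨cons (i+1) q nil, ⟨by omega, by simp, h1, trivial⟩, by rw [tau_single, h2]; rfl⟩
  | .add a b, ho, h => by
    cases ho with
    | add hT hoa hob =>
      cases hT with
      | add hp _ _ hb _ =>
        obtain ⟨q, h1, h2⟩ := tau_inv hoa h.1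
        obtain ⟨r, h3, h4⟩ := tau_inv hob h.2
        have hr : r ≠ nil := by rintro rfl; exact hb h4.symm
        cases q with
        | nil => rw [← h2] at hp; simp [tau, Tm.IsPrincipal] at hp
        | cons i c s =>
          have : s = nil := by
            by_contra hs
            rw [tau_cons hs] at h2; rw [← h2] at hp; simp [Tm.IsPrincipal] at hp
          subst this
          refine ⟨cons i c r, ⟨h1.1, h1.2.1, h1.2.2.1, h3⟩, ?_⟩
          rw [tau_cons hr, h4, ← h2, tau_single]

theorem GB_of {a : Q} (hz : ZA a) : ∀ {p}, ZA p → (∀ γ ∈ G0 (tau p), TLt γ (tau a)) → GB 1 p a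
  | nil, _, _ => trivial
  | cons i c r, hp, h => by
    refine ⟨fun hi => ⟨?_, ?_⟩, GB_of hz hp.2.2.2 fun γ hg => h γ (mG0.2 (Or.inr hg))⟩
    · rintro rfl
      exact sound (h (tau c) (mG0.2 (Or.inl (by simp [pr, G0])))) _ _ hp.2.2.1 hz rfl rfl
    · refine GB_of hz hp.2.2.1 fun γ hg => h γ (mG0.2 (Or.inl ?_))
      have := hp.1
      obtain rfl | rfl : i = 1 ∨ i = 2 := by omega
      · simp [pr, G0, hg]
      · simp [pr, G0, hg]

theorem InOT_parts {i a r} (hz : ZA (cons i a r)) (h : InOT (tau (cons i a r))) :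
    InOT (pr i (tau a)) ∧ InOT (tau a) ∧ InOT (tau r) ∧
      (r ≠ nil → TLe (Tm.hd (tau r)) (pr i (tau a))) := by
  have key : ∀ {i a}, ZA (cons i a nil) → InOT (pr i (tau a)) → InOT (tau a) := by
    intro i a hz h
    rcases i with _ | i
    · rw [hz.2.1 rfl]; exact InOT.zero
    · simp only [pr] at h
      cases h <;> assumption
  by_cases hr : r = nil
  · subst hr
    rw [tau_single] at h
    exact ⟨h, key hz h, InOT.zero, fun h => absurd rfl h⟩
  · rw [tau_cons hr] at h
    cases h with
    | add hT h1 h2 =>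
      refine ⟨h1, key ⟨hz.1, hz.2.1, hz.2.2.1, trivial⟩ h1, h2, fun _ => ?_⟩
      cases hT with
      | add _ _ _ _ h => exact h

theorem OT_of : ∀ {q}, ZA q → InOT (tau q) → OT 2 q
  | nil, _, _ => trivial
  | cons i a r, hz, h => by
    obtain ⟨h1, h2, h3, h4⟩ := InOT_parts hz h
    refine ⟨hz.1, hz.2.1, OT_of hz.2.2.1 h2, OT_of hz.2.2.2 h3, ?_, ?_⟩
    · cases r with
      | nil => trivial
      | cons j b s =>
        have h4 := h4 (by simp)
        rw [hd_tau, ← tau_single] at h4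
        have z1 : ZA (cons j b nil) := ⟨hz.2.2.2.1, hz.2.2.2.2.1, hz.2.2.2.2.2.1, trivial⟩
        have z2 : ZA (cons i a nil) := ⟨hz.1, hz.2.1, hz.2.2.1, trivial⟩
        rcases h4 with h4 | h4
        · exact hdle_of_lt (r := cons j b s) (i := i) (a := a) (by
            have := sound h4 _ _ z1 z2 rfl rfl
            simp only [cons_lt_cons, not_lt_nil, and_false, or_false] at this ⊢
            exact this)
        · have := tau_inj z1 z2 h4
          simp only [cons.injEq] at this
          exact Or.inr ⟨this.1, this.2.1.le⟩
    · rintro ⟨h5, h6⟩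
      obtain rfl : i = 1 := by omega
      simp only [pr] at h1
      cases h1 with
      | psi0 _ hg _ => exact GB_of hz.2.2.1 hz.2.2.1 hg

theorem hh_tau (i a r) : hh (tau (cons i a r)) = pr i (tau a) := by
  by_cases hr : r = nil
  · subst hr; rw [tau_single]; rcases i with _ | i <;> rfl
  · rw [tau_cons hr]; rcases i with _ | i <;> rfl

theorem hh_tau_one {q} (h : q ≠ nil) (h0 : hidx q = 0) : hh (tau q) = Tm.one := by
  cases q with
  | nil => simp at h
  | cons i a r => simp only [hidx] at h0; subst h0; rw [hh_tau]; rfl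

theorem nz {q r} (h : TLt (tau q) (tau r)) (hn : q ≠ nil) (h0 : hidx q = 0) : hidx r ≤ 1 := by
  have := hh_one h (hh_tau_one hn h0)
  cases r with
  | nil => simp [hidx]
  | cons j b s =>
    rw [hh_tau] at this
    rcases j with _ | j
    · simp [hidx]
    · simp [pr] at this; simp [hidx, this]

theorem G1_empty : ∀ {q}, OT 2 q → hidx q ≤ 1 → ∀ γ, γ ∉ G1 (tau q)
  | nil, _, _, γ => by simp [tau, G1]
  | cons i a r, ho, h, γ => by
    intro hg
    simp only [hidx] at h
    rcases mG1.1 hg with hg | hg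
    · obtain rfl | rfl : i = 0 ∨ i = 1 := by omega
      · simp [pr, G1] at hg
      · simp [pr, G1] at hg
    · exact G1_empty ho.tail ((hidx_tail ho).trans h) γ hg

theorem OK_of : ∀ {q f z0 z2}, OT 2 q → InOT (tau q) →
    (q ≠ nil → (hidx q = 0 → z0 = true) ∧ (2 ≤ hidx q → z0 = false)) →
    (f = false → ∀ a r, q = cons 2 a r → a ≠ nil → (hidx a = 0 → z2 = true) ∧ (2 ≤ hidx a → z2 = false)) →
    (f = true → z2 = false ∧ ∀ γ ∈ G1 (tau q), hh γ ≠ Tm.one) →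
    (∀ γ ∈ G0 (tau q), TLt γ (Tm.psi 1 Omega2T)) → OKl f z0 z2 q
  | nil, _, _, _, _, _, _, _, _, _ => trivial
  | cons i a r, f, z0, z2, ho, hI, H2, H3, H4, H5 => by
    obtain ⟨h1, h2, h3, h4⟩ := InOT_parts ho.za hI
    refine ⟨H2 (by simp), ?_, ?_⟩
    · have hi := ho.idx
      obtain rfl | rfl | rfl : i = 0 ∨ i = 1 ∨ i = 2 := by omega
      · rw [ho.zarg]; trivial
      · have hE := H5 (tau a) (mG0.2 (Or.inl (by simp [pr, G0])))
        have hEe : Tm.psi 1 Omega2T = tau (cons 2 (cons 3 nil nil) nil) := by simp [tau, pr, Omega2T]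
        have : OKl false false false a := by
          refine OK_of ho.arg h2 ?_ ?_ (by simp) fun γ hg => H5 γ (mG0.2 (Or.inl (by simp [pr, G0, hg])))
          · refine fun hn => ⟨fun h0 => ?_, fun _ => rfl⟩
            rw [hEe] at hE
            have := nz hE hn h0
            simp [hidx] at this
          · rintro - b s rfl hb
            refine ⟨fun h0 => ?_, fun _ => rfl⟩
            have := E_inv hE rfl (tau b) (by rw [hh_tau]; rfl)
            have h3 := hh_one this (hh_tau_one hb h0)
            simp [hh, Omega2T] at h3
        simpa using this
      · simp only [pr] at h1
        have hg1 : ∀ γ ∈ G1 (tau a), hh γ ≠ Tm.one := by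
          intro γ hg he
          cases h1 with
          | psi1 _ hb =>
            have h6 := hh_one (hb γ hg) he
            have : hidx a ≤ 1 := by
              cases a with
              | nil => simp [hidx]
              | cons j b s =>
                rw [hh_tau] at h6
                rcases j with _ | j
                · simp [hidx]
                · simp [pr] at h6; simp [hidx, h6]
            exact G1_empty ho.arg this γ hg
        have : OKl true z2 false a := by
          refine OK_of ho.arg h2 ?_ (by simp) (fun _ => ⟨rfl, hg1⟩) fun γ hg => H5 γ (mG0.2 (Or.inl (by simp [pr, G0, hg])))
          intro hn
          cases f with
          | false => exact H3 rfl a r rfl hn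
          | true =>
            have H4 := H4 rfl
            refine ⟨fun h0 => ?_, fun _ => H4.1⟩
            exact absurd (hh_tau_one hn h0) (H4.2 (tau a) (mG1.2 (Or.inl (by simp [pr, G1]))))
        simpa using this
    · refine OK_of ho.tail h3 ?_ ?_ ?_ fun γ hg => H5 γ (mG0.2 (Or.inr hg))
      · intro hn
        have h4 := h4 hn
        cases r with
        | nil => simp at hn
        | cons j b s =>
          simp only [hidx]
          refine ⟨?_, fun h => ?_⟩
          · rintro rfl
            rw [hd_tau, ← tau_single] at h4
            rcases h4 with h4 | h4
            · simpa [hidx] using nz h4 (by simp) rfl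
            · rcases i with _ | i
              · simp
              · simp [tau, pr] at h4
          · have := hidx_tail ho; simp only [hidx] at this; simp; omega
      · rintro hff b s rfl hb
        have h4 := h4 (by simp)
        have hi2 : i = 2 := by have := ho.idx; have := hidx_tail ho; simp only [hidx] at this; omega
        subst hi2
        have hba : b ≤ a := by
          rcases ho.hdl with h | h
          · omega
          · exact h.2
        have := hidx_mono hba
        simp only [hff]
        refine ⟨fun h0 => ?_, fun h5 => ?_⟩
        · rw [hd_tau, tau_single] at h4
          have : hidx a ≤ 1 := by
            rcases h4 with h4 | h4
            · exact nz (psi_inv h4) hb h0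
            · simp only [pr, Tm.psi.injEq, true_and] at h4
              have := tau_inj ho.tail.arg.za ho.arg.za h4
              rw [← this, h0]; omega
          simp [this]
        · simp; omega
      · intro hff
        refine ⟨by simp [hff], fun γ hg => (H4 hff).2 γ (mG1.2 (Or.inr hg))⟩

theorem CD_of {t} (h : InOT0 t) (ht : TLt t OmegaT) : ∃ q, CD q ∧ tau q = t := by
  obtain ⟨h1, h2, h3⟩ := h
  have hs : HS t := HS_lt h2 (by intro i c h; simp only [hh, Tm.psi.injEq] at h; omega)
  have hnp := npl h1 hs (npb h1 hs fun c hc => HS_O2 (E_inv h2 rfl c hc) rfl) h3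
  obtain ⟨q, hz, rfl⟩ := tau_inv h1 hnp
  have ho := OT_of hz h1
  have hO : OmegaT = tau (cons 2 nil nil) := by simp [tau, pr, OmegaT]
  rw [hO] at ht
  have hlt := sound ht q (cons 2 nil nil) hz ⟨by omega, by simp, trivial, trivial⟩ rfl rfl
  have hx : hidx q ≤ 1 := by
    cases q with
    | nil => simp [hidx]
    | cons i a r => simp [cons_lt_cons] at hlt; simp only [hidx]; omega
  refine ⟨q, ⟨⟨ho, hx⟩, OK_of ho h1 ?_ ?_ (by simp) h3⟩, rfl⟩
  · refine fun hn => ⟨fun h0 => ?_, fun _ => rfl⟩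
    have := nz ht hn h0
    simp [hidx] at this
  · rintro - a r rfl
    simp [hidx] at hx

end GT

namespace GT
open Q

def ZB : Q → Prop
  | nil => True
  | cons i a r => (i = 0 → a = nil ∧ r = zeros (len r)) ∧ ZB a ∧ ZB r

theorem OT.zb {L} : ∀ {q : Q}, OT L q → ZB q
  | nil, _ => trivial
  | cons i a r, h => by
    refine ⟨?_, h.arg.zb, h.tail.zb⟩
    rintro rfl
    refine ⟨h.zarg, hidx0_zeros h.tail ?_⟩
    have := hidx_tail h
    omega

def bb (φ : ℕ → ℕ) : Bool → Q → Q
  | _, nil => nil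
  | f, cons i a r => if i = 0 then zeros (if f then φ (len r) + 1 else φ (len r + 1))
      else cons i (bb φ (f && decide (r = nil)) a) (bb φ f r)

def SM (φ : ℕ → ℕ) : Prop := StrictMono φ ∧ φ 0 = 0

theorem SM.ge {φ} (h : SM φ) (n) : n ≤ φ n := h.1.le_apply

@[simp] theorem bb_nil (φ f) : bb φ f nil = nil := rfl
theorem bb_pos {φ f i a r} (hi : 1 ≤ i) :
    bb φ f (cons i a r) = cons i (bb φ (f && decide (r = nil)) a) (bb φ f r) := by
  simp only [bb]; rw [if_neg (by omega)]
theorem bb_false {φ i a r} (hi : 1 ≤ i) :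
    bb φ false (cons i a r) = cons i (bb φ false a) (bb φ false r) := by
  rw [bb_pos hi]; simp
theorem bb_single {φ f i a} (hi : 1 ≤ i) :
    bb φ f (cons i a nil) = cons i (bb φ f a) nil := by
  rw [bb_pos hi]; simp
theorem bb_tl {φ i a r} (hi : 1 ≤ i) (hr : r ≠ nil) :
    bb φ true (cons i a r) = cons i (bb φ false a) (bb φ true r) := by
  rw [bb_pos hi]; simp [hr]
theorem bb_zero {φ f a r} (h : SM φ) : ∃ n, bb φ f (cons 0 a r) = zeros (n + 1) := by
  simp only [bb, if_true]
  cases f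
  · have := h.ge (len r + 1)
    exact ⟨φ (len r + 1) - 1, by congr 1; simp; omega⟩
  · exact ⟨φ (len r), by simp⟩
theorem bb_zeros {φ} (h : SM φ) (n) : bb φ false (zeros n) = zeros (φ n) := by
  cases n with
  | zero => simp [rep, h.2]
  | succ n => rw [zeros_succ]; simp [bb, len_rep]

theorem bb_nil_iff {φ f q} (h : SM φ) : bb φ f q = nil ↔ q = nil := by
  cases q with
  | nil => simp
  | cons i a r =>
    rcases Nat.eq_zero_or_pos i with rfl | hi
    · obtain ⟨n, hn⟩ := bb_zero (φ := φ) (f := f) (a := a) (r := r) h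
      rw [hn]; simp [rep]
    · rw [bb_pos hi]; simp

theorem bb_hidx {φ f q} (h : SM φ) : hidx (bb φ f q) = hidx q := by
  cases q with
  | nil => simp
  | cons i a r =>
    rcases Nat.eq_zero_or_pos i with rfl | hi
    · obtain ⟨n, hn⟩ := bb_zero (φ := φ) (f := f) (a := a) (r := r) h
      rw [hn]; simp [rep, hidx]
    · rw [bb_pos hi]; simp [hidx]

theorem bb_tf {φ} (h : SM φ) : ∀ q, bb φ true q ≤ bb φ false q
  | nil => by simp
  | cons i a r => by
    rcases Nat.eq_zero_or_pos i with rfl | hi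
    · simp only [bb, if_true]
      rw [zeros_le]
      have := h.1 (Nat.lt_succ_self (len r))
      simp; omega
    · rw [bb_false hi]
      by_cases hr : r = nil
      · subst hr
        rw [bb_single hi]; simpa using bb_tf h a
      · rw [bb_tl hi hr]; simpa using bb_tf h r

theorem bb_ft {φ f q} (h : SM φ) : bb φ f q ≤ bb φ false q := by
  cases f
  · exact le_rfl
  · exact bb_tf h q
theorem bb_ft' {φ f q} (h : SM φ) : bb φ true q ≤ bb φ f q := by
  cases f
  · exact bb_tf h q
  · exact le_rfl

theorem bb_lt0 {φ} (h : SM φ) : ∀ {a g : Q}, ZB a → ZB g → a < g → bb φ false a < bb φ true g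
  | _, nil, _, _, hl => by simp at hl
  | nil, cons j b s, _, _, _ => by
    rw [bb_nil, nil_lt_iff, Ne, bb_nil_iff h]; simp
  | cons i a r, cons j b s, ha, hg, hl => by
    rcases cons_lt_cons.1 hl with hij | ⟨rfl, hm⟩
    · rw [bb_pos (i := j) (by omega)]
      apply lt_of_hidx
      rw [bb_hidx h]; exact hij
    · rcases Nat.eq_zero_or_pos i with rfl | hi
      · obtain ⟨h1, h2⟩ := ha.1 rfl
        obtain ⟨h3, h4⟩ := hg.1 rfl
        simp only [h1, h3, lt_self_iff_false, true_and, false_or] at hm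
        rw [h2, h4, zeros_lt] at hm
        simp only [bb, if_true]
        rw [zeros_lt]
        have := h.1.monotone (show len r + 1 ≤ len s from hm)
        simp; omega
      · rw [bb_pos hi, bb_pos hi, cons_lt_cons]
        refine Or.inr ⟨rfl, ?_⟩
        rcases hm with hm | ⟨rfl, hm⟩
        · left
          simp only [Bool.false_and, Bool.true_and]
          exact lt_of_lt_of_le (bb_lt0 h ha.2.1 hg.2.1 hm) (bb_ft' h)
        · right
          have hs : s ≠ nil := by rintro rfl; simp at hm
          exact ⟨by simp [hs], bb_lt0 h ha.2.2 hg.2.2 hm⟩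

theorem bb_lt {φ f f' a g} (h : SM φ) (ha : ZB a) (hg : ZB g) (hl : a < g) :
    bb φ f a < bb φ f' g :=
  lt_of_le_of_lt (bb_ft h) (lt_of_lt_of_le (bb_lt0 h ha hg hl) (bb_ft' h))
theorem bb_le {φ a g} (h : SM φ) (ha : ZB a) (hg : ZB g) (hl : a ≤ g) :
    bb φ false a ≤ bb φ false g := by
  rcases hl.lt_or_eq with hl | rfl
  · exact (bb_lt h ha hg hl).le
  · exact le_rfl
theorem bb_lt_iff {φ a g} (h : SM φ) (ha : ZB a) (hg : ZB g) :
    bb φ false a < bb φ false g ↔ a < g :=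
  ⟨fun hl => not_le.1 fun h' => absurd hl (not_lt.2 (bb_le h hg ha h')), bb_lt h ha hg⟩

theorem bb_GB {φ c} (h : SM φ) (hc : ZB c) : ∀ {q}, ZB q → GB 1 q c →
    GB 1 (bb φ false q) (bb φ false c)
  | nil, _, _ => trivial
  | cons i a r, hq, hg => by
    rcases Nat.eq_zero_or_pos i with rfl | hi
    · obtain ⟨n, hn⟩ := bb_zero (φ := φ) (f := false) (a := a) (r := r) h
      rw [hn]; exact GB_zeros _ _
    · rw [bb_false hi]
      exact ⟨fun _ => ⟨fun e => bb_lt h hq.2.1 hc ((hg.1 hi).1 e), bb_GB h hc hq.2.1 (hg.1 hi).2⟩,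
        bb_GB h hc hq.2.2 hg.2⟩

theorem bb_OT {φ} (h : SM φ) : ∀ {q}, OT 2 q → OT 2 (bb φ false q)
  | nil, _ => trivial
  | cons i a r, ho => by
    rcases Nat.eq_zero_or_pos i with rfl | hi
    · obtain ⟨n, hn⟩ := bb_zero (φ := φ) (f := false) (a := a) (r := r) h
      rw [hn]; exact OT_zeros _ _
    · rw [bb_false hi]
      refine ⟨ho.idx, by omega, bb_OT h ho.arg, bb_OT h ho.tail, ?_, ?_⟩
      · have h1 := ho.hdl
        have h2 := ho.tail
        cases r with
        | nil => trivial
        | cons j b s =>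
          rcases Nat.eq_zero_or_pos j with rfl | hj
          · obtain ⟨n, hn⟩ := bb_zero (φ := φ) (f := false) (a := b) (r := s) h
            rw [hn]; exact Or.inl hi
          · rw [bb_false hj]
            rcases h1 with h1 | h1
            · exact Or.inl h1
            · exact Or.inr ⟨h1.1, bb_le h h2.arg.zb ho.arg.zb h1.2⟩
      · intro hi2
        obtain rfl : i = 1 := by omega
        exact bb_GB h ho.arg.zb ho.arg.zb (ho.gb hi2)

theorem bb_OK {φ F} (h : SM φ) : ∀ {q f z0 z2}, OKl f z0 z2 q → OKl f z0 z2 (bb φ F q)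
  | nil, _, _, _, _ => trivial
  | cons i a r, f, z0, z2, ho => by
    rcases Nat.eq_zero_or_pos i with rfl | hi
    · obtain ⟨n, hn⟩ := bb_zero (φ := φ) (f := F) (a := a) (r := r) h
      rw [hn, ho.1.1 rfl]; exact ok_zeros _
    · rw [bb_pos hi]
      refine ⟨ho.1, bb_OK h ho.2.1, ?_⟩
      rw [bb_hidx h]; exact bb_OK h ho.2.2

theorem bb_OK' {φ F} (h : SM φ) : ∀ {q f z0 z2}, ZB q → OKl f z0 z2 (bb φ F q) → OKl f z0 z2 q
  | nil, _, _, _, _, _ => trivial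
  | cons i a r, f, z0, z2, hz, ho => by
    rcases Nat.eq_zero_or_pos i with rfl | hi
    · obtain ⟨n, hn⟩ := bb_zero (φ := φ) (f := F) (a := a) (r := r) h
      rw [hn] at ho
      obtain ⟨h1, h2⟩ := hz.1 rfl
      have h3 : z0 = true := ho.1.1 rfl
      rw [h1, h2, h3, ← zeros_succ]; exact ok_zeros _
    · rw [bb_pos hi] at ho
      refine ⟨ho.1, bb_OK' h hz.2.1 ho.2.1, ?_⟩
      have := ho.2.2
      rw [bb_hidx h] at this; exact bb_OK' h hz.2.2 this

theorem bb_CD {φ q} (h : SM φ) (hq : CD q) : CD (bb φ false q) :=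
  ⟨⟨bb_OT h hq.1.1, by rw [bb_hidx h]; exact hq.1.2⟩, bb_OK h hq.2⟩

theorem bb_GB' {φ c F'} (h : SM φ) (hc : ZB c) : ∀ {q F}, ZB q → sz q ≤ sz c →
    GB 1 (bb φ F q) (bb φ F' c) → GB 1 q c
  | nil, _, _, _, _ => trivial
  | cons i a r, F, hq, hs, hg => by
    simp only [sz] at hs
    refine ⟨fun hi => ?_, ?_⟩
    · rw [bb_pos hi] at hg
      refine ⟨fun e => ?_, bb_GB' h hc hq.2.1 (by omega) (hg.1 hi).2⟩
      have h1 := (hg.1 hi).1 e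
      rcases lt_trichotomy a c with h2 | h2 | h2
      · exact h2
      · subst h2; omega
      · exact absurd h1 (not_lt.2 (bb_lt h hc hq.2.1 h2).le)
    · rcases Nat.eq_zero_or_pos i with rfl | hi
      · rw [(hq.1 rfl).2]; exact GB_zeros _ _
      · rw [bb_pos hi] at hg
        exact bb_GB' h hc hq.2.2 (by omega) hg.2

theorem bb_OT' {φ} (h : SM φ) : ∀ {q F}, ZB q → OT 2 (bb φ F q) → OT 2 q
  | nil, _, _, _ => trivial
  | cons i a r, F, hz, ho => by
    rcases Nat.eq_zero_or_pos i with rfl | hi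
    · obtain ⟨h1, h2⟩ := hz.1 rfl
      rw [h1, h2, ← zeros_succ]; exact OT_zeros _ _
    · rw [bb_pos hi] at ho
      refine ⟨ho.idx, by omega, bb_OT' h hz.2.1 ho.arg, bb_OT' h hz.2.2 ho.tail, ?_, ?_⟩
      · have h1 := ho.hdl
        have hz2 := hz.2.2
        cases r with
        | nil => trivial
        | cons j b s =>
          rcases Nat.eq_zero_or_pos j with rfl | hj
          · exact Or.inl hi
          · rw [bb_pos hj] at h1
            rcases h1 with h1 | h1
            · exact Or.inl h1
            · exact Or.inr ⟨h1.1, not_lt.1 fun h3 => absurd h1.2 (not_le.2 (bb_lt h hz.2.1 hz2.2.1 h3))⟩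
      · intro hi2
        obtain rfl : i = 1 := by omega
        exact bb_GB' h hz.2.1 hz.2.1 le_rfl (ho.gb hi2)

theorem bb_CD' {φ q F} (h : SM φ) (hz : ZB q) (hq : CD (bb φ F q)) : CD q :=
  ⟨⟨bb_OT' h hz hq.1.1, by have := hq.1.2; rwa [bb_hidx h] at this⟩, bb_OK' h hz hq.2⟩

def wt : Q → ℕ
  | nil => 0
  | cons i a r => wt a + wt r + if i = 0 then 0 else 1
theorem wt_zeros (n) : wt (zeros n) = 0 := by
  induction n with
  | zero => rfl
  | succ n ih => rw [zeros_succ]; simp [wt, ih]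
theorem wt_bb {φ F} (h : SM φ) : ∀ {q}, ZB q → wt (bb φ F q) = wt q := by
  intro q
  induction q generalizing F with
  | nil => simp
  | cons i a r iha ihr =>
    intro hz
    rcases Nat.eq_zero_or_pos i with rfl | hi
    · obtain ⟨n, hn⟩ := bb_zero (φ := φ) (f := F) (a := a) (r := r) h
      obtain ⟨h1, h2⟩ := hz.1 rfl
      rw [hn, h1, h2, ← zeros_succ, wt_zeros, wt_zeros]
    · rw [bb_pos hi]; simp [wt, iha hz.2.1, ihr hz.2.2]
theorem wt_sz : ∀ q, wt q ≤ sz q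
  | nil => le_rfl
  | cons i a r => by
    have := wt_sz a; have := wt_sz r
    simp only [wt, sz]; split_ifs <;> omega

theorem sq_zeros : ∀ {m n}, m ≤ n → sq (zeros m) (zeros n)
  | 0, n, _ => sq_nil_zeros n
  | m + 1, 0, h => by omega
  | m + 1, n + 1, h => ⟨rfl, trivial, sq_zeros (by omega)⟩

theorem sq_bb {φ F} (h : SM φ) : ∀ {q}, ZB q → sq q (bb φ F q) := by
  intro q
  induction q generalizing F with
  | nil => simp [sq]
  | cons i a r iha ihr =>
    intro hz
    rcases Nat.eq_zero_or_pos i with rfl | hi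
    · obtain ⟨h1, h2⟩ := hz.1 rfl
      rw [h1, h2, ← zeros_succ]
      simp only [zeros_succ, bb, if_true, len_rep]
      rw [← zeros_succ]
      apply sq_zeros
      have := h.ge (len r); have := h.ge (len r + 1)
      cases F <;> simp <;> omega
    · rw [bb_pos hi]
      exact ⟨rfl, iha hz.2.1, ihr hz.2.2⟩

theorem ZB_app0 : ∀ {c}, ZB c → ZB (app c (cons 0 nil nil))
  | nil, _ => ⟨fun _ => ⟨rfl, rfl⟩, trivial, trivial⟩
  | cons i a r, h => by
    refine ⟨fun hi => ?_, h.2.1, ZB_app0 h.2.2⟩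
    refine ⟨(h.1 hi).1, ?_⟩
    have : ∀ n, app (zeros n) (cons 0 nil nil) = zeros (n + 1) := by
      intro n
      induction n with
      | zero => rfl
      | succ n ih => rw [zeros_succ n]; simp only [app, ih]; rfl
    rw [(h.1 hi).2, this, len_rep]

theorem len_app0 : ∀ c, len (app c (cons 0 nil nil)) = len c + 1
  | nil => rfl
  | cons i a r => by simp [app, len, len_app0 r]
theorem app_ne {c d} (h : d ≠ nil) : app c d ≠ nil := by
  cases c
  · exact h
  · simp [app]
theorem app_zeros (n) : app (zeros n) (cons 0 nil nil) = zeros (n + 1) := by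
  induction n with
  | zero => rfl
  | succ n ih => rw [zeros_succ n]; simp only [app, ih]; rfl

theorem bb_app0 {φ} (h : SM φ) : ∀ {c}, ZB c →
    bb φ true (app c (cons 0 nil nil)) = app (bb φ false c) (cons 0 nil nil)
  | nil, _ => by simp [app, bb, len, h.2, rep]
  | cons i a r, hz => by
    rcases Nat.eq_zero_or_pos i with rfl | hi
    · obtain ⟨h1, h2⟩ := hz.1 rfl
      simp only [app, bb, if_true, len_app0]
      simp [app_zeros]
    · simp only [app]
      rw [bb_tl hi (app_ne (by simp)), bb_false hi, bb_app0 h hz.2.2]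
      rfl

end GT

namespace GT
open Q

def LP (φ : ℕ → ℕ) (s t : Q) : Prop := ∀ α, OT 2 α → s ≤ bb φ false α → bb φ false α < t →
  ∃ γ, ZB γ ∧ t = bb φ true γ ∧ α < γ

def tl1 : K → Prop
  | K.id => True
  | K.tl i b k => 1 ≤ i ∧ tl1 k ∧ ZB b
  | K.ar _ k => tl1 k

theorem hidx_fill {t} (ht : 1 ≤ hidx t) : ∀ {k}, OT 2 (fill k t) → 1 ≤ hidx (fill k t)
  | K.id, _ => ht
  | K.tl i b k, h => by
    have h1 := hidx_fill ht (k := k) h.tail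
    have := hidx_tail h
    simp only [fill, hidx] at *; omega
  | K.ar i k, h => by simp [fill, hidx]

theorem tl1_of {t} (ht : 1 ≤ hidx t) : ∀ {k}, OT 2 (fill k t) → tl1 k
  | K.id, _ => trivial
  | K.tl _ _ _, h => ⟨hidx_fill ht h, tl1_of ht h.tail, h.arg.zb⟩
  | K.ar _ k, h => tl1_of ht (k := k) h.arg

theorem LP_fill {φ s t} (h : SM φ) (hl : LP φ s t) : ∀ {k}, tl1 k → LP φ (fill k s) (fill k t)
  | K.id, _ => hl
  | K.tl i b k, hk => by
    intro α ho h1 h2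
    simp only [fill] at h1 h2
    cases α with
    | nil => simp at h1; exact absurd h1 (by simp)
    | cons j a r =>
      have hj : j = i := by
        have e1 := hidx_mono h1
        have e2 := hidx_mono h2.le
        rw [bb_hidx h] at e1 e2
        simp only [hidx] at e1 e2; omega
      subst hj
      rw [bb_false hk.1] at h1 h2
      rw [cons_le_cons] at h1
      rw [cons_lt_cons] at h2
      simp only [lt_self_iff_false, true_and, false_or] at h1 h2
      have hb : b = bb φ false a := by
        rcases h1 with h1 | h1
        · rcases h2 with h2 | h2
          · exact absurd h2 (not_lt.2 h1.le)
          · exact h2.1.symm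
        · exact h1.1
      subst hb
      simp only [lt_self_iff_false, true_and, false_or] at h1 h2
      obtain ⟨γ, hz, e, hlt⟩ := LP_fill h hl hk.2.1 r ho.tail h1 h2
      have hn : γ ≠ nil := by rintro rfl; simp at hlt
      refine ⟨cons j a γ, ⟨fun e => absurd hk.1 (by omega), ho.arg.zb, hz⟩, ?_, by simpa using hlt⟩
      rw [bb_tl hk.1 hn, ← e]; rfl
  | K.ar i k, hk => by
    intro α ho h1 h2
    simp only [fill] at h1 h2
    cases α with
    | nil => simp at h1; exact absurd h1 (by simp)
    | cons j a r =>
      have hj : j = i + 1 := by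
        have e1 := hidx_mono h1
        have e2 := hidx_mono h2.le
        rw [bb_hidx h] at e1 e2
        simp only [hidx] at e1 e2; omega
      subst hj
      rw [bb_false (by omega)] at h1 h2
      rw [cons_le_cons] at h1
      rw [cons_lt_cons] at h2
      simp only [lt_self_iff_false, true_and, false_or, not_lt_nil, and_false, or_false] at h1 h2
      have h3 : fill k s ≤ bb φ false a := by
        rcases h1 with h1 | h1
        · exact h1.le
        · exact h1.1.le
      obtain ⟨γ, hz, e, hlt⟩ := LP_fill h hl (k := k) hk a ho.arg h3 h2
      refine ⟨cons (i + 1) γ nil, ⟨by omega, hz, trivial⟩, ?_, ?_⟩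
      · rw [bb_single (by omega), ← e]; rfl
      · rw [cons_lt_cons]; exact Or.inr ⟨rfl, Or.inl hlt⟩

theorem LP_pt {φ s i} (h : SM φ) (hi : 1 ≤ i) : LP φ s (cons i nil nil) := by
  intro α ho h1 h2
  refine ⟨cons i nil nil, ⟨by omega, trivial, trivial⟩, by rw [bb_single hi]; rfl, ?_⟩
  apply lt_of_hidx
  have h3 := hidx_mono h2.le
  rw [bb_hidx h] at h3
  rcases Nat.lt_or_eq_of_le h3 with h3 | h3
  · exact h3
  · exfalso
    cases α with
    | nil => simp [hidx] at h3; omega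
    | cons j a r =>
      simp only [hidx] at h3
      subst h3
      rw [bb_false hi, cons_lt_cons] at h2
      simp at h2

theorem s_app {a} (ha : tpq a = Ty.s) (ho : OT 2 a) : a = app (fq a nil) (cons 0 nil nil) := by
  obtain ⟨k, b, -, e, e1, e2⟩ := decS ha
  have hb : b = nil := by
    have := OT_sub (k := k) (e ▸ ho)
    exact this.zarg
  subst hb
  rw [e1, ← e2, ← e]

theorem lt_app : ∀ {c d : Q}, d ≠ nil → c < app c d
  | nil, d, h => nil_lt_iff.2 h
  | cons i a r, d, h => by simpa [app] using lt_app h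

theorem LP_w {φ β} (h : SM φ) (ht : tpq β = Ty.w) (ho : OT 2 β) {x : ℕ} (hx : 1 ≤ x) :
    LP φ (fq β (zeros x)) β := by
  obtain ⟨k, t, hb, rfl⟩ := decw ht
  rw [fill_fq hb.tp]
  have hot := OT_sub ho
  have h1 : 1 ≤ hidx t := by cases hb <;> simp [hidx]; assumption
  refine LP_fill h ?_ (tl1_of h1 ho)
  cases hb with
  | om => exact LP_pt h le_rfl
  | su i a hi ha =>
    rw [fq_su hi ha]
    obtain ⟨x, rfl⟩ : ∃ y, x = y + 1 := ⟨x - 1, by omega⟩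
    rw [len_rep]
    intro α hα h2 h3
    have hs := succ_max ha hot.arg
    have hsa := s_app ha hot.arg
    generalize fq a nil = c at *
    simp only [rep] at h2
    cases α with
    | nil => exact absurd h2 (by simp)
    | cons j b r =>
      have hj : j = i := by
        have e1 := hidx_mono h2
        have e2 := hidx_mono h3.le
        rw [bb_hidx h] at e1 e2
        simp only [hidx] at e1 e2; omega
      subst hj
      rw [bb_false hi] at h2 h3
      rw [cons_le_cons] at h2
      rw [cons_lt_cons] at h3
      simp only [lt_self_iff_false, true_and, false_or, not_lt_nil, and_false, or_false] at h2 h3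
      have h4 := hs _ h3
      have h5 : bb φ false b = c := by
        rcases h2 with h2 | h2
        · exact absurd h2 (not_lt.2 h4)
        · exact h2.1.symm
      refine ⟨cons j (app b (cons 0 nil nil)) nil, ⟨by omega, ZB_app0 hα.arg.zb, trivial⟩, ?_, ?_⟩
      · rw [bb_single hi, bb_app0 h hα.arg.zb, h5, ← hsa]
      · rw [cons_lt_cons]; exact Or.inr ⟨rfl, Or.inl (lt_app (by simp))⟩
  | co a ha =>
    obtain ⟨k, i, -, hi, e1, e2⟩ := decW ha
    rw [fq_co ha, e2]
    have h2 : OT 2 (fill (K.ar 0 k) (cons i nil nil)) := by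
      rw [e1] at hot; exact hot
    have := LP_fill h (LP_pt (s := zs (fq a) (len (zeros x))) h (show 1 ≤ i by omega)) (tl1_of (by simp [hidx]; omega) h2)
    simp only [fill] at this
    rwa [← e1] at this

theorem app_fill : ∀ ξ, ∃ k, ∀ x, app ξ x = fill k x
  | nil => ⟨K.id, fun _ => rfl⟩
  | cons i a r => by
    obtain ⟨k, hk⟩ := app_fill r
    exact ⟨K.tl i a k, fun x => by simp [app, fill, hk]⟩

theorem LP_clB {φ l i ξ} (h : SM φ) (hi : 1 ≤ i)
    (ho : OT 2 (fill l (cons i (app ξ (cons 1 nil nil)) nil))) :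
    LP φ (fill l (cons i ξ nil)) (fill l (cons i (app ξ (cons 1 nil nil)) nil)) := by
  obtain ⟨k, hk⟩ := app_fill ξ
  obtain ⟨i, rfl⟩ : ∃ j, i = j + 1 := ⟨i - 1, by omega⟩
  have e : ∀ x, fill l (cons (i + 1) (app ξ x) nil) = fill (comp l (K.ar i k)) x := by
    intro x; rw [fill_comp]; simp [fill, hk]
  have e0 := e nil
  rw [app_nil] at e0
  rw [e] at ho ⊢
  rw [e0]
  exact LP_fill h (LP_pt h le_rfl) (tl1_of (by simp [hidx]) ho)

theorem wt_rep {i ξ} (hi : 1 ≤ i) : ∀ u, OT 2 u → u < cons i (app ξ (cons 0 nil nil)) nil →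
    u < rep i ξ (wt u + 1)
  | nil, _, _ => by simp [rep]
  | cons j b r, ho, hl => by
    simp only [rep]
    rw [cons_lt_cons] at hl ⊢
    rcases hl with hl | ⟨rfl, hl | ⟨-, hl⟩⟩
    · exact Or.inl hl
    · refine Or.inr ⟨rfl, ?_⟩
      rcases (lt_app0 hl rfl).lt_or_eq with h1 | rfl
      · exact Or.inl h1
      · refine Or.inr ⟨rfl, ?_⟩
        have h2 : r < cons j (app b (cons 0 nil nil)) nil := by
          have := ho.hdl
          cases r with
          | nil => simp
          | cons j' b' r' =>
            rw [cons_lt_cons]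
            rcases this with h | h
            · exact Or.inl h
            · exact Or.inr ⟨h.1, Or.inl (lt_of_le_of_lt h.2 hl)⟩
        refine lt_of_lt_of_le (wt_rep hi r ho.tail h2) (rep_le ?_)
        simp only [wt]; rw [if_neg (by omega)]; omega
    · simp at hl

theorem wt_fill {i ξ} (hi : 1 ≤ i) : ∀ (l : K) (u : Q), OT 2 u →
    u < fill l (cons i (app ξ (cons 0 nil nil)) nil) → u < fill l (rep i ξ (wt u + 1))
  | K.id, u, ho, hl => wt_rep hi u ho hl
  | K.tl j b l, nil, ho, hl => by simp [fill]
  | K.tl j b l, cons j' b' r, ho, hl => by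
    simp only [fill] at hl ⊢
    rw [cons_lt_cons] at hl ⊢
    rcases hl with hl | ⟨rfl, hl | ⟨rfl, hl⟩⟩
    · exact Or.inl hl
    · exact Or.inr ⟨rfl, Or.inl hl⟩
    · refine Or.inr ⟨rfl, Or.inr ⟨rfl, lt_of_lt_of_le (wt_fill hi l r ho.tail hl) ?_⟩⟩
      rw [fill_le]; apply rep_le; simp only [wt]; omega
  | K.ar j l, nil, ho, hl => by simp [fill]
  | K.ar j l, cons j' b' r, ho, hl => by
    simp only [fill] at hl ⊢
    rw [cons_lt_cons] at hl ⊢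
    rcases hl with hl | ⟨rfl, hl | ⟨rfl, hl⟩⟩
    · exact Or.inl hl
    · refine Or.inr ⟨rfl, Or.inl (lt_of_lt_of_le (wt_fill hi l b' ho.arg hl) ?_)⟩
      rw [fill_le]; apply rep_le; simp only [wt]; omega
    · simp at hl

/-! transfer -/
def TR (φ : ℕ → ℕ) (s s' : Q) : Prop := ∀ δ, OT 2 δ → δ < s → bb φ false δ < s'

def bK (φ : ℕ → ℕ) : K → K
  | K.id => K.id
  | K.tl i b k => K.tl i (bb φ false b) (bK φ k)
  | K.ar i k => K.ar i (bK φ k)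

theorem bb_fill {φ t} (ht : t ≠ nil) : ∀ {k}, tl1 k →
    bb φ true (fill k t) = fill (bK φ k) (bb φ true t)
  | K.id, _ => rfl
  | K.tl i b k, hk => by
    simp only [fill, bK]
    rw [bb_tl hk.1 (fill_ne ht), bb_fill ht hk.2.1]
  | K.ar i k, hk => by
    simp only [fill, bK]
    rw [bb_single (by omega), bb_fill ht (k := k) hk]

theorem TR_fill {φ s s'} (h : SM φ) (ht : TR φ s s') : ∀ {k}, tl1 k →
    TR φ (fill k s) (fill (bK φ k) s')
  | K.id, _ => ht
  | K.tl i b k, hk => by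
    intro δ ho hl
    simp only [fill, bK] at hl ⊢
    cases δ with
    | nil => simp
    | cons j d r =>
      rcases cons_lt_cons.1 hl with hm | ⟨rfl, hm | ⟨rfl, hm⟩⟩
      · apply lt_of_hidx; rw [bb_hidx h]; exact hm
      · rw [bb_false hk.1, cons_lt_cons]
        exact Or.inr ⟨rfl, Or.inl (bb_lt h ho.arg.zb hk.2.2 hm)⟩
      · rw [bb_false hk.1, cons_lt_cons]
        exact Or.inr ⟨rfl, Or.inr ⟨rfl, TR_fill h ht hk.2.1 _ ho.tail hm⟩⟩
  | K.ar i k, hk => by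
    intro δ ho hl
    simp only [fill, bK] at hl ⊢
    cases δ with
    | nil => simp
    | cons j d r =>
      rcases cons_lt_cons.1 hl with hm | ⟨rfl, hm | ⟨rfl, hm⟩⟩
      · apply lt_of_hidx; rw [bb_hidx h]; exact hm
      · rw [bb_false (by omega), cons_lt_cons]
        exact Or.inr ⟨rfl, Or.inl (TR_fill h ht (k := k) hk _ ho.arg hm)⟩
      · simp at hm

theorem bb_ne {φ f q} (h : SM φ) (hq : q ≠ nil) : bb φ f q ≠ nil := by rwa [Ne, bb_nil_iff h]

theorem TR_w {φ γ} (h : SM φ) (ht : tpq γ = Ty.w) (ho : OT 2 γ) :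
    tpq (bb φ true γ) = Ty.w ∧ ∀ y y', (∀ c < y, φ c < y') →
      TR φ (fq γ (zeros y)) (fq (bb φ true γ) (zeros y')) := by
  obtain ⟨k, t, hb, rfl⟩ := decw ht
  have hot := OT_sub ho
  have h1 : 1 ≤ hidx t := by cases hb <;> simp [hidx]; assumption
  have hk := tl1_of h1 ho
  have htn : t ≠ nil := by rintro rfl; simp [hidx] at h1
  rw [bb_fill htn hk]
  suffices hs : tpq (bb φ true t) = Ty.w ∧ ∀ y y', (∀ c < y, φ c < y') →
      TR φ (fq t (zeros y)) (fq (bb φ true t) (zeros y')) by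
    refine ⟨fill_tp hs.1, fun y y' hy => ?_⟩
    rw [fill_fq hb.tp, fill_fq hs.1]
    exact TR_fill h (hs.2 y y' hy) hk
  have hyy : ∀ y y', (∀ c < y, φ c < y') → y ≤ y' := by
    intro y y' hy
    rcases Nat.eq_zero_or_pos y with rfl | hp
    · omega
    · have := hy (y - 1) (by omega)
      have := h.ge (y - 1)
      omega
  cases hb with
  | om =>
    rw [bb_single le_rfl]
    refine ⟨Base.om.tp, fun y y' hy δ hδ hl => ?_⟩
    rw [bb_nil, fq_om] at *
    have h2 : hidx δ = 0 := by
      have := hidx_mono hl.le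
      have h3 : hidx (zeros y) = 0 := by cases y <;> simp [rep, hidx]
      omega
    have h3 := hidx0_zeros hδ h2
    rw [h3] at hl ⊢
    rw [zeros_lt] at hl
    rw [bb_zeros h, zeros_lt]
    exact hy _ hl
  | su i a hi ha =>
    have hsa := s_app ha hot.arg
    have hzc : ZB (fq a nil) := (OT_fq_s ha hot.arg nil).zb
    have h2 : bb φ true a = app (bb φ false (fq a nil)) (cons 0 nil nil) := by
      conv_lhs => rw [hsa]
      exact bb_app0 h hzc
    have h3 : tpq (bb φ true a) = Ty.s := by
      rw [h2, tp_app (by simp)]; simp [tpq]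
    have h4 : fq (bb φ true a) nil = bb φ false (fq a nil) := by
      rw [h2, fq_app (by simp)]; simp [fq, app_nil]
    rw [bb_single hi]
    refine ⟨(Base.su _ _ hi h3).tp, fun y y' hy => ?_⟩
    rw [fq_su hi ha, fq_su hi h3, len_rep, len_rep, h4]
    have hle := hyy y y' hy
    have key : ∀ y y', y ≤ y' → TR φ (rep i (fq a nil) y) (rep i (bb φ false (fq a nil)) y') := by
      intro y
      induction y with
      | zero => intro y' _ δ _ hl; simp [rep] at hl
      | succ y ih =>
        intro y' hy' δ hδ hl
        obtain ⟨y', rfl⟩ : ∃ z, y' = z + 1 := ⟨y' - 1, by omega⟩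
        simp only [rep] at hl ⊢
        cases δ with
        | nil => simp
        | cons j d r =>
          rcases cons_lt_cons.1 hl with hm | ⟨rfl, hm | ⟨rfl, hm⟩⟩
          · apply lt_of_hidx; rw [bb_hidx h]; exact hm
          · rw [bb_false hi, cons_lt_cons]
            exact Or.inr ⟨rfl, Or.inl (bb_lt h hδ.arg.zb hzc hm)⟩
          · rw [bb_false hi, cons_lt_cons]
            exact Or.inr ⟨rfl, Or.inr ⟨rfl, ih y' (by omega) _ hδ.tail hm⟩⟩
    exact key _ _ hle
  | co a ha =>
    obtain ⟨l, i, hW, hi, e1, e2⟩ := decW ha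
    have hl1 : tl1 l := by
      have := hot.arg; rw [e1] at this
      exact tl1_of (by simp [hidx]; omega) this
    have h2 : bb φ true a = fill (bK φ l) (cons i nil nil) := by
      rw [e1, bb_fill (by simp) hl1, bb_single (by omega)]; rfl
    have hWb : ∀ {l}, isW l → isW (bK φ l) := by
      intro l
      induction l with
      | id => exact id
      | tl i b k ih => exact ih
      | ar i k ih => exact fun hh => ⟨hh.1, ih hh.2⟩
    have hpt : tpq (cons i nil nil) = Ty.W := by
      simp [tpq]; rw [if_neg (by omega), if_neg (by omega)]
    have h3 : tpq (bb φ true a) = Ty.W := by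
      rw [h2]; exact fill_tpW (hWb hW) hpt
    have h4 : ∀ x, fq (bb φ true a) x = fill (bK φ l) x := by
      intro x; rw [h2, fill_fqW (hWb hW) hpt]
      congr 1
      simp [fq, tpq]; omega
    rw [bb_single le_rfl]
    refine ⟨(Base.co _ h3).tp, fun y y' hy => ?_⟩
    rw [fq_co ha, fq_co h3, len_rep, len_rep]
    have hle := hyy y y' hy
    have z1 : ∀ y, TR φ (zs (fq a) y) (zs (fq (bb φ true a)) y) := by
      intro y
      induction y with
      | zero => intro δ _ hl; simp [zs] at hl
      | succ y ih =>
        have := TR_fill h ih (k := K.ar 0 l) hl1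
        simp only [fill, bK] at this
        simp only [zs]
        rwa [h4, e2]
    have z2 : zs (fq (bb φ true a)) y ≤ zs (fq (bb φ true a)) y' :=
      (strictMono_nat_of_lt_succ (fq_zs_lt h3)).monotone hle
    have z3 : TR φ (zs (fq a) y) (zs (fq (bb φ true a)) y') :=
      fun δ hδ hl => lt_of_lt_of_le (z1 y δ hδ hl) z2
    have := TR_fill h z3 (k := K.ar 0 l) hl1
    simp only [fill, bK] at this
    rwa [h4, e2]

theorem bb_tp_w {φ γ} (h : SM φ) (hc : CT γ) (ht : tpq (bb φ true γ) = Ty.w) : tpq γ = Ty.w := by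
  rcases CT_cases hc with rfl | hs | hs
  · simp [tpq] at ht
  · rw [s_app hs hc.1, bb_app0 h (OT_fq_s hs hc.1 nil).zb, tp_app (by simp)] at ht
    simp [tpq] at ht
  · exact hs

/-- extension of a partial strictly monotone map -/
theorem SM_ext {g : ℕ → ℕ} {m : ℕ} (hm : 1 ≤ m) (h0 : g 0 = 0)
    (hg : ∀ a b, a < b → b < m → g a < g b) : ∃ φ, SM φ ∧ ∀ c < m, φ c = g c := by
  refine ⟨fun c => if c < m then g c else g (m - 1) + (c - (m - 1)), ⟨?_, by simp [h0]; omega⟩,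
    fun c hc => by simp [hc]⟩
  intro a b hab
  simp only
  split_ifs with h1 h2 h2
  · exact hg a b hab h2
  · rcases Nat.lt_or_ge a (m - 1) with h3 | h3
    · have := hg a (m - 1) h3 (by omega); omega
    · obtain rfl : a = m - 1 := by omega
      omega
  · omega
  · omega

theorem bb_congr {φ g : ℕ → ℕ} {m : ℕ} : ∀ {q f}, (∀ c < m, φ c = g c) → sz q < m →
    bb φ f q = bb g f q
  | nil, _, _, _ => rfl
  | cons i a r, f, h, hs => by
    have hl : ∀ r, len r ≤ sz r := by
      intro r
      induction r with
      | nil => simp [len]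
      | cons i a r _ ih => simp only [len, sz]; omega
    have := hl r
    simp only [sz] at hs
    simp only [bb]
    rw [h _ (show len r < m by omega), h _ (show len r + 1 < m by omega),
      bb_congr (q := a) h (by omega), bb_congr (q := r) h (by omega)]

theorem normN_tau : ∀ {q}, ZA q → normN (tau q) = sz q
  | nil, _ => rfl
  | cons i a r, h => by
    have h1 : normN (pr i (tau a)) = sz a + 1 := by
      rcases i with _ | i
      · simp [h.2.1 rfl, pr, normN, sz]
      · simp only [pr, normN, normN_tau h.2.2.1]; omega
    simp only [sz]
    by_cases hr : r = nil
    · subst hr; rw [tau_single, h1]; simp [sz]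
    · rw [tau_cons hr, normN, h1, normN_tau h.2.2.2]; omega

theorem sz_pos {q} (h : q ≠ nil) : 0 < sz q := by
  cases q with
  | nil => simp at h
  | cons => simp [sz]
theorem sz_zeros (n) : sz (zeros n) = n := by rw [sz_rep]; simp [sz]

theorem bcT_tau {k} (hk : 2 ≤ k) : ∀ {q}, OT 2 q → (∀ c, 1 ≤ c → c ≤ sz q → 1 ≤ bcN k c) →
    bcT k (tau q) = tau (bb (bcN k) false q)
  | nil, _, _ => by simp [tau, bcT]
  | cons i a r, ho, hg => by
    rcases i with _ | i
    · have ha := ho.zarg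
      have hr := (ho.zb.1 rfl).2
      subst ha
      simp only [bb, if_true]
      rw [if_neg (by simp)]
      generalize len r = n at *
      subst hr
      rcases n with _ | n
      · rw [show bcN k (0 + 1) = 1 by rw [bcN]; simp; omega]
        simp [rep, tau, pr, bcT]
      · have e1 : tau (cons 0 nil (zeros (n + 1))) = natToTm (n + 2) := by
          rw [natToTm_tau]; rfl
        rw [← natToTm_tau, e1, natToTm, bcT, if_pos rfl]
        congr 2
        have := tmToNat_tau (n + 2)
        rw [← natToTm_tau, natToTm] at this
        exact this
    · rw [bb_false (by omega)]
      have ih1 := bcT_tau hk ho.arg fun c h1 h2 => hg c h1 (by simp only [sz]; omega)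
      have ih2 := bcT_tau hk ho.tail fun c h1 h2 => hg c h1 (by simp only [sz]; omega)
      by_cases hr : r = nil
      · subst hr
        rw [bb_nil, tau_single, tau_single]
        simp only [pr, bcT, ih1]
      · have hb : bb (bcN k) false r ≠ nil := by
          cases r with
          | nil => simp at hr
          | cons j b s =>
            simp only [bb]
            by_cases hj : j = 0
            · rw [if_pos hj, if_neg (by simp)]
              have h1 := hg (len s + 1) (by omega) (by
                have hl : ∀ r, len r ≤ sz r := by
                  intro r
                  induction r with
                  | nil => simp [len]
                  | cons i a r _ ih => simp only [len, sz]; omega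
                have := hl s
                simp only [sz]; omega)
              intro h2
              have h3 := sz_zeros (bcN k (len s + 1))
              rw [h2] at h3; simp [sz] at h3; omega
            · rw [if_neg hj]; simp
        rw [tau_cons hr, tau_cons hb]
        simp only [pr]
        rw [bcT, if_neg (by simp), dif_pos, ih2, bcT, ih1]
        refine ⟨by simp only [normN]; omega, ?_⟩
        rw [normN_tau ho.tail.za]; exact sz_pos hr

end GT

namespace GT
open Q

theorem fin_sz (n : ℕ) : Set.Finite {q | ZA q ∧ sz q ≤ n} := by
  induction n with
  | zero =>
    refine (Set.finite_singleton nil).subset ?_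
    rintro q ⟨_, h⟩
    cases q with
    | nil => rfl
    | cons => simp [sz] at h
  | succ n ih =>
    refine ((((Set.finite_Iic 2).prod (ih.prod ih)).image
      (fun p : ℕ × Q × Q => cons p.1 p.2.1 p.2.2)).union (Set.finite_singleton nil)).subset ?_
    rintro q ⟨h1, h⟩
    cases q with
    | nil => right; rfl
    | cons i a r =>
      left
      simp only [sz] at h
      exact ⟨(i, a, r), ⟨h1.1, ⟨h1.2.2.1, by show sz a ≤ n; omega⟩, ⟨h1.2.2.2, by show sz r ≤ n; omega⟩⟩, rfl⟩

def NF (k m : ℕ) (α : Q) : Prop := CD α ∧ hq α k ≤ m ∧ ∀ β, CD β → α < β → m < hq β k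

theorem CD_nil : CD nil := ⟨⟨trivial, by simp [hidx]⟩, trivial⟩
theorem CD_om : CD (cons 1 nil nil) :=
  ⟨⟨⟨by omega, by simp, trivial, trivial, trivial, fun _ => trivial⟩, by simp [hidx]⟩,
    by simp [OKl]⟩

theorem nf_ex {k m} (hk : 2 ≤ k) (hm : k ≤ m) : ∃ α, NF k m α := by
  have hf : Set.Finite {q | CD q ∧ hq q k ≤ m} := by
    refine (fin_sz m).subset ?_
    rintro q ⟨h1, h2⟩
    have := hq_sz hk q h1.1
    exact ⟨h1.1.1.za, by omega⟩
  obtain ⟨α, ha, hx⟩ := Set.exists_max_image _ id hf ⟨nil, CD_nil, by rw [hq_nil]; exact hm⟩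
  exact ⟨α, ha.1, ha.2, fun β hb hl => not_le.1 fun h => absurd hl (not_lt.2 (hx β ⟨hb, h⟩))⟩

theorem NF.uniq {k m α β} (h : NF k m α) (h' : NF k m β) : α = β := by
  rcases lt_trichotomy α β with hl | hl | hl
  · exact absurd h'.2.1 (not_le.2 (h.2.2 β h'.1 hl))
  · exact hl
  · exact absurd h.2.1 (not_le.2 (h'.2.2 α h.1 hl))

theorem nfAlpha_tau {k m α} (h : NF k m α) : nfAlpha k m = tau α := by
  have hs := Classical.epsilon_spec (p := fun α =>
    InOT0 α ∧ TLt α OmegaT ∧ H α k ≤ m ∧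
      ∀ β : Tm, InOT0 β → TLt β OmegaT → TLt α β → m < H β k) ⟨tau α, by
      refine ⟨(CD_in h.1).1, (CD_in h.1).2, h.2.1, fun β h1 h2 h3 => ?_⟩
      obtain ⟨b, hb, rfl⟩ := CD_of h1 h2
      exact h.2.2 b hb ((CD_lt h.1 hb).1 h3)⟩
  change InOT0 (nfAlpha k m) ∧ TLt (nfAlpha k m) OmegaT ∧ H (nfAlpha k m) k ≤ m ∧
      ∀ β : Tm, InOT0 β → TLt β OmegaT → TLt (nfAlpha k m) β → m < H β k at hs
  obtain ⟨h1, h2, h3, h4⟩ := hs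
  obtain ⟨b, hb, e⟩ := CD_of h1 h2
  rw [← e] at h3 h4 ⊢
  congr 1
  refine NF.uniq (k := k) (m := m) ⟨hb, h3, fun β hβ hl => ?_⟩ h
  exact h4 _ (CD_in hβ).1 (CD_in hβ).2 ((CD_lt hb hβ).2 hl)

theorem NF.sz {k m α} (hk : 2 ≤ k) (h : NF k m α) : sz α + k ≤ m :=
  (hq_sz hk α h.1.1).trans h.2.1

theorem bcN_lt {k m} (h : m < k) : bcN k m = m := by rw [bcN]; simp [h]

theorem bcN_eq {k m α} (hk : 2 ≤ k) (h : NF k m α)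
    (hp : ∀ c, 1 ≤ c → c < m → 1 ≤ bcN k c) :
    bcN k m = hq (bb (bcN k) false α) (k + 1) * (m / hq α k) + bcN k (m % hq α k) := by
  have hs := h.sz hk
  have hge := hq_ge (show 1 ≤ k by omega) α h.1.1
  rcases Nat.eq_or_lt_of_le (show k ≤ m by omega) with e | hlt
  · subst e
    have : α = nil := by
      by_contra h'
      have := sz_pos h'
      omega
    subst this
    rw [bb_nil, hq_nil, hq_nil, Nat.div_self (by omega), Nat.mod_self, bcN_lt (by omega : 0 < k), bcN]
    simp
  · have e := nfAlpha_tau h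
    rw [bcN, dif_neg (by omega), dif_neg (by omega), dif_pos]
    · rw [e, bcT_tau hk h.1.1.1 fun c h1 h2 => hp c h1 (by omega)]
      rfl
    · rw [e, normN_tau h.1.1.1.za]
      exact ⟨by omega, by change 0 < hq α k; omega, h.2.1⟩

def suc (q : Q) : Q := if q = nil then cons 1 nil nil else app q (cons 0 nil nil)

theorem OT_app0 : ∀ {q}, OT 2 q → OT 2 (app q (cons 0 nil nil))
  | nil, _ => OT_zeros 2 1
  | cons i a r, h => by
    refine ⟨h.1, h.2.1, h.arg, OT_app0 h.tail, ?_, h.gb⟩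
    have := h.hdl
    cases r with
    | nil =>
      rcases Nat.eq_zero_or_pos i with rfl | hi
      · exact Or.inr ⟨rfl, by simp⟩
      · exact Or.inl hi
    | cons j b s => exact this
theorem hidx_app {q r} (h : q ≠ nil) : hidx (app q r) = hidx q := by
  cases q with
  | nil => simp at h
  | cons => rfl
theorem ok_app0 : ∀ {q z0 z2}, q ≠ nil ∨ z0 = true → OT 2 q → hidx q ≤ 1 → OKl false z0 z2 q →
    OKl false z0 z2 (app q (cons 0 nil nil))
  | nil, z0, z2, h, _, _, _ => by
    have h : z0 = true := by simpa using h
    subst h; exact ok_zeros 1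
  | cons i a r, z0, z2, _, ho, hi, h => by
    refine ⟨h.1, h.2.1, ok_app0 (Or.inr (by simpa [hidx] using hi)) ho.tail ?_ h.2.2⟩
    exact (hidx_tail ho).trans hi

theorem CD_suc {q} (h : CD q) : CD (suc q) ∧ q < suc q := by
  unfold suc
  split_ifs with hn
  · subst hn; exact ⟨CD_om, by simp⟩
  · exact ⟨⟨⟨OT_app0 h.1.1, by rw [hidx_app hn]; exact h.1.2⟩, ok_app0 (Or.inl hn) h.1.1 h.1.2 h.2⟩,
      lt_app (by simp)⟩

theorem hq_suc {q} (h : CD q) (hn : q ≠ nil) (k) : hq (suc q) k = hq q k * k := by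
  have h1 := (CD_suc h).1.1
  rw [hq_s h1]
  · simp only [suc, hn, if_false]
    rw [fq_app (by simp)]; simp [fq, app_nil]
  · simp only [suc, hn, if_false]
    rw [tp_app (by simp)]; simp [tpq]

theorem CT_s_lt {β} (hβ : CT β) (ht : tpq β = Ty.s) {a} (h : a < β) :
    a ≤ fq β nil ∧ β = app (fq β nil) (cons 0 nil nil) :=
  ⟨succ_max ht hβ.1 a h, s_app ht hβ.1⟩

/-- the key lemma (i) -/
theorem keyI {φ : ℕ → ℕ} {k m : ℕ} (hk : 2 ≤ k) (h : SM φ) {α} (hα : NF k m α)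
    (hsm : ∀ c < k, φ c = c)
    (hC : ∀ c, k ≤ c → c < m → ∃ δ, CD δ ∧ hq δ k ≤ c ∧
      ∀ β, CD β → bb φ false δ < β → φ c < hq β (k + 1)) :
    ∀ β, CT β → CD β → bb φ false α < β → hq (suc (bb φ false α)) (k + 1) ≤ hq β (k + 1) := by
  have hα' := bb_CD h hα.1
  refine CT_ind ?_
  intro β hcβ ih hβ hlt
  rcases CT_cases hcβ with rfl | ht | ht
  · simp at hlt
  · obtain ⟨h1, h2⟩ := CT_s_lt hcβ ht hlt
    rcases h1.lt_or_eq with h1 | h1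
    · have h3 := ih _ (hcβ.s ht nil) (fq_lt_s ht nil) (hβ.s ht nil) h1
      rw [hq_s hcβ ht]
      exact h3.trans (Nat.le_mul_of_pos_right _ (by omega))
    · have hn : bb φ false α ≠ nil := by
        intro hn
        rw [← h1, hn] at h2
        subst h2
        have := hβ.2
        simp [app, OKl] at this
      rw [← h1] at h2
      simp only [suc, hn, if_false, ← h2]
      exact le_rfl
  · have hok := hβ.2
    rcases ok_cl ht (by simp) hok with hcl | hcl | hcl
    · have hcd : ∀ n, CD (fq β (zeros n)) := fun n => ⟨hcβ.w ht n, hcl n⟩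
      by_cases hX : bb φ false α < fq β (zeros (NN β (k + 1) (k + 1)))
      · have h3 := ih _ (hcd _).1 (fq_lt_w ht _) (hcd _) hX
        rwa [hq_w hcβ ht, NN_succ]
      · rw [not_lt] at hX
        exfalso
        have hX1 : 1 ≤ NN β (k + 1) (k + 1) := by
          have := NN_ge hcβ ht (show 1 ≤ k + 1 by omega) (show 1 ≤ k + 1 by omega)
          omega
        obtain ⟨γ, hz, e, hag⟩ := LP_w h ht hcβ.1 hX1 α hα.1.1.1 hX hlt
        have hγ : CD γ := bb_CD' h hz (e ▸ hβ)
        have htγ : tpq γ = Ty.w := bb_tp_w h hγ.1 (e ▸ ht)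
        have hmγ := hα.2.2 γ hγ hag
        rw [hq_w hγ.1 htγ] at hmγ
        have key : ∀ b, b ≤ k + 1 → NN γ k b ≤ m ∧ ∀ c < NN γ k b, φ c < NN β (k + 1) b := by
          intro b
          induction b with
          | zero => intro _; simp [NN]
          | succ b ihb =>
            intro hb
            obtain ⟨-, i2⟩ := ihb (by omega)
            have hTR := (TR_w h htγ hγ.1.1).2 _ _ i2
            rw [← e] at hTR
            have h5 : fq γ (zeros (NN γ k b)) ≤ α := by
              by_contra h6
              have h7 := hTR α hα.1.1.1 (not_le.1 h6)
              have h8 := fq_mono ht (NN_mono hcβ ht (show 2 ≤ k + 1 by omega) (show b ≤ k + 1 by omega))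
              exact absurd h7 (not_lt.2 (h8.trans hX))
            have h6 : NN γ k (b + 1) ≤ m := by
              rw [NN_succ]
              exact (Nh hγ.1 htγ _ hk α hα.1.1 h5 hag).trans hα.2.1
            refine ⟨h6, fun c hc => ?_⟩
            rcases Nat.lt_or_ge c k with hck | hck
            · rw [hsm c hck]
              have := NN_ge hcβ ht (show 1 ≤ k + 1 by omega) (show 1 ≤ b + 1 by omega)
              omega
            · obtain ⟨δ, hδ, h9, h10⟩ := hC c hck (by omega)
              rw [NN_succ]
              refine h10 _ (hcd _) (hTR δ hδ.1.1 (not_le.1 fun h11 => ?_))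
              rcases lt_or_ge δ γ with h12 | h12
              · have := Nh hγ.1 htγ _ hk δ hδ.1 h11 h12
                rw [NN_succ] at hc
                omega
              · have := hα.2.2 δ hδ (lt_of_lt_of_le hag h12)
                omega
        have := (key (k + 1) le_rfl).1
        omega
    · obtain ⟨l, i, ξ, hi, e, hD, hB⟩ := hcl
      obtain ⟨κ, hκ⟩ := app_fill ξ
      have hom : tpq (cons 1 nil nil) = Ty.w := Base.om.tp
      have hβn : ∀ n, fq β (zeros n) = fill l (cons i (app ξ (zeros n)) nil) := by
        intro n
        obtain ⟨i, rfl⟩ : ∃ j, i = j + 1 := ⟨i - 1, by omega⟩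
        have e2 : ∀ x, fill l (cons (i + 1) (app ξ x) nil) = fill (comp l (K.ar i κ)) x := by
          intro x; rw [fill_comp]; simp [fill, hκ]
        rw [e, e2, e2, fill_fq hom, fq_om]
      have hs : tpq (app ξ (cons 0 nil nil)) = Ty.s := by rw [tp_app (by simp)]; simp [tpq]
      have hb1 : Base (cons i (app ξ (cons 0 nil nil)) nil) := Base.su _ _ hi hs
      have e1 := hβn 1
      simp only [rep] at e1
      have ht1 : tpq (fq β (zeros 1)) = Ty.w := by
        simp only [rep]
        rw [e1]; exact fill_tp hb1.tp
      have hc1 := hcβ.w ht 1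
      have hDn : ∀ n, fq (fq β (zeros 1)) (zeros n) = fill l (rep i ξ n) := by
        intro n
        simp only [rep] at e1 ⊢
        rw [e1, fill_fq hb1.tp, fq_su hi hs, len_rep, fq_app (by simp)]
        simp [fq, app_nil]
      have hDC : ∀ n, CD (fill l (rep i ξ n)) := fun n => ⟨by rw [← hDn]; exact hc1.w ht1 n, hD n⟩
      have hDl : ∀ n, fill l (rep i ξ n) < β := fun n => by
        rw [← hDn]; exact (fq_lt_w ht1 n).trans (fq_lt_w ht 1)
      by_cases h1 : bb φ false α < fill l (cons i ξ nil)
      · refine (ih _ (hDC 1).1 (hDl 1) (hDC 1) h1).trans ?_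
        have h2 := hβn 0
        simp only [rep, app_nil] at h2
        simp only [rep]
        rw [← h2]
        exact hq_fq_le hcβ ht (by omega) (x := 0) (by omega)
      · rw [not_lt] at h1
        obtain ⟨γ, hz, e3, hag⟩ := LP_clB h hi (e ▸ hcβ.1) α hα.1.1.1 h1 (e ▸ hlt)
        rw [← e] at e3
        have hγ : CD γ := bb_CD' h hz (e3 ▸ hβ)
        have hmγ := hα.2.2 γ hγ hag
        have h4 : hq γ k ≤ NN β (k + 1) (k + 1) :=
          (hq_sq hk (Nat.le_succ k) β hcβ γ hγ.1 (by rw [e3]; exact sq_bb h hz)).2 ht (by omega)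
        have h5 := hB _ hα'.2 hlt
        have h6 := wt_fill hi l _ hα'.1.1 h5
        rw [wt_bb h hα.1.1.1.zb] at h6
        have h7 := wt_sz α
        have h8 := hα.sz hk
        refine (ih _ (hDC _).1 (hDl _) (hDC _) h6).trans ?_
        have h9 : CT (fill l (cons i (app ξ (zeros (wt α))) nil)) := by
          rw [← hβn]; exact hcβ.w ht _
        refine (lemQ' (by omega) hi ξ (wt α) l h9 (hDC _).1).trans ?_
        rw [← hβn]
        exact hq_fq_le hcβ ht (by omega) (by omega)
    · obtain ⟨-, ξ, e, h1, -, h2⟩ := hcl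
      have h3 : ξ = nil := by
        rcases h1 with h1 | h1
        · exact h1
        · by_contra hn
          have := hcβ.2
          rw [e, hidx_app hn] at this
          omega
      subst h3
      have h4 := h2 _ hα'.2 hlt
      have h5 : bb φ false α = nil := by
        cases hb : bb φ false α with
        | nil => rfl
        | cons j b r =>
          rw [hb] at h4
          simp [app, cons_lt_cons] at h4
      rw [h5, e]
      simp [suc, app]

end GT

namespace GT
open Q

theorem hq_zeros (k) : ∀ n, hq (zeros n) k = k * k ^ n
  | 0 => by rw [pow_zero, mul_one]; exact hq_nil k
  | n + 1 => by
    have hc : CT (zeros (n + 1)) := ⟨OT_zeros 2 _, by rw [zeros_succ]; simp [hidx]⟩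
    rw [hq_s hc (tp_zeros n), fq_zeros, hq_zeros k n, pow_succ, mul_assoc]

theorem om_bd {k m} (hk : 2 ≤ k) (h : m < hq (cons 1 nil nil) k) :
    (k + 1) * (m + 1) ≤ hq (cons 1 nil nil) (k + 1) := by
  have ht : tpq (cons 1 nil nil) = Ty.w := by simp [tpq]
  have h1 := (hq_sq hk (Nat.le_succ k) _ CD_om.1 _ CD_om.1 (sq_refl _)).2 ht (Nat.lt_succ_self k)
  rw [hq_w CD_om.1 ht (k + 1), NN_succ, fq_om, hq_zeros]
  refine Nat.mul_le_mul_left _ ?_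
  have h2 : NN (cons 1 nil nil) (k + 1) (k + 1) < (k + 1) ^ NN (cons 1 nil nil) (k + 1) (k + 1) :=
    Nat.lt_pow_self (by omega)
  change _ ≤ NN (cons 1 nil nil) (k + 1) (k + 1) at h1
  omega

theorem NF.ge {k m α} (hk : 2 ≤ k) (h : NF k m α) : k ≤ m :=
  (hq_ge (by omega) α h.1.1).trans h.2.1

theorem NF.le {k a m α δ} (hm : a ≤ m) (h : NF k m α) (hd : NF k a δ) : δ ≤ α := by
  by_contra hc
  have := h.2.2 δ hd.1 (not_le.1 hc)
  have := hd.2.1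
  omega

theorem CD.zb {q} (h : CD q) : ZB q := h.1.1.zb

theorem mainI {k} (hk : 2 ≤ k) : ∀ m, (∀ a < m, bcN k a < bcN k m) ∧
    (∀ α, NF k m α → (∀ q < hq α k, bcN k q < hq (bb (bcN k) false α) (k + 1)) ∧
      ∀ β, CD β → bb (bcN k) false α < β → bcN k m < hq β (k + 1)) := by
  intro m
  induction m using Nat.strong_induction_on with
  | _ m ih =>
  by_cases hm : m < k
  · refine ⟨fun a ha => ?_, fun α hα => ?_⟩
    · rwa [bcN_lt hm, bcN_lt (by omega)]
    · have := hα.ge hk; omega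
  have hm' : k ≤ m := by omega
  have h0 : bcN k 0 = 0 := bcN_lt (by omega)
  obtain ⟨φ, hφ, hφg⟩ := SM_ext (g := bcN k) (m := m) (by omega) h0
    (fun a b hab hb => (ih b hb).1 a hab)
  have hbb : ∀ {c δ}, c ≤ m → NF k c δ → bb φ false δ = bb (bcN k) false δ := by
    intro c δ hc hd
    have := hd.sz hk
    exact bb_congr hφg (by omega)
  have hpos : ∀ c, 1 ≤ c → c < m → 1 ≤ bcN k c := by
    intro c h1 h2
    have := (ih c h2).1 0 (by omega)
    omega
  obtain ⟨α, hα⟩ := nf_ex hk hm'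
  have hB := hbb le_rfl hα
  have hCB : CD (bb (bcN k) false α) := hB ▸ bb_CD hφ hα.1
  have hlt : ∀ c < m, ∀ δ, NF k c δ → δ < α →
      bcN k c < hq (bb (bcN k) false α) (k + 1) := by
    intro c hc δ hd hl
    refine ((ih c hc).2 δ hd).2 _ hCB ?_
    rw [← hB, ← hbb hc.le hd]
    exact bb_lt hφ hd.1.zb hα.1.zb hl
  have hh1 : k ≤ hq α k := hq_ge (by omega) α hα.1.1
  have hh2 : k + 1 ≤ hq (bb (bcN k) false α) (k + 1) := hq_ge (by omega) _ hCB.1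
  have hhm := hα.2.1
  have ql : ∀ q < hq α k, bcN k q < hq (bb (bcN k) false α) (k + 1) := by
    intro q hql
    by_cases hqk : q < k
    · rw [bcN_lt hqk]; omega
    obtain ⟨δ, hd⟩ := nf_ex hk (not_lt.1 hqk)
    refine hlt q (by omega) δ hd (lt_of_le_of_ne (hα.le (by omega) hd) ?_)
    rintro rfl
    have := hd.2.1
    omega
  have hge := bcN_eq hk hα hpos
  have hp : 1 ≤ m / hq α k := Nat.div_pos hhm (by omega)
  have hmod : m % hq α k < hq α k := Nat.mod_lt _ (by omega)
  have hql := ql _ hmod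
  have hdm := Nat.div_add_mod m (hq α k)
  have key := keyI hk hφ hα (fun c hc => by rw [hφg c (by omega), bcN_lt hc]) (by
    intro c hc1 hc2
    obtain ⟨δ, hd⟩ := nf_ex hk hc1
    refine ⟨δ, hd.1, hd.2.1, fun β hβ hl => ?_⟩
    rw [hφg c hc2]
    rw [hbb hc2.le hd] at hl
    exact ((ih c hc2).2 δ hd).2 β hβ hl)
  rw [hB] at key
  have hsuc : bcN k m < hq (suc (bb (bcN k) false α)) (k + 1) := by
    have hs := CD_suc hα.1
    have h1 := hα.2.2 _ hs.1 hs.2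
    have h2 : bcN k m < hq (bb (bcN k) false α) (k + 1) * (m / hq α k + 1) := by
      rw [hge, mul_add, mul_one]; omega
    refine h2.trans_le ?_
    by_cases hn : α = nil
    · subst hn
      simp only [bb_nil, suc, hq_nil] at h1 h2 ⊢
      have := om_bd hk h1
      refine le_trans (Nat.mul_le_mul_left _ ?_) this
      have := Nat.div_le_self m k
      omega
    · rw [hq_suc hCB (by rw [← hB]; exact fun h => hn ((bb_nil_iff hφ).1 h))]
      refine Nat.mul_le_mul_left _ ?_
      rw [hq_suc hα.1 hn] at h1
      have : m / hq α k < k := Nat.div_lt_of_lt_mul h1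
      omega
  refine ⟨fun a ha => ?_, fun α' hα' => ?_⟩
  · have hle : hq (bb (bcN k) false α) (k + 1) ≤ bcN k m := by
      rw [hge]
      nlinarith
    by_cases hak : a < k
    · rw [bcN_lt hak]; omega
    obtain ⟨δ, hd⟩ := nf_ex hk (not_lt.1 hak)
    rcases (hα.le ha.le hd).lt_or_eq with hl | rfl
    · exact (hlt a ha δ hd hl).trans_le hle
    rw [hge, bcN_eq hk hd (fun c h1 h2 => hpos c h1 (by omega))]
    have hda := Nat.div_add_mod a (hq δ k)
    have hma : a % hq δ k < hq δ k := Nat.mod_lt _ (by omega)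
    have hle2 : a / hq δ k ≤ m / hq δ k := Nat.div_le_div_right ha.le
    have hqa := ql _ hma
    rcases hle2.lt_or_eq with hl | he
    · have : hq (bb (bcN k) false δ) (k + 1) * (a / hq δ k + 1) ≤
          hq (bb (bcN k) false δ) (k + 1) * (m / hq δ k) := Nat.mul_le_mul_left _ hl
      rw [mul_add, mul_one] at this
      omega
    · rw [he] at hda ⊢
      have : a % hq δ k < m % hq δ k := by omega
      have := (ih (m % hq δ k) (by omega)).1 _ this
      omega
  · obtain rfl := hα'.uniq hα
    exact ⟨ql, fun β hβ hl => hsuc.trans_le (key β hβ.1 hβ hl)⟩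

theorem bcN_SM {k} (hk : 2 ≤ k) : SM (bcN k) :=
  ⟨fun _ b h => (mainI hk b).1 _ h, bcN_lt (by omega)⟩

theorem bcN_eq2 {k m α} (hk : 2 ≤ k) (h : NF k m α) :
    bcN k m = hq (bb (bcN k) false α) (k + 1) * (m / hq α k) + bcN k (m % hq α k) :=
  bcN_eq hk h fun c h1 _ => by
    have := (bcN_SM hk).ge c
    omega

theorem bcN_ge {k m} (hk : 2 ≤ k) (hm : k ≤ m) : k + 1 ≤ bcN k m := by
  obtain ⟨α, hα⟩ := nf_ex hk hm
  have h1 := hq_ge (k := k) (by omega) _ hα.1.1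
  have h2 := hq_ge (k := k + 1) (by omega) _ (bb_CD (bcN_SM hk) hα.1).1
  have := hα.2.1
  have hp : 1 ≤ m / hq α k := Nat.div_pos hα.2.1 (by omega)
  rw [bcN_eq2 hk hα]
  nlinarith

theorem bcN_NF {k m α} (hk : 2 ≤ k) (h : NF k m α) :
    NF (k + 1) (bcN k m) (bb (bcN k) false α) ∧
    bcN k (m - hq α k) = bcN k m - hq (bb (bcN k) false α) (k + 1) := by
  have hh1 : k ≤ hq α k := hq_ge (by omega) α h.1.1
  have hp : 1 ≤ m / hq α k := Nat.div_pos h.2.1 (by omega)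
  have hdm := Nat.div_add_mod m (hq α k)
  have hmod : m % hq α k < hq α k := Nat.mod_lt _ (by omega)
  have e := bcN_eq2 hk h
  refine ⟨⟨bb_CD (bcN_SM hk) h.1, ?_, ((mainI hk m).2 α h).2⟩, ?_⟩
  · rw [e]; nlinarith
  by_cases hp1 : m / hq α k = 1
  · rw [hp1, mul_one] at e hdm
    rw [e, show m - hq α k = m % hq α k by omega]
    omega
  · obtain ⟨p, hpe⟩ : ∃ p, m / hq α k = p + 2 := ⟨m / hq α k - 2, by omega⟩
    rw [hpe] at e hdm
    have hme : m - hq α k = m % hq α k + hq α k * (p + 1) := by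
      have : hq α k * (p + 2) = hq α k * (p + 1) + hq α k := by ring
      omega
    have hn : NF k (m - hq α k) α := by
      have := Nat.le_mul_of_pos_right (hq α k) (show 0 < p + 1 by omega)
      refine ⟨h.1, by rw [hme]; omega, fun β hb hl => ?_⟩
      have := h.2.2 β hb hl
      omega
    rw [bcN_eq2 hk hn, e, hme, Nat.add_mul_mod_self_left, Nat.mod_mod,
      Nat.add_mul_div_left _ _ (by omega : 0 < hq α k), Nat.div_eq_of_lt hmod]
    have : hq (bb (bcN k) false α) (k + 1) * (p + 2) =
      hq (bb (bcN k) false α) (k + 1) * (0 + (p + 1)) + hq (bb (bcN k) false α) (k + 1) := by ring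
    omega
end GT

namespace GT
open Q

def ot (f : ℕ → Q) : Q → Q
  | nil => nil
  | cons i a r => if i = 0 then f (len r + 1) else cons (i + 1) (ot f a) (ot f r)

instance : Nonempty Q := ⟨nil⟩

noncomputable def nfa (k m : ℕ) : Q := Classical.epsilon (NF k m)

theorem nfa_eq {k m α} (h : NF k m α) : nfa k m = α :=
  (Classical.epsilon_spec (p := NF k m) ⟨α, h⟩).uniq h

noncomputable def oN (k m : ℕ) : Q :=
  if m < k then zeros m else
    cons 1 (ot (fun c => if _h : c < m then oN k c else nil) (nfa k m))
      (if _h : m - hq (nfa k m) k < m then oN k (m - hq (nfa k m) k) else nil)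
termination_by m

theorem ot_congr {f g : ℕ → Q} : ∀ {q}, ZB q → (∀ c ≤ sz q, f c = g c) → ot f q = ot g q
  | nil, _, _ => rfl
  | cons i a r, hz, h => by
    simp only [sz] at h
    by_cases hi : i = 0
    · have := congrArg sz (hz.1 hi).2
      rw [sz_zeros] at this
      simp only [ot, if_pos hi]
      exact h _ (by omega)
    · simp only [ot, if_neg hi]
      rw [ot_congr hz.2.1 fun c hc => h c (by omega), ot_congr hz.2.2 fun c hc => h c (by omega)]

theorem oN_lt {k m} (h : m < k) : oN k m = zeros m := by rw [oN, if_pos h]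

theorem oN_eq {k m α} (hk : 2 ≤ k) (h : NF k m α) :
    oN k m = cons 1 (ot (oN k) α) (oN k (m - hq α k)) := by
  have h1 := h.ge hk
  have h2 := h.sz hk
  have h3 := hq_ge (k := k) (by omega) _ h.1.1
  rw [oN, if_neg (by omega), nfa_eq h, dif_pos (by omega)]
  rw [ot_congr h.1.zb]
  intro c hc
  rw [dif_pos (by omega)]

theorem oN_hidx {k} (hk : 2 ≤ k) (m) : hidx (oN k m) ≤ 1 := by
  by_cases hm : m < k
  · rw [oN_lt hm]
    cases m with
    | zero => simp [rep, hidx]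
    | succ n => rw [zeros_succ]; simp [hidx]
  · obtain ⟨α, h⟩ := nf_ex hk (not_lt.1 hm)
    rw [oN_eq hk h]; simp [hidx]

theorem ot_lt {f : ℕ → Q} {M : ℕ} (h0 : f 0 = nil) (hf : ∀ a b, a < b → b < M → f a < f b)
    (hx : ∀ c, hidx (f c) ≤ 1) : ∀ {a g}, ZB a → ZB g → sz a < M → sz g < M → a < g →
    ot f a < ot f g
  | _, nil, _, _, _, _, hl => absurd hl (not_lt_nil _)
  | nil, cons j b s, _, hg, _, hM, _ => by
    simp only [sz] at hM
    by_cases hj : j = 0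
    · have := congrArg sz (hg.1 hj).2
      rw [sz_zeros] at this
      simp only [ot, if_pos hj]
      rw [← h0]
      exact hf _ _ (by omega) (by omega)
    · simp [ot, hj]
  | cons i a r, cons j b s, ha, hg, hN, hM, hl => by
    simp only [sz] at hM hN
    rw [cons_lt_cons] at hl
    by_cases hj : j = 0
    · have hi : i = 0 := by omega
      have e1 := ha.1 hi
      have e2 := hg.1 hj
      have e3 := congrArg sz e2.2
      rw [sz_zeros] at e3
      simp only [ot, if_pos hj, if_pos hi]
      rw [e1.1, e2.1, e1.2, e2.2, zeros_lt] at hl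
      simp only [lt_irrefl, false_or, true_and] at hl
      exact hf _ _ (by omega) (by omega)
    · by_cases hi : i = 0
      · simp only [ot, if_neg hj, if_pos hi]
        exact lt_of_hidx ((hx _).trans_lt (by omega))
      · simp only [ot, if_neg hj, if_neg hi]
        rw [cons_lt_cons]
        rcases hl with h1 | ⟨h1, h2 | ⟨h2, h3⟩⟩
        · left; omega
        · exact Or.inr ⟨by omega, Or.inl
            (ot_lt h0 hf hx ha.2.1 hg.2.1 (by omega) (by omega) h2)⟩
        · exact Or.inr ⟨by omega, Or.inr ⟨by rw [h2],
            ot_lt h0 hf hx ha.2.2 hg.2.2 (by omega) (by omega) h3⟩⟩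

theorem oN_zero {k} (hk : 2 ≤ k) : oN k 0 = nil := oN_lt (by omega)

theorem oN_mono {k} (hk : 2 ≤ k) : ∀ m, ∀ a < m, oN k a < oN k m := by
  intro m
  induction m using Nat.strong_induction_on with
  | _ m ih =>
  intro a ha
  by_cases hm : m < k
  · rw [oN_lt hm, oN_lt (by omega)]
    exact zeros_lt.2 ha
  obtain ⟨α, h⟩ := nf_ex hk (not_lt.1 hm)
  have h2 := h.sz hk
  have h3 := hq_ge (k := k) (by omega) _ h.1.1
  rw [oN_eq hk h]
  by_cases hak : a < k
  · rw [oN_lt hak]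
    refine lt_of_hidx ?_
    cases a with
    | zero => simp [rep, hidx]
    | succ n => rw [zeros_succ]; simp [hidx]
  obtain ⟨δ, hd⟩ := nf_ex hk (not_lt.1 hak)
  have h4 := hd.sz hk
  rw [oN_eq hk hd, cons_lt_cons]
  right
  refine ⟨rfl, ?_⟩
  rcases (h.le ha.le hd).lt_or_eq with hl | rfl
  · exact Or.inl (ot_lt (M := m) (oN_zero hk) (fun a b hab hb => ih b hb a hab) (oN_hidx hk)
      hd.1.zb h.1.zb (by omega) (by omega) hl)
  · have := hd.2.1
    exact Or.inr ⟨rfl, ih _ (by omega) _ (by omega)⟩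

theorem otN_lt {k} (hk : 2 ≤ k) {a g} (ha : ZB a) (hg : ZB g) (h : a < g) :
    ot (oN k) a < ot (oN k) g :=
  ot_lt (M := sz a + sz g + 1) (oN_zero hk) (fun a b hab _ => oN_mono hk b a hab) (oN_hidx hk)
    ha hg (by omega) (by omega) h

theorem otN_le {k} (hk : 2 ≤ k) {a g} (ha : ZB a) (hg : ZB g) (h : a ≤ g) :
    ot (oN k) a ≤ ot (oN k) g := by
  rcases h.lt_or_eq with h | rfl
  · exact (otN_lt hk ha hg h).le
  · exact le_rfl

theorem GB2_zeros (n c) : GB 2 (zeros n) c := by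
  induction n with
  | zero => simp [rep, GB]
  | succ n ih => rw [zeros_succ]; exact ⟨fun h => by omega, ih⟩

theorem oN_GB2 {k} (hk : 2 ≤ k) (c) : ∀ m, GB 2 (oN k m) c := by
  intro m
  induction m using Nat.strong_induction_on with
  | _ m ih =>
  by_cases hm : m < k
  · rw [oN_lt hm]
    exact GB2_zeros _ _
  obtain ⟨α, h⟩ := nf_ex hk (not_lt.1 hm)
  have h3 := hq_ge (k := k) (by omega) _ h.1.1
  rw [oN_eq hk h]
  exact ⟨fun h => by omega, ih _ (by omega)⟩

theorem ot_GB2 {k} (hk : 2 ≤ k) {c} (hc : ZB c) : ∀ {q}, ZB q → GB 1 q c →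
    GB 2 (ot (oN k) q) (ot (oN k) c)
  | nil, _, _ => trivial
  | cons i a r, hz, h => by
    by_cases hi : i = 0
    · simp only [ot, if_pos hi]; exact oN_GB2 hk _ _
    · simp only [ot, if_neg hi]
      have h1 := h.1 (by omega)
      exact ⟨fun _ => ⟨fun e => otN_lt hk hz.2.1 hc (h1.1 (by omega)), ot_GB2 hk hc hz.2.1 h1.2⟩,
        ot_GB2 hk hc hz.2.2 h.2⟩

theorem ot_GB1 {f : ℕ → Q} {x} : ∀ {q}, ZB q → (∀ c ≤ sz q, GB 1 (f c) x) → GB 1 (ot f q) x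
  | nil, _, _ => trivial
  | cons i a r, hz, h => by
    simp only [sz] at h
    by_cases hi : i = 0
    · have := congrArg sz (hz.1 hi).2
      rw [sz_zeros] at this
      simp only [ot, if_pos hi]
      exact h _ (by omega)
    · simp only [ot, if_neg hi]
      exact ⟨fun _ => ⟨fun e => by omega, ot_GB1 hz.2.1 fun c hc => h c (by omega)⟩,
        ot_GB1 hz.2.2 fun c hc => h c (by omega)⟩

theorem ot_OT {k} (hk : 2 ≤ k) : ∀ {q}, OT 2 q → (∀ c ≤ sz q, OT 3 (oN k c)) →
    OT 3 (ot (oN k) q)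
  | nil, _, _ => trivial
  | cons i a r, ho, h => by
    have hz := ho.zb
    simp only [sz] at h
    by_cases hi : i = 0
    · have := congrArg sz (hz.1 hi).2
      rw [sz_zeros] at this
      simp only [ot, if_pos hi]
      exact h _ (by omega)
    · simp only [ot, if_neg hi]
      have hidx2 := ho.idx
      refine ⟨by omega, fun e => by omega, ot_OT hk ho.arg fun c hc => h c (by omega),
        ot_OT hk ho.tail fun c hc => h c (by omega), ?_, fun e => ?_⟩
      · have hd := ho.hdl
        cases r with
        | nil => trivial
        | cons j b s =>
          by_cases hj : j = 0
          · simp only [ot, if_pos hj]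
            refine hdle_of_lt (lt_of_hidx ((oN_hidx hk _).trans_lt (by omega)))
          · simp only [ot, if_neg hj]
            rcases hd with hd | ⟨h1, h2⟩
            · left; omega
            · exact Or.inr ⟨by omega, otN_le hk hz.2.2.2.1 hz.2.1 h2⟩
      · obtain rfl : i = 1 := by omega
        exact ot_GB2 hk hz.2.1 hz.2.1 (ho.gb (by omega))

theorem oN_GBa {k} (hk : 2 ≤ k) {m α} (hα : NF k m α) : ∀ c, c < hq α k →
    (∀ d ≤ c, ∀ δ, NF k d δ → GB 1 (ot (oN k) δ) (ot (oN k) δ)) → GB 1 (oN k c) (ot (oN k) α) := by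
  intro c
  induction c using Nat.strong_induction_on with
  | _ c ih =>
  intro hc hd
  by_cases hm : c < k
  · rw [oN_lt hm]
    exact GB_zeros _ _
  obtain ⟨δ, h⟩ := nf_ex hk (not_lt.1 hm)
  have h3 := hq_ge (k := k) (by omega) _ h.1.1
  have hl : δ < α := by
    have hm2 := hα.2.1
    refine lt_of_le_of_ne (hα.le (by omega) h) ?_
    rintro rfl
    have := h.2.1
    omega
  have hl2 := otN_lt hk h.1.zb hα.1.zb hl
  rw [oN_eq hk h]
  exact ⟨fun _ => ⟨fun _ => hl2, (hd c le_rfl δ h).mono hl2.le⟩,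
    ih _ (by omega) (by omega) fun d hdc => hd d (by omega)⟩

theorem oN_OT {k} (hk : 2 ≤ k) : ∀ m, OT 3 (oN k m) ∧
    ∀ α, NF k m α → GB 1 (ot (oN k) α) (ot (oN k) α) := by
  intro m
  induction m using Nat.strong_induction_on with
  | _ m ih =>
  by_cases hm : m < k
  · refine ⟨by rw [oN_lt hm]; exact OT_zeros _ _, fun α hα => ?_⟩
    have := hα.ge hk; omega
  obtain ⟨α, h⟩ := nf_ex hk (not_lt.1 hm)
  have h2 := h.sz hk
  have h3 := hq_ge (k := k) (by omega) _ h.1.1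
  have h4 := hq_sz hk _ h.1.1
  have h5 := h.2.1
  have hg : GB 1 (ot (oN k) α) (ot (oN k) α) := ot_GB1 h.1.zb fun c hc =>
    oN_GBa hk h c (by omega) fun d hd => (ih d (by omega)).2
  refine ⟨?_, fun β hb => by obtain rfl := hb.uniq h; exact hg⟩
  rw [oN_eq hk h]
  refine ⟨by omega, fun e => by omega, ot_OT hk h.1.1.1 fun c hc => (ih c (by omega)).1,
    (ih _ (by omega)).1, ?_, fun _ => hg⟩
  by_cases hr : m - hq α k < k
  · rw [oN_lt hr]
    refine hdle_of_lt (lt_of_hidx ?_)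
    cases m - hq α k with
    | zero => simp [rep, hidx]
    | succ n => rw [zeros_succ]; simp [hidx]
  · obtain ⟨δ, hd⟩ := nf_ex hk (not_lt.1 hr)
    rw [oN_eq hk hd]
    exact Or.inr ⟨rfl, otN_le hk hd.1.zb h.1.zb (h.le (by omega) hd)⟩

theorem ot_bb {f g : ℕ → Q} {φ} (hφ : SM φ) (h0 : f 0 = nil) : ∀ {q}, ZB q →
    (∀ c ≤ sz q, f (φ c) = g c) → ot f (bb φ false q) = ot g q
  | nil, _, _ => rfl
  | cons i a r, hz, h => by
    simp only [sz] at h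
    by_cases hi : i = 0
    · have := congrArg sz (hz.1 hi).2
      rw [sz_zeros] at this
      have hz2 : ∀ n, ot f (zeros n) = f n := by
        intro n
        cases n with
        | zero => exact h0.symm
        | succ n => rw [zeros_succ]; simp [ot, len_rep]
      simp only [ot, bb, if_pos hi]
      rw [hz2]
      exact h _ (by omega)
    · rw [bb_false (by omega)]
      simp only [ot, if_neg hi]
      rw [ot_bb hφ h0 hz.2.1 fun c hc => h c (by omega),
        ot_bb hφ h0 hz.2.2 fun c hc => h c (by omega)]

theorem oN_bc {k} (hk : 2 ≤ k) : ∀ m, oN (k + 1) (bcN k m) = oN k m := by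
  intro m
  induction m using Nat.strong_induction_on with
  | _ m ih =>
  by_cases hm : m < k
  · rw [bcN_lt hm, oN_lt hm, oN_lt (by omega)]
  obtain ⟨α, h⟩ := nf_ex hk (not_lt.1 hm)
  have h2 := h.sz hk
  have h3 := hq_ge (k := k) (by omega) _ h.1.1
  have hn := bcN_NF hk h
  rw [oN_eq hk h, oN_eq (by omega) hn.1, ← hn.2, ih _ (by omega),
    ot_bb (bcN_SM hk) (oN_zero (by omega)) h.1.zb fun c hc => ih c (by omega)]

theorem Gend (l : ℕ) : ∀ q, OT 3 q → ∀ j, oN (j + 2) (Gseq l j) = q → ∃ k, Gseq l k = 0 := by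
  refine OT_ind fun q _ ih j e => ?_
  by_cases h0 : Gseq l j = 0
  · exact ⟨j, h0⟩
  have h1 : Gseq l (j + 1) = bcN (j + 2) (Gseq l j) - 1 := by
    rw [Gseq, if_pos (by omega)]
  have h2 := (bcN_SM (k := j + 2) (by omega)).ge (Gseq l j)
  refine ih _ (oN_OT (by omega) (Gseq l (j + 1))).1 ?_ (j + 1) rfl
  have h3 := oN_bc (k := j + 2) (by omega) (Gseq l j)
  rw [← e, ← h3]
  exact oN_mono (k := j + 2 + 1) (by omega) (bcN (j + 2) (Gseq l j)) (Gseq l (j + 1)) (by omega)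
end GT

/-- The Goodstein process terminates. -/
theorem goodstein_terminates : ∀ l : ℕ, ∃ k : ℕ, Gseq l k = 0 := fun l =>
  GT.Gend l _ (GT.oN_OT (k := 0 + 2) (by omega) (Gseq l 0)).1 0 rfl
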